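/- arXiv:2510.18451 — 4 statements merged into one kernel-verified Lean document; each statement's English description precedes it below -/
import Mathlib

section
/- Let Ψ : (0,∞) → (0,∞) and ω : (0,∞) → (0,1) be such that the maps q ↦ q²Ψ(q) and q ↦ q²Ψ(q)ω(q) are non-increasing on (0,∞), Σ_{q=1}^∞ qΨ(q) < ∞ (sum over positive integers q), lim_{q→∞} ω(q) = 0, and lim_{q→∞} (−log ω(q))/log q = 0. Then dim_H(E(Ψ,ω)) = dim_H(E(Ψ)) = dim_H(Bad(Ψ)) = dim_H(W(Ψ)). -/
open Filter Set

/-- A real number `x` is `Ψ`-approximable: `|x - p/q| ≤ Ψ q` for infinitely many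
pairs `(p, q) ∈ ℤ × ℕ` (with `q > 0`).  `WSet Ψ` is the set `W(Ψ)` of such `x`. -/
def WSet (Ψ : ℝ → ℝ) : Set ℝ :=
  {x : ℝ | {pq : ℤ × ℕ | 0 < pq.2 ∧ |x - (pq.1 : ℝ) / (pq.2 : ℝ)| ≤ Ψ (pq.2 : ℝ)}.Infinite}

/-- `ESet Ψ ω` is the set `E(Ψ, ω)` of `x ∈ W(Ψ)` such that for all sufficiently large
`q ∈ ℕ` one has `|x - p/q| ≥ (1 - ω q) * Ψ q` for every `p ∈ ℤ`. -/
def ESet (Ψ ω : ℝ → ℝ) : Set ℝ :=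
  {x : ℝ | x ∈ WSet Ψ ∧ ∃ Q : ℕ, ∀ q : ℕ, Q ≤ q → ∀ p : ℤ,
    (1 - ω (q : ℝ)) * Ψ (q : ℝ) ≤ |x - (p : ℝ) / (q : ℝ)|}

/-- `Bad(Ψ)`: the set of `x ∈ W(Ψ)` for which there is `c > 0` such that for all
sufficiently large `q ∈ ℕ`, `|x - p/q| ≥ c·Ψ(q)` for all `p ∈ ℤ`. -/
def BadSet (Ψ : ℝ → ℝ) : Set ℝ :=
  {x : ℝ | x ∈ WSet Ψ ∧ ∃ c : ℝ, 0 < c ∧ ∃ Q : ℕ, ∀ q : ℕ, Q ≤ q → ∀ p : ℤ,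
    c * Ψ (q : ℝ) ≤ |x - (p : ℝ) / (q : ℝ)|}

/-- `E(Ψ)`: the set of `x ∈ W(Ψ)` with `Ψ`-exact approximation order, i.e. there is
`c_x : ℕ → (0,1)` with `c_x(q) → 1` and `|x - p/q| ≥ c_x(q)·Ψ(q)` for all `(p,q) ∈ ℤ × ℕ`. -/
def EExactSet (Ψ : ℝ → ℝ) : Set ℝ :=
  {x : ℝ | x ∈ WSet Ψ ∧ ∃ c : ℕ → ℝ, (∀ q : ℕ, c q ∈ Set.Ioo (0 : ℝ) 1) ∧
    Filter.Tendsto c Filter.atTop (nhds 1) ∧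
    ∀ p : ℤ, ∀ q : ℕ, 0 < q → c q * Ψ (q : ℝ) ≤ |x - (p : ℝ) / (q : ℝ)|}

/-!
The inclusions `E(Ψ,ω) ⊆ E(Ψ) ⊆ Bad(Ψ) ⊆ W(Ψ)` reduce the theorem to `dim W(Ψ) ≤ dim E(Ψ,ω)`. Let
`t < s < dim W(Ψ)`. Covering `W(Ψ)` by the obvious balls around fractions shows that
`Ψ(Q) > Q^(-2/s)` for infinitely many `Q`, and one constructs a Cantor set of dimension at least `t`
inside `E(Ψ,ω)`.

The nodes of the Cantor set are right half-shells `{x : (1 - ω(q)) Ψ(q) ≤ x - p/q ≤ Ψ(q)}` at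
least half of which (in measure) stays `2Ψ(s)`-away from all fractions of larger denominator `s`.
Given such a node `I` and a large `Q`, the points of the good half have Dirichlet approximants of
denominator at most `Q`; discarding a small part of `I` near fractions of denominator less than
`Q/100`, these approximants number `≫ |I| Q²`. If `p/q` is one of them, its shell is far from the
fractions of denominator below `q`, because it is close to a point that is. Fractions `r/s` of
denominator `s > q` are treated on average: writing `k = rq - ps`, the ball around `r/s` meets the
shell of `p/q` only if `s` lies in a short window around `k/(qΨ(q))`, and summing over `p`, `s`
and `k` bounds the total overlap. The bound tends to zero relative to the number of shells, since
`∑ₖ g(kq)/k → 0` for `g(s) = s²Ψ(s)` by monotonicity and summability. Hence only `o(Q²)` shells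
are more than half obstructed, and `≫ |I| Q²` good children remain, pairwise separated by
`1/(2Q²)`.

Taking `Q` with `Ψ(Q) > Q^(-2/s)` and using that `ω(q)` decays slower than any power, all children
have length at least `Q^(-θ)` with some `θ < 2/t`. With `Q` growing fast along the levels, the mass
distribution principle gives dimension at least `t`.
-/

open MeasureTheory
open scoped ENNReal NNReal Topology

/-! ### Mass distribution on homogeneous Cantor sets -/

theorem card_le_of_separated {ι : Type*} (S : Finset ι) (y : ι → ℝ) {ρ Δ : ℝ} (hΔ : 0 < Δ)
    (hρ : ∀ i ∈ S, ∀ j ∈ S, |y i - y j| ≤ ρ)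
    (hsep : ∀ i ∈ S, ∀ j ∈ S, i ≠ j → Δ ≤ |y i - y j|) : S.card ≤ ⌊ρ / Δ⌋₊ + 1 := by
  rcases S.eq_empty_or_nonempty with rfl | hne
  · simp
  obtain ⟨m, hm, hmin⟩ := S.exists_min_image y hne
  rw [← Finset.card_range (⌊ρ / Δ⌋₊ + 1)]
  refine Finset.card_le_card_of_injOn (fun i => ⌊(y i - y m) / Δ⌋₊) (fun i hi => ?_) ?_
  · simp only [Finset.coe_range, Set.mem_Iio]
    refine Nat.lt_succ_of_le (Nat.floor_le_floor ?_)
    gcongr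
    exact (le_abs_self _).trans (hρ i hi m hm)
  · intro i hi j hj hij
    by_contra hne'
    have hnonneg : ∀ l ∈ S, 0 ≤ (y l - y m) / Δ := fun l hl =>
      div_nonneg (sub_nonneg.2 (hmin l hl)) hΔ.le
    have hfloor : ⌊(y i - y m) / Δ⌋ = ⌊(y j - y m) / Δ⌋ := by
      rw [← Int.natCast_floor_eq_floor (hnonneg i hi), ← Int.natCast_floor_eq_floor (hnonneg j hj)]
      exact congrArg _ hij
    have hlt := Int.abs_sub_lt_one_of_floor_eq_floor hfloor
    rw [← sub_div, sub_sub_sub_cancel_right, abs_div, abs_of_pos hΔ, div_lt_one hΔ] at hlt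
    exact hlt.not_ge (hsep i hi j hj hne')

theorem volume_floor_mul_mem_le {M : ℕ} (hM : 0 < M) (S : Finset ℕ) :
    volume {t : ℝ | 0 ≤ t ∧ ⌊t * M⌋₊ ∈ S} ≤ ENNReal.ofReal (S.card / M) := by
  have hM' : (0 : ℝ) < M := Nat.cast_pos.2 hM
  have hsub : {t : ℝ | 0 ≤ t ∧ ⌊t * M⌋₊ ∈ S} ⊆ ⋃ i ∈ S, Ico ((i : ℝ) / M) ((i + 1) / M) := by
    rintro t ⟨ht, hS⟩
    exact mem_biUnion hS ⟨(div_le_iff₀ hM').2 (Nat.floor_le (by positivity)),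
      (lt_div_iff₀ hM').2 (Nat.lt_floor_add_one _)⟩
  calc volume {t : ℝ | 0 ≤ t ∧ ⌊t * M⌋₊ ∈ S}
      ≤ ∑ i ∈ S, volume (Ico ((i : ℝ) / M) ((i + 1) / M)) :=
        (measure_mono hsub).trans (measure_biUnion_finset_le _ _)
    _ = ∑ _i ∈ S, ENNReal.ofReal (1 / M) := by
        simp only [Real.volume_Ico, ← sub_div, add_sub_cancel_left]
    _ = ENNReal.ofReal (S.card / M) := by
        rw [Finset.sum_const, ← ENNReal.ofReal_nsmul, nsmul_eq_mul, mul_one_div]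

theorem min_one_le_rpow {u t : ℝ} (hu : 0 ≤ u) (ht0 : 0 ≤ t) (ht1 : t ≤ 1) : min 1 u ≤ u ^ t := by
  rcases le_total u 1 with h | h
  · exact (min_le_right _ _).trans (Real.self_le_rpow_of_le_one hu h ht1)
  · exact (min_le_left _ _).trans (Real.one_le_rpow h ht0)

/-- The data of a homogeneous Cantor set in the line. The intervals of level `k` are
`[left k i, right k i]` for `i < card k`; the interval `i` has `children k` subintervals at level
`k + 1`, namely those of index `j` with `j / children k = i`, and these are separated by
`gap (k + 1)`. -/
structure CantorScheme where
  card : ℕ → ℕ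
  children : ℕ → ℕ
  left : ℕ → ℕ → ℝ
  right : ℕ → ℕ → ℝ
  gap : ℕ → ℝ
  card_zero : card 0 = 1
  card_succ : ∀ k, card (k + 1) = card k * children k
  children_pos : ∀ k, 0 < children k
  left_le_right : ∀ k, ∀ i < card k, left k i ≤ right k i
  left_mono : ∀ k, ∀ i < card (k + 1), left k (i / children k) ≤ left (k + 1) i
  right_anti : ∀ k, ∀ i < card (k + 1), right (k + 1) i ≤ right k (i / children k)
  gap_pos : ∀ k, 0 < gap k
  gap_antitone : Antitone gap
  tendsto_gap : Tendsto gap atTop (𝓝 0)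
  siblings_separated : ∀ k, ∀ i < card (k + 1), ∀ j < card (k + 1), i ≠ j →
    i / children k = j / children k →
    ∀ x ∈ Icc (left (k + 1) i) (right (k + 1) i), ∀ y ∈ Icc (left (k + 1) j) (right (k + 1) j),
      gap (k + 1) ≤ |x - y|

namespace CantorScheme

variable (C : CantorScheme)

theorem card_pos (k : ℕ) : 0 < C.card k := by
  induction k with
  | zero => simp [C.card_zero]
  | succ k ih => exact C.card_succ k ▸ Nat.mul_pos ih (C.children_pos k)

theorem div_children_lt {k i : ℕ} (hi : i < C.card (k + 1)) : i / C.children k < C.card k := by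
  rwa [Nat.div_lt_iff_lt_mul (C.children_pos k), ← C.card_succ]

theorem separated (k : ℕ) : ∀ i < C.card k, ∀ j < C.card k, i ≠ j →
    ∀ x ∈ Icc (C.left k i) (C.right k i), ∀ y ∈ Icc (C.left k j) (C.right k j),
      C.gap k ≤ |x - y| := by
  induction k with
  | zero => intro i hi j hj hij; rw [C.card_zero] at hi hj; omega
  | succ k ih =>
    intro i hi j hj hij x hx y hy
    by_cases hpar : i / C.children k = j / C.children k
    · exact C.siblings_separated k i hi j hj hij hpar x hx y hy
    · exact (C.gap_antitone k.le_succ).trans <|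
        ih _ (C.div_children_lt hi) _ (C.div_children_lt hj) hpar
          x ⟨(C.left_mono k i hi).trans hx.1, hx.2.trans (C.right_anti k i hi)⟩
          y ⟨(C.left_mono k j hj).trans hy.1, hy.2.trans (C.right_anti k j hj)⟩

/-- The index of the level-`k` interval assigned to the parameter `s ∈ [0, 1)`. -/
noncomputable def index (k : ℕ) (s : ℝ) : ℕ := ⌊s * C.card k⌋₊

theorem index_lt (k : ℕ) {s : ℝ} (hs : s ∈ Ico (0 : ℝ) 1) : C.index k s < C.card k := by
  have hk : (0 : ℝ) < C.card k := Nat.cast_pos.2 (C.card_pos k)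
  exact (Nat.floor_lt (mul_nonneg hs.1 hk.le)).2 (mul_lt_of_lt_one_left hk hs.2)

theorem index_succ_div (k : ℕ) (s : ℝ) : C.index (k + 1) s / C.children k = C.index k s := by
  have hk : (C.children k : ℝ) ≠ 0 := Nat.cast_ne_zero.2 (C.children_pos k).ne'
  rw [index, ← Nat.floor_div_natCast, C.card_succ, Nat.cast_mul, ← mul_assoc,
    mul_div_cancel_right₀ _ hk, index]

theorem left_index_le_right_index {s : ℝ} (hs : s ∈ Ico (0 : ℝ) 1) (k l : ℕ) :
    C.left k (C.index k s) ≤ C.right l (C.index l s) := by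
  have hleft : Monotone fun k => C.left k (C.index k s) := monotone_nat_of_le_succ fun k => by
    simpa only [index_succ_div] using C.left_mono k _ (C.index_lt (k + 1) hs)
  have hright : Antitone fun k => C.right k (C.index k s) := antitone_nat_of_succ_le fun k => by
    simpa only [index_succ_div] using C.right_anti k _ (C.index_lt (k + 1) hs)
  calc C.left k (C.index k s) ≤ C.left (max k l) (C.index (max k l) s) := hleft (le_max_left _ _)
    _ ≤ C.right (max k l) (C.index (max k l) s) := C.left_le_right _ _ (C.index_lt _ hs)
    _ ≤ C.right l (C.index l s) := hright (le_max_right _ _)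

/-- The point of the Cantor set with parameter `s ∈ [0, 1)`, chosen as the leftmost point common to
the intervals of index `C.index k s`. -/
noncomputable def limitPoint (s : ℝ) : ℝ := ⨆ k, C.left k (C.index k s)

theorem limitPoint_mem {s : ℝ} (hs : s ∈ Ico (0 : ℝ) 1) (k : ℕ) :
    C.limitPoint s ∈ Icc (C.left k (C.index k s)) (C.right k (C.index k s)) :=
  ⟨le_ciSup (f := fun k => C.left k (C.index k s)) ⟨C.right 0 (C.index 0 s),
      forall_mem_range.2 fun l => C.left_index_le_right_index hs l 0⟩ k,
    ciSup_le fun l => C.left_index_le_right_index hs l k⟩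

theorem measurable_limitPoint : Measurable C.limitPoint :=
  Measurable.iSup fun k => (measurable_of_countable (C.left k)).comp
    (Nat.measurable_floor.comp (measurable_id.mul_const _))

/-- The mass distribution of a Cantor scheme, giving mass `1 / C.card k` to each interval of
level `k`. -/
noncomputable def massDistribution : Measure ℝ :=
  (volume.restrict (Ico (0 : ℝ) 1)).map C.limitPoint

theorem one_le_massDistribution {E : Set ℝ}
    (hE : ∀ x, (∀ k, ∃ i < C.card k, x ∈ Icc (C.left k i) (C.right k i)) → x ∈ E) :
    1 ≤ C.massDistribution E :=
  calc (1 : ℝ≥0∞) = volume.restrict (Ico (0 : ℝ) 1) (Ico (0 : ℝ) 1) := by simp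
    _ ≤ volume.restrict (Ico (0 : ℝ) 1) (C.limitPoint ⁻¹' E) := measure_mono fun s hs =>
        hE _ fun k => ⟨C.index k s, C.index_lt k hs, C.limitPoint_mem hs k⟩
    _ ≤ C.massDistribution E := Measure.le_map_apply C.measurable_limitPoint.aemeasurable E

theorem massDistribution_le {A : Set ℝ} (hA : IsClosed A) {ρ : ℝ}
    (hρ : ∀ x ∈ A, ∀ y ∈ A, |x - y| ≤ ρ) (k : ℕ) :
    C.massDistribution A ≤ ENNReal.ofReal ((⌊ρ / C.gap k⌋₊ + 1) / C.card k) := by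
  classical
  set S : Finset ℕ := (Finset.range (C.card k)).filter
    (fun i => ∃ s ∈ Ico (0 : ℝ) 1, C.index k s = i ∧ C.limitPoint s ∈ A)
  have hlt : ∀ i ∈ S, i < C.card k := fun i hi => Finset.mem_range.1 (Finset.mem_filter.1 hi).1
  have hmeet : ∀ i ∈ S, ∃ x ∈ A, x ∈ Icc (C.left k i) (C.right k i) := by
    intro i hi
    obtain ⟨s, hs, rfl, hsA⟩ := (Finset.mem_filter.1 hi).2
    exact ⟨_, hsA, C.limitPoint_mem hs k⟩
  choose! y hyA hyI using hmeet
  have hcard : S.card ≤ ⌊ρ / C.gap k⌋₊ + 1 := card_le_of_separated S y (C.gap_pos k)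
    (fun i hi j hj => hρ _ (hyA i hi) _ (hyA j hj)) fun i hi j hj hij =>
      C.separated k i (hlt i hi) j (hlt j hj) hij _ (hyI i hi) _ (hyI j hj)
  calc C.massDistribution A
      = volume (C.limitPoint ⁻¹' A ∩ Ico 0 1) := by
        rw [massDistribution, Measure.map_apply C.measurable_limitPoint hA.measurableSet,
          Measure.restrict_apply (C.measurable_limitPoint hA.measurableSet)]
    _ ≤ volume {s : ℝ | 0 ≤ s ∧ ⌊s * C.card k⌋₊ ∈ S} := measure_mono fun s hs =>
        ⟨hs.2.1, Finset.mem_filter.2 ⟨Finset.mem_range.2 (C.index_lt k hs.2), s, hs.2, rfl, hs.1⟩⟩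
    _ ≤ ENNReal.ofReal (S.card / C.card k) := volume_floor_mul_mem_le (C.card_pos k) S
    _ ≤ ENNReal.ofReal ((⌊ρ / C.gap k⌋₊ + 1) / C.card k) := by
        gcongr
        exact_mod_cast hcard

variable {C}

theorem exists_gap_succ_le_lt_gap {ρ : ℝ} (hρ : 0 < ρ) (hρ1 : ρ < C.gap 1) :
    ∃ k, 1 ≤ k ∧ C.gap (k + 1) ≤ ρ ∧ ρ < C.gap k := by
  classical
  have hex : ∃ k, C.gap k ≤ ρ :=
    ((C.tendsto_gap.eventually (gt_mem_nhds hρ)).exists).imp fun k hk => hk.le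
  have htwo : 2 ≤ Nat.find hex := by
    by_contra hlt
    exact (hρ1.trans_le (C.gap_antitone (by omega))).not_ge (Nat.find_spec hex)
  refine ⟨Nat.find hex - 1, by omega, ?_, not_le.1 (Nat.find_min hex (by omega))⟩
  rw [Nat.sub_add_cancel (by omega)]
  exact Nat.find_spec hex

variable {t : ℝ}

/-- For `C.gap (k + 1) ≤ ρ < C.gap k`, a set of diameter `ρ` meets one interval of level `k` and at
most `2 ρ / C.gap (k + 1)` intervals of level `k + 1`; the two resulting bounds are interpolated. -/
theorem massDistribution_le_rpow (ht0 : 0 < t) (ht1 : t ≤ 1)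
    (hgrow : ∀ k, 1 ≤ k → 2 ≤ C.card k * (C.gap (k + 1) * C.children k) ^ t)
    {A : Set ℝ} (hA : IsClosed A) {ρ : ℝ} (hρ0 : 0 < ρ) (hρ1 : ρ < C.gap 1)
    (hρ : ∀ x ∈ A, ∀ y ∈ A, |x - y| ≤ ρ) :
    C.massDistribution A ≤ ENNReal.ofReal (ρ ^ t) := by
  obtain ⟨k, hk, hle, hlt⟩ := exists_gap_succ_le_lt_gap hρ0 hρ1
  have hM : (0 : ℝ) < C.card k := Nat.cast_pos.2 (C.card_pos k)
  have hN : (0 : ℝ) < C.children k := Nat.cast_pos.2 (C.children_pos k)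
  have hgap := C.gap_pos (k + 1)
  set z := C.gap (k + 1) * C.children k with hz
  have hz0 : 0 < z := by positivity
  set u := 2 * ρ / z with hu
  have hu0 : 0 ≤ u := by positivity
  have hone : C.massDistribution A ≤ ENNReal.ofReal (1 / C.card k * 1) := by
    have := C.massDistribution_le hA hρ k
    rwa [Nat.floor_eq_zero.2 ((div_lt_one (C.gap_pos k)).2 hlt), Nat.cast_zero, zero_add,
      ← mul_one (1 / (C.card k : ℝ))] at this
  have hmany : C.massDistribution A ≤ ENNReal.ofReal (1 / C.card k * u) := by
    refine (C.massDistribution_le hA hρ (k + 1)).trans (ENNReal.ofReal_le_ofReal ?_)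
    have hfloor : (⌊ρ / C.gap (k + 1)⌋₊ : ℝ) ≤ ρ / C.gap (k + 1) := Nat.floor_le (by positivity)
    have hge : 1 ≤ ρ / C.gap (k + 1) := (one_le_div hgap).2 hle
    calc (⌊ρ / C.gap (k + 1)⌋₊ + 1 : ℝ) / C.card (k + 1)
        ≤ (2 * (ρ / C.gap (k + 1))) / C.card (k + 1) := by gcongr; linarith
      _ = 1 / C.card k * u := by rw [C.card_succ, Nat.cast_mul, hu, hz]; field_simp
  have htwo : (2 : ℝ) ^ t ≤ 2 := Real.rpow_le_self_of_one_le one_le_two ht1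
  calc C.massDistribution A ≤ ENNReal.ofReal (1 / C.card k * min 1 u) := by
        rcases min_choice 1 u with h | h <;> rwa [h]
    _ ≤ ENNReal.ofReal (1 / C.card k * u ^ t) := by
        gcongr
        exact min_one_le_rpow hu0 ht0.le ht1
    _ ≤ ENNReal.ofReal (ρ ^ t) := by
        refine ENNReal.ofReal_le_ofReal ?_
        rw [hu, Real.div_rpow (by positivity) hz0.le, Real.mul_rpow zero_le_two hρ0.le,
          div_mul_div_comm, one_mul, div_le_iff₀ (by positivity), mul_comm]
        gcongr
        exact htwo.trans (hgrow k hk)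

theorem massDistribution_le_hausdorffMeasure (ht0 : 0 < t) (ht1 : t ≤ 1)
    (hgrow : ∀ k, 1 ≤ k → 2 ≤ C.card k * (C.gap (k + 1) * C.children k) ^ t) :
    C.massDistribution ≤ μH[t] := by
  have hgap := C.gap_pos 1
  refine Measure.le_hausdorffMeasure t _ (ENNReal.ofReal (C.gap 1 / 2))
    (ENNReal.ofReal_pos.2 (half_pos hgap)) fun A hA => ?_
  obtain ⟨ρ, hρA⟩ : ∃ ρ : ℝ≥0, Metric.ediam A = ρ :=
    ⟨_, (ENNReal.coe_toNNReal (ne_top_of_le_ne_top ENNReal.ofReal_ne_top hA)).symm⟩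
  have hρ1 : (ρ : ℝ) < C.gap 1 := by
    rw [hρA, ← ENNReal.ofReal_coe_nnreal, ENNReal.ofReal_le_ofReal_iff (by positivity)] at hA
    linarith
  have hdiam : ∀ x ∈ closure A, ∀ y ∈ closure A, |x - y| ≤ ρ := fun x hx y hy => by
    have := Metric.edist_le_ediam_of_mem hx hy
    rwa [Metric.ediam_closure, hρA, edist_nndist, ENNReal.coe_le_coe, ← NNReal.coe_le_coe,
      coe_nndist, Real.dist_eq] at this
  have hlim : Tendsto (fun r : ℝ => ENNReal.ofReal (r ^ t)) (𝓝[>] (ρ : ℝ))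
      (𝓝 (ENNReal.ofReal ((ρ : ℝ) ^ t))) :=
    (ENNReal.continuous_ofReal.comp (Real.continuous_rpow_const ht0.le)).continuousWithinAt
  rw [hρA, ← ENNReal.ofReal_coe_nnreal, ENNReal.ofReal_rpow_of_nonneg ρ.coe_nonneg ht0.le]
  refine (measure_mono subset_closure).trans (ge_of_tendsto hlim ?_)
  filter_upwards [Ioo_mem_nhdsGT hρ1] with r hr
  exact massDistribution_le_rpow ht0 ht1 hgrow isClosed_closure (ρ.2.trans_lt hr.1) hr.2
    fun x hx y hy => (hdiam x hx y hy).trans hr.1.le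

theorem le_dimH (ht0 : 0 < t) (ht1 : t ≤ 1)
    (hgrow : ∀ k, 1 ≤ k → 2 ≤ C.card k * (C.gap (k + 1) * C.children k) ^ t) {E : Set ℝ}
    (hE : ∀ x, (∀ k, ∃ i < C.card k, x ∈ Icc (C.left k i) (C.right k i)) → x ∈ E) :
    ENNReal.ofReal t ≤ dimH E := by
  rw [ENNReal.ofReal, Real.toNNReal_of_nonneg ht0.le]
  refine le_dimH_of_hausdorffMeasure_ne_zero (ne_of_gt (zero_lt_one.trans_le ?_))
  exact (C.one_le_massDistribution hE).trans
    (massDistribution_le_hausdorffMeasure ht0 ht1 hgrow E)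

end CantorScheme

/-! ### The natural cover of `W(Ψ)` -/

theorem hausdorffMeasure_infinite_mem_eq_zero {X ι : Type*} [EMetricSpace X] [MeasurableSpace X]
    [BorelSpace X] [Countable ι] {d : ℝ} (hd : 0 < d) {T : ι → Set X}
    (hT : ∑' i, Metric.ediam (T i) ^ d ≠ ∞) : μH[d] {x | {i | x ∈ T i}.Infinite} = 0 := by
  classical
  set tail : Finset ι → ℝ≥0∞ := fun s => ∑' i : {i // i ∉ s}, Metric.ediam (T i) ^ d
  have hlim : Tendsto tail atTop (𝓝 0) := ENNReal.tendsto_tsum_compl_atTop_zero hT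
  have hcover (s : Finset ι) : {x | {i | x ∈ T i}.Infinite} ⊆ ⋃ i : {i // i ∉ s}, T i := by
    intro x hx
    obtain ⟨i, hxi, his⟩ := hx.exists_notMem_finset s
    exact mem_iUnion.2 ⟨⟨i, his⟩, hxi⟩
  have hdiam (s : Finset ι) (i : {i // i ∉ s}) : Metric.ediam (T i) ≤ tail s ^ d⁻¹ :=
    (ENNReal.le_rpow_inv_iff hd).2 (ENNReal.le_tsum i)
  have hlim' : Tendsto (fun s => tail s ^ d⁻¹) atTop (𝓝 0) := by
    simpa only [ENNReal.zero_rpow_of_pos (inv_pos.2 hd)] using hlim.ennrpow_const d⁻¹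
  refine le_antisymm ?_ bot_le
  calc μH[d] {x | {i | x ∈ T i}.Infinite} ≤ liminf tail atTop :=
        Measure.hausdorffMeasure_le_liminf_tsum d _ (fun s => tail s ^ d⁻¹) hlim'
          (fun s (i : {i // i ∉ s}) => T i) (Eventually.of_forall hdiam)
          (Eventually.of_forall hcover)
    _ = 0 := hlim.liminf_eq

section NaturalCover

variable {Ψ : ℝ → ℝ} {d : ℝ}

theorem exists_forall_le_of_summable_mul_rpow (hΨ : ∀ q : ℕ, 0 < q → 0 ≤ Ψ q) (hd : 0 < d)
    (hsum : Summable fun q : ℕ => (q : ℝ) * Ψ q ^ d) : ∃ B : ℝ, ∀ q : ℕ, 0 < q → Ψ q ≤ B := by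
  obtain ⟨C, hC⟩ := hsum.tendsto_atTop_zero.bddAbove_range
  refine ⟨C ^ d⁻¹, fun q hq => ?_⟩
  have hle : Ψ q ^ d ≤ C := calc
    Ψ q ^ d ≤ q * Ψ q ^ d := le_mul_of_one_le_left (Real.rpow_nonneg (hΨ q hq) d)
      (Nat.one_le_cast.2 hq)
    _ ≤ C := hC (mem_range_self q)
  exact (Real.le_rpow_inv_iff_of_pos (hΨ q hq) ((Real.rpow_nonneg (hΨ q hq) d).trans hle) hd).2 hle

/-- The closed ball of radius `Ψ q` around `p / q`, where `i = (p, q)`; empty unless `0 < q` and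
`|p| ≤ R q`. The bound on `p` leaves finitely many balls for each `q`, and enough of them to cover
`W(Ψ) ∩ [-n, n]` when `R` is large. -/
def naturalCover (Ψ : ℝ → ℝ) (R : ℕ) (i : ℤ × ℕ) : Set ℝ :=
  {x | (0 < i.2 ∧ i.1 ∈ Finset.Icc (-(R * i.2 : ℤ)) (R * i.2)) ∧ |x - (i.1 : ℝ) / i.2| ≤ Ψ i.2}

theorem tsum_ediam_naturalCover_ne_top (hΨ : ∀ q : ℕ, 0 < q → 0 ≤ Ψ q) (hd : 0 < d)
    (hsum : Summable fun q : ℕ => (q : ℝ) * Ψ q ^ d) (R : ℕ) :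
    ∑' i, Metric.ediam (naturalCover Ψ R i) ^ d ≠ ∞ := by
  have hempty (i : ℤ × ℕ) (hi : ¬(0 < i.2 ∧ i.1 ∈ Finset.Icc (-(R * i.2 : ℤ)) (R * i.2))) :
      Metric.ediam (naturalCover Ψ R i) ^ d = 0 := by
    have : naturalCover Ψ R i = ∅ := eq_empty_of_forall_notMem fun x hx => hi hx.1
    rw [this, Metric.ediam_empty, ENNReal.zero_rpow_of_pos hd]
  have hball (p : ℤ) {q : ℕ} (hq : 0 < q) :
      Metric.ediam (naturalCover Ψ R (p, q)) ^ d ≤ ENNReal.ofReal ((2 * Ψ q) ^ d) := by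
    rw [← ENNReal.ofReal_rpow_of_nonneg (mul_nonneg zero_le_two (hΨ q hq)) hd.le]
    gcongr
    have hsub : naturalCover Ψ R (p, q) ⊆ Metric.closedBall ((p : ℝ) / q) (Ψ q) := fun x hx => hx.2
    refine (Metric.ediam_mono hsub).trans ?_
    rw [Real.closedBall_eq_Icc, Real.ediam_Icc]
    exact ENNReal.ofReal_le_ofReal (by linarith)
  have hrow (q : ℕ) : ∑' p : ℤ, Metric.ediam (naturalCover Ψ R (p, q)) ^ d ≤
      ENNReal.ofReal ((2 * R + 1) * 2 ^ d * (q * Ψ q ^ d)) := by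
    rcases q.eq_zero_or_pos with rfl | hq
    · simp [hempty]
    have hq1 : (1 : ℝ) ≤ q := Nat.one_le_cast.2 hq
    rw [tsum_eq_sum (s := Finset.Icc (-(R * q : ℤ)) (R * q))
      fun p hp => hempty (p, q) fun h => hp h.2]
    refine (Finset.sum_le_card_nsmul _ _ _ fun p _ => hball p hq).trans ?_
    rw [← ENNReal.ofReal_nsmul, nsmul_eq_mul, Int.card_Icc, Real.mul_rpow zero_le_two (hΨ q hq)]
    refine ENNReal.ofReal_le_ofReal ?_
    have hcard : (((R * q : ℤ) + 1 - -(R * q)).toNat : ℝ) = 2 * R * q + 1 := by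
      rw [show ((R * q : ℤ) + 1 - -(R * q)) = (2 * R * q + 1 : ℕ) by push_cast; ring,
        Int.toNat_natCast]
      push_cast; rfl
    calc _ ≤ ((2 * R + 1) * q) * (2 ^ d * Ψ q ^ d) := by
          have := hΨ q hq
          rw [hcard]; gcongr; linarith
      _ = _ := by ring
  rw [ENNReal.tsum_prod', ENNReal.tsum_comm]
  exact ne_top_of_le_ne_top (hsum.mul_left _).tsum_ofReal_ne_top (ENNReal.tsum_le_tsum hrow)

theorem hausdorffMeasure_WSet_inter_Icc_eq_zero (hΨ : ∀ q : ℕ, 0 < q → 0 ≤ Ψ q) (hd : 0 < d)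
    (hsum : Summable fun q : ℕ => (q : ℝ) * Ψ q ^ d) (n : ℕ) :
    μH[d] (WSet Ψ ∩ Icc (-n : ℝ) n) = 0 := by
  obtain ⟨B, hB⟩ := exists_forall_le_of_summable_mul_rpow hΨ hd hsum
  obtain ⟨R, hR⟩ := exists_nat_ge (n + B)
  refine measure_mono_null ?_
    (hausdorffMeasure_infinite_mem_eq_zero hd (tsum_ediam_naturalCover_ne_top hΨ hd hsum R))
  rintro x ⟨hxW, hx⟩
  refine Set.Infinite.mono ?_ hxW
  rintro ⟨p, q⟩ ⟨hq, hpq⟩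
  have hq' : (0 : ℝ) < q := Nat.cast_pos.2 hq
  have habs : |(p : ℝ)| ≤ R * q := by
    rw [← div_le_iff₀ hq']
    calc |(p : ℝ)| / q = |x - (x - p / q)| := by rw [sub_sub_cancel, abs_div, Nat.abs_cast]
      _ ≤ |x| + |x - p / q| := abs_sub _ _
      _ ≤ n + B := add_le_add (abs_le.2 hx) (hpq.trans (hB q hq))
      _ ≤ R := hR
  exact ⟨⟨hq, Finset.mem_Icc.2 (abs_le.1 (by exact_mod_cast habs))⟩, hpq⟩

theorem dimH_WSet_le_of_summable (hΨ : ∀ q : ℕ, 0 < q → 0 ≤ Ψ q) (hd : 0 < d)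
    (hsum : Summable fun q : ℕ => (q : ℝ) * Ψ q ^ d) : dimH (WSet Ψ) ≤ ENNReal.ofReal d := by
  have hcover : WSet Ψ = ⋃ n : ℕ, WSet Ψ ∩ Icc (-n : ℝ) n := by
    rw [← inter_iUnion, eq_comm, inter_eq_left]
    intro x _
    obtain ⟨n, hn⟩ := exists_nat_ge |x|
    exact mem_iUnion.2 ⟨n, abs_le.1 hn⟩
  rw [hcover, dimH_iUnion]
  refine iSup_le fun n => ?_
  rw [ENNReal.ofReal, Real.toNNReal_of_nonneg hd.le]
  refine dimH_le_of_hausdorffMeasure_ne_top ?_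
  rw [NNReal.coe_mk, hausdorffMeasure_WSet_inter_Icc_eq_zero hΨ hd hsum n]
  exact ENNReal.zero_ne_top

theorem frequently_rpow_lt_of_lt_dimH_WSet (hΨ : ∀ q : ℕ, 0 < q → 0 ≤ Ψ q) {s : ℝ} (hs : 0 < s)
    (hdim : ENNReal.ofReal s < dimH (WSet Ψ)) : ∃ᶠ q : ℕ in atTop, (q : ℝ) ^ (-2 / s) < Ψ q := by
  intro hle
  simp only [not_lt] at hle
  obtain ⟨d, hsd, hdlt⟩ := ENNReal.lt_iff_exists_nnreal_btwn.1 hdim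
  rw [← ENNReal.ofReal_coe_nnreal] at hsd hdlt
  have hsd' : s < d := (ENNReal.ofReal_lt_ofReal_iff_of_nonneg hs.le).1 hsd
  have hd : 0 < (d : ℝ) := hs.trans hsd'
  have hexp : 1 + -2 / s * d < -1 := by
    have : 1 < d / s := (one_lt_div hs).2 hsd'
    rw [show -2 / s * d = -2 * (d / s) by ring]
    linarith
  refine hdlt.not_ge (dimH_WSet_le_of_summable hΨ hd ?_)
  refine (Real.summable_nat_rpow.2 hexp).of_norm_bounded_eventually_nat ?_
  filter_upwards [hle, eventually_gt_atTop 0] with q hq hq0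
  have hq' : (0 : ℝ) < q := Nat.cast_pos.2 hq0
  rw [Real.norm_of_nonneg (mul_nonneg hq'.le (Real.rpow_nonneg (hΨ q hq0) d)),
    Real.rpow_add hq', Real.rpow_one, Real.rpow_mul hq'.le]
  gcongr
  exact hΨ q hq0

end NaturalCover

/-! ### Arithmetic preliminaries -/

theorem card_filter_dvd_mul_add_le {q : ℕ} (hq : 0 < q) (s k : ℕ) :
    ((Finset.range q).filter fun p => q ∣ p * s + k).card ≤
      ∑ d ∈ q.divisors, if d ∣ k then if d ∣ s then d else 0 else 0 := by
  rcases Finset.eq_empty_or_nonempty ((Finset.range q).filter fun p => q ∣ p * s + k) with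
    hempty | ⟨p₀, hp₀⟩
  · simp only [hempty, Finset.card_empty, Nat.zero_le]
  obtain ⟨-, hp₀⟩ := Finset.mem_filter.1 hp₀
  -- A nonempty solution set forces `gcd q s ∣ k`, and the solutions agree modulo `q / gcd q s`.
  set e := q.gcd s
  have he : 0 < e := Nat.gcd_pos_of_pos_left _ hq
  have hes : e ∣ s := Nat.gcd_dvd_right _ _
  have heq : e ∣ q := Nat.gcd_dvd_left _ _
  have hek : e ∣ k := (Nat.dvd_add_right (hes.mul_left p₀)).1 (heq.trans hp₀)
  calc ((Finset.range q).filter fun p => q ∣ p * s + k).card ≤ (Finset.range e).card := by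
        refine Finset.card_le_card_of_injOn (fun p => p / (q / e)) ?_ ?_
        · intro p hp
          obtain ⟨hpq, -⟩ := Finset.mem_filter.1 hp
          refine Finset.mem_coe.2 (Finset.mem_range.2 ?_)
          rw [Nat.div_lt_iff_lt_mul (Nat.div_pos (Nat.le_of_dvd hq heq) he),
            Nat.mul_div_cancel' heq]
          exact Finset.mem_range.1 hpq
        · intro p hp p' hp' (hdiv : p / (q / e) = p' / (q / e))
          have hcongr : p * s + k ≡ p' * s + k [MOD q] :=
            (Nat.modEq_zero_iff_dvd.2 (Finset.mem_filter.1 hp).2).trans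
              (Nat.modEq_zero_iff_dvd.2 (Finset.mem_filter.1 hp').2).symm
          have hmod : p ≡ p' [MOD q / e] :=
            (Nat.ModEq.add_right_cancel' _ hcongr).cancel_right_div_gcd hq
          rw [← Nat.div_add_mod p (q / e), ← Nat.div_add_mod p' (q / e), hdiv, hmod]
    _ = if e ∣ k then if e ∣ s then e else 0 else 0 := by
        rw [Finset.card_range, if_pos hek, if_pos hes]
    _ ≤ ∑ d ∈ q.divisors, if d ∣ k then if d ∣ s then d else 0 else 0 :=
        Finset.single_le_sum (f := fun d => if d ∣ k then if d ∣ s then d else 0 else 0)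
          (fun _ _ => Nat.zero_le _) (Nat.mem_divisors.2 ⟨heq, hq.ne'⟩)

theorem tsum_ite_dvd {M : Type*} [AddCommMonoid M] [TopologicalSpace M] {d : ℕ} (hd : 0 < d)
    (f : ℕ → M) : (∑' s, if d ∣ s then f s else 0) = ∑' s, f (d * s) := by
  have hsupp : (Function.support fun s => if d ∣ s then f s else 0) ⊆ range (d * ·) := by
    intro s hs
    obtain ⟨t, rfl⟩ : d ∣ s := by
      by_contra hds
      exact hs (if_neg hds)
    exact mem_range_self t
  have hinj : Function.Injective (d * ·) := mul_right_injective₀ hd.ne'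
  rw [← hinj.tsum_eq hsupp]
  simp only [dvd_mul_right, if_true]

theorem sum_tsum_tsum_comm {ι : Type*} (A : Finset ι) (f : ι → ℕ → ℕ → ℝ≥0∞) :
    ∑ a ∈ A, ∑' k, ∑' s, f a k s = ∑' k, ∑' s, ∑ a ∈ A, f a k s := by
  have hswap (g : ι → ℕ → ℝ≥0∞) : ∑ a ∈ A, ∑' k, g a k = ∑' k, ∑ a ∈ A, g a k :=
    (Summable.tsum_finsetSum fun _ _ => ENNReal.summable).symm
  rw [hswap]
  exact tsum_congr fun k => hswap fun a => f a k

theorem sum_range_tsum_dvd_le {q : ℕ} (hq : 0 < q) (f : ℕ → ℕ → ℝ≥0∞) :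
    ∑ p ∈ Finset.range q, ∑' k, ∑' s, (if q ∣ p * s + k then f s k else 0) ≤
      ∑ d ∈ q.divisors, ∑' k, ∑' s, d * f (d * s) (d * k) := by
  have hcount (k s : ℕ) : ∑ p ∈ Finset.range q, (if q ∣ p * s + k then f s k else 0) ≤
      ∑ d ∈ q.divisors, if d ∣ k then if d ∣ s then d * f s k else 0 else 0 := by
    rw [← Finset.sum_filter, Finset.sum_const, nsmul_eq_mul]
    calc (((Finset.range q).filter fun p => q ∣ p * s + k).card : ℝ≥0∞) * f s k
        ≤ (∑ d ∈ q.divisors, if d ∣ k then if d ∣ s then d else 0 else 0 : ℕ) * f s k := by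
          gcongr
          exact card_filter_dvd_mul_add_le hq s k
      _ = _ := by
          push_cast
          simp only [Finset.sum_mul, ite_mul, zero_mul]
  rw [sum_tsum_tsum_comm]
  refine (ENNReal.tsum_le_tsum fun k => ENNReal.tsum_le_tsum (hcount k)).trans ?_
  rw [← sum_tsum_tsum_comm]
  refine (Finset.sum_congr rfl fun d hd => ?_).le
  have hd0 : 0 < d := Nat.pos_of_mem_divisors hd
  rw [← tsum_ite_dvd hd0 fun k => ∑' s, (d : ℝ≥0∞) * f (d * s) k]
  refine tsum_congr fun k => ?_
  split_ifs
  · exact tsum_ite_dvd hd0 fun s => (d : ℝ≥0∞) * f s k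
  · exact tsum_zero

theorem tsum_le_of_support_near {f : ℕ → ℝ≥0∞} {c L : ℝ} {B : ℝ≥0∞} (hc : 0 ≤ c) (hL : 0 ≤ L)
    (hsupp : ∀ s, f s ≠ 0 → |(s : ℝ) - c| ≤ L) (hB : ∀ s, f s ≤ B) :
    ∑' s, f s ≤ ENNReal.ofReal (2 * L + 1) * B := by
  have hzero : ∀ s ∉ Finset.Icc ⌈c - L⌉₊ ⌊c + L⌋₊, f s = 0 := by
    intro s hs
    by_contra hfs
    have hnear := abs_le.1 (hsupp s hfs)
    exact hs (Finset.mem_Icc.2 ⟨Nat.ceil_le.2 (by linarith), Nat.le_floor (by linarith)⟩)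
  have hcard : ((Finset.Icc ⌈c - L⌉₊ ⌊c + L⌋₊).card : ℝ) ≤ 2 * L + 1 := by
    have hfloor := Nat.floor_le (add_nonneg hc hL)
    have hceil := Nat.le_ceil (c - L)
    rw [Nat.card_Icc]
    rcases le_total ⌈c - L⌉₊ (⌊c + L⌋₊ + 1) with hle | hle
    · push_cast [Nat.cast_sub hle]
      linarith
    · rw [Nat.sub_eq_zero_of_le hle, Nat.cast_zero]
      linarith
  rw [tsum_eq_sum hzero]
  refine (Finset.sum_le_card_nsmul _ _ B fun s _ => hB s).trans ?_
  rw [nsmul_eq_mul, ← ENNReal.ofReal_natCast]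
  gcongr

theorem tsum_one_div_sq_le_two : ∑' k : ℕ, 1 / (k : ℝ) ^ 2 ≤ 2 := by
  rw [hasSum_zeta_two.tsum_eq]
  nlinarith [Real.pi_pos, Real.pi_lt_d2]

theorem sum_sum_divisors_one_div_le (Q : ℕ) :
    ∑ q ∈ Finset.Ioc 0 Q, ∑ d ∈ q.divisors, 1 / (d : ℝ) ≤ 2 * Q := by
  let f : ArithmeticFunction ℝ := ⟨fun d => 1 / (d : ℝ), by norm_num⟩
  calc ∑ q ∈ Finset.Ioc 0 Q, ∑ d ∈ q.divisors, 1 / (d : ℝ)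
      = ∑ d ∈ Finset.Ioc 0 Q, 1 / (d : ℝ) * (Q / d : ℕ) := by
        have hconv := ArithmeticFunction.sum_Ioc_mul_zeta_eq_sum f Q
        simp only [ArithmeticFunction.coe_mul_zeta_apply] at hconv
        exact hconv
    _ ≤ ∑ d ∈ Finset.Ioc 0 Q, Q * (1 / (d : ℝ) ^ 2) := by
        refine Finset.sum_le_sum fun d _ => ?_
        calc 1 / (d : ℝ) * (Q / d : ℕ) ≤ 1 / d * (Q / d) := by
              gcongr
              exact Nat.cast_div_le
          _ = Q * (1 / (d : ℝ) ^ 2) := by ring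
    _ ≤ Q * 2 := by
        rw [← Finset.mul_sum]
        gcongr
        exact (hasSum_zeta_two.summable.sum_le_tsum _ fun _ _ => by positivity).trans
          tsum_one_div_sq_le_two
    _ = 2 * Q := mul_comm _ _

theorem one_div_mul_le_abs_div_sub_div {p r : ℤ} {q s : ℕ} (hq : 0 < q) (hs : 0 < s)
    (hne : (p : ℝ) / q ≠ r / s) : 1 / ((q : ℝ) * s) ≤ |(p : ℝ) / q - r / s| := by
  have hq' : (0 : ℝ) < q := Nat.cast_pos.2 hq
  have hs' : (0 : ℝ) < s := Nat.cast_pos.2 hs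
  have hdiff : (p : ℝ) / q - r / s = ((p * s - r * q : ℤ) : ℝ) / (q * s) := by
    push_cast
    field_simp
  have hnum : p * s - r * q ≠ 0 := fun hzero => hne (sub_eq_zero.1 (by simp [hdiff, hzero]))
  rw [hdiff, abs_div, abs_of_pos (mul_pos hq' hs')]
  gcongr
  exact_mod_cast Int.one_le_abs hnum

theorem card_Icc_ceil_floor_le {u v : ℝ} (huv : u ≤ v + 1) :
    ((Finset.Icc ⌈u⌉ ⌊v⌋).card : ℝ) ≤ v - u + 1 := by
  have hfloor := Int.floor_le v
  have hceil := Int.le_ceil u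
  have hcast : ((Finset.Icc ⌈u⌉ ⌊v⌋).card : ℝ) = ((max (⌊v⌋ + 1 - ⌈u⌉) 0 : ℤ) : ℝ) := by
    rw [Int.card_Icc, ← Int.toNat_eq_max]
    norm_cast
  rw [hcast, Int.cast_max]
  refine max_le ?_ ?_ <;> push_cast <;> linarith

theorem volume_Icc_inter_near_fractions_le {a b : ℝ} (hab : a ≤ b) {q : ℕ} (hq : 0 < q) {ρ : ℝ}
    (hρ0 : 0 ≤ ρ) (hρ : ρ ≤ 1 / q) :
    volume (Icc a b ∩ {y | ∃ p : ℤ, |y - (p : ℝ) / q| ≤ ρ}) ≤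
      ENNReal.ofReal (((b - a) * q + 3) * (2 * ρ)) := by
  have hq' : (0 : ℝ) < q := Nat.cast_pos.2 hq
  have hcover : Icc a b ∩ {y | ∃ p : ℤ, |y - (p : ℝ) / q| ≤ ρ} ⊆
      ⋃ p ∈ Finset.Icc ⌈q * a - 1⌉ ⌊q * b + 1⌋, Metric.closedBall ((p : ℝ) / q) ρ := by
    rintro y ⟨⟨hay, hyb⟩, p, hp⟩
    have hscale : |q * y - p| ≤ 1 := by
      have hmul : q * y - p = q * (y - (p : ℝ) / q) := by field_simp
      rw [hmul, abs_mul, abs_of_pos hq', ← le_div_iff₀' hq']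
      exact hp.trans hρ
    have hscale' := abs_le.1 hscale
    have hqa : q * a ≤ q * y := by gcongr
    have hqb : q * y ≤ q * b := by gcongr
    refine mem_iUnion₂.2 ⟨p, Finset.mem_Icc.2 ⟨Int.ceil_le.2 ?_, Int.le_floor.2 ?_⟩, ?_⟩
    · linarith
    · linarith
    · exact Metric.mem_closedBall.2 hp
  have hlen : 0 ≤ (b - a) * q := mul_nonneg (sub_nonneg.2 hab) hq'.le
  refine (measure_mono hcover).trans ((measure_biUnion_finset_le _ _).trans ?_)
  simp only [Real.volume_closedBall, Finset.sum_const, nsmul_eq_mul]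
  rw [← ENNReal.ofReal_natCast, ← ENNReal.ofReal_mul (by positivity)]
  gcongr
  refine (card_Icc_ceil_floor_le (by linarith)).trans ?_
  linarith

/-! ### Approximating functions -/

/-- The function `g(q) = q² ψ(q)` attached to an approximating function `ψ`. -/
def sqMul (ψ : ℕ → ℝ) (q : ℕ) : ℝ :=
  (q : ℝ) ^ 2 * ψ q

/-- The approximating functions for which the Cantor construction below is carried out. The value
at `0` is irrelevant, hence the restrictions to positive integers. -/
structure ApproxFun (ψ : ℕ → ℝ) : Prop where
  pos : ∀ q, 0 < q → 0 < ψ q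
  antitoneOn_sqMul : AntitoneOn (sqMul ψ) (Ioi 0)
  summable : Summable fun q : ℕ => (q : ℝ) * ψ q

/-- Beyond the threshold `N`, the relative width `w` of the shells is positive and both `w` and
`q² ψ(q)` are small. -/
structure Threshold (ψ w : ℕ → ℝ) (N : ℕ) : Prop where
  pos : 0 < N
  width_pos : ∀ s, N ≤ s → 0 < w s
  width_le : ∀ s, N ≤ s → w s ≤ 1 / 4
  sqMul_le : ∀ s, N ≤ s → sqMul ψ s ≤ 1 / 100

/-- The sum `∑ₖ g(kq) / k` over the multiples of `q`, where `g(q) = q² ψ(q)`. -/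
noncomputable def multipleSum (ψ : ℕ → ℝ) (q : ℕ) : ℝ :=
  ∑' k : ℕ, sqMul ψ (k * q) / k

namespace ApproxFun

variable {ψ : ℕ → ℝ} {q r : ℕ}

theorem sqMul_le_sqMul (hψ : ApproxFun ψ) (hq : 0 < q) (hqr : q ≤ r) : sqMul ψ r ≤ sqMul ψ q :=
  hψ.antitoneOn_sqMul hq (hq.trans_le hqr) hqr

theorem sqMul_pos (hψ : ApproxFun ψ) (hq : 0 < q) : 0 < sqMul ψ q :=
  mul_pos (pow_pos (Nat.cast_pos.2 hq) 2) (hψ.pos q hq)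

theorem sqMul_nonneg (hψ : ApproxFun ψ) (q : ℕ) : 0 ≤ sqMul ψ q := by
  rcases q.eq_zero_or_pos with rfl | hq
  · simp [sqMul]
  · exact (hψ.sqMul_pos hq).le

theorem natCast_mul_nonneg (hψ : ApproxFun ψ) (q : ℕ) : 0 ≤ (q : ℝ) * ψ q := by
  rcases q.eq_zero_or_pos with rfl | hq
  · simp
  · have := hψ.pos q hq
    positivity

theorem sq_mul_le {d : ℕ} (hψ : ApproxFun ψ) (hd : 0 < d) (hq : 0 < q) (hqr : d * q ≤ r) :
    (d : ℝ) ^ 2 * ψ r ≤ ψ q := by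
  have hqr' : (d : ℝ) * q ≤ r := by exact_mod_cast hqr
  have hle : q ≤ r := (Nat.le_mul_of_pos_left q hd).trans hqr
  have hr := hψ.pos r (hq.trans_le hle)
  refine le_of_mul_le_mul_left ?_ (pow_pos (Nat.cast_pos (α := ℝ).2 hq) 2)
  calc (q : ℝ) ^ 2 * ((d : ℝ) ^ 2 * ψ r) = ((d : ℝ) * q) ^ 2 * ψ r := by ring
    _ ≤ (r : ℝ) ^ 2 * ψ r := by gcongr
    _ ≤ (q : ℝ) ^ 2 * ψ q := hψ.sqMul_le_sqMul hq hle

theorem le_of_le (hψ : ApproxFun ψ) (hq : 0 < q) (hqr : q ≤ r) : ψ r ≤ ψ q := by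
  simpa using hψ.sq_mul_le one_pos hq (by rwa [one_mul])

theorem tendsto_sqMul (hψ : ApproxFun ψ) : Tendsto (sqMul ψ) atTop (𝓝 0) := by
  rw [Metric.tendsto_atTop]
  intro ε hε
  by_contra! hlarge
  -- Monotonicity keeps `g ≥ ε` everywhere, so the harmonic series would converge.
  have hge (q : ℕ) (hq : 0 < q) : ε ≤ sqMul ψ q := by
    obtain ⟨r, hqr, hr⟩ := hlarge q
    rw [Real.dist_0_eq_abs, abs_of_nonneg (hψ.sqMul_nonneg r)] at hr
    exact hr.trans (hψ.sqMul_le_sqMul hq hqr)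
  have hsum : Summable fun q : ℕ => ε * (1 / (q : ℝ)) := by
    refine Summable.of_nonneg_of_le (fun q => by positivity) (fun q => ?_) hψ.summable
    rcases q.eq_zero_or_pos with rfl | hq
    · simp
    · have hq' : (0 : ℝ) < q := Nat.cast_pos.2 hq
      rw [mul_one_div, div_le_iff₀ hq']
      exact (hge q hq).trans_eq (by rw [sqMul]; ring)
  exact Real.not_summable_one_div_natCast ((summable_mul_left_iff hε.ne').1 hsum)

theorem sqMul_mul_div_nonneg (hψ : ApproxFun ψ) (q k : ℕ) : 0 ≤ sqMul ψ (k * q) / k :=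
  div_nonneg (hψ.sqMul_nonneg _) k.cast_nonneg

theorem sqMul_mul_div_le (hψ : ApproxFun ψ) (hq : 0 < q) (k : ℕ) :
    sqMul ψ (k * q) / k ≤ k * ψ k := by
  rcases k.eq_zero_or_pos with rfl | hk
  · simp
  · have hk' : (0 : ℝ) < k := Nat.cast_pos.2 hk
    rw [div_le_iff₀ hk']
    exact (hψ.sqMul_le_sqMul hk (Nat.le_mul_of_pos_right k hq)).trans_eq (by rw [sqMul]; ring)

theorem summable_sqMul_mul_div (hψ : ApproxFun ψ) (hq : 0 < q) :
    Summable fun k : ℕ => sqMul ψ (k * q) / k :=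
  .of_nonneg_of_le (hψ.sqMul_mul_div_nonneg q) (hψ.sqMul_mul_div_le hq) hψ.summable

theorem multipleSum_nonneg (hψ : ApproxFun ψ) (q : ℕ) : 0 ≤ multipleSum ψ q :=
  tsum_nonneg (hψ.sqMul_mul_div_nonneg q)

theorem tendsto_multipleSum (hψ : ApproxFun ψ) : Tendsto (multipleSum ψ) atTop (𝓝 0) := by
  have hterm (k : ℕ) : Tendsto (fun q => sqMul ψ (k * q) / k) atTop (𝓝 0) := by
    rcases k.eq_zero_or_pos with rfl | hk
    · simp
    · simpa using (hψ.tendsto_sqMul.comp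
        (tendsto_id.const_mul_atTop' hk)).div_const (k : ℝ)
  have hbound : ∀ᶠ q in atTop, ∀ k : ℕ, ‖sqMul ψ (k * q) / k‖ ≤ k * ψ k := by
    filter_upwards [eventually_gt_atTop 0] with q hq k
    rw [Real.norm_of_nonneg (hψ.sqMul_mul_div_nonneg q k)]
    exact hψ.sqMul_mul_div_le hq k
  have htsum := tendsto_tsum_of_dominated_convergence hψ.summable hterm hbound
  rwa [tsum_zero] at htsum

end ApproxFun

/-! ### Overlap of shells with fractions of larger denominator -/

/-- The right half-shell `{y : (1 - w(q)) ψ(q) ≤ y - x ≤ ψ(q)}` around a fraction `x` of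
denominator `q`. -/
def shell (ψ w : ℕ → ℝ) (x : ℝ) (q : ℕ) : Set ℝ :=
  Icc (x + (1 - w q) * ψ q) (x + ψ q)

/-- The union of the balls of radius `2 ψ(s)` around the fractions `r/s > x` with `s > q`. -/
def obstacle (ψ : ℕ → ℝ) (x : ℝ) (q : ℕ) : Set ℝ :=
  {y | ∃ s : ℕ, q < s ∧ ∃ r : ℤ, x < r / s ∧ |y - r / s| < 2 * ψ s}

/-- The condition under which the shell of a fraction `p/q` meets the ball of radius `2 ψ(s)` around
a fraction `r/s > p/q` with `s > q`. The numerator `r` is encoded through `k = r q - p s`, so that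
`r/s = p/q + k/(q s)`. -/
def Meets (ψ w : ℕ → ℝ) (q s k : ℕ) : Prop :=
  q < s ∧ 0 < k ∧ |(k : ℝ) / (q * s) - ψ q| < 2 * ψ s + w q * ψ q

open Classical in
/-- An upper bound for the length of the intersection of a shell of denominator `q` with the ball
of radius `2 ψ(s)` at distance `k/(q s)` from the centre of the shell. -/
noncomputable def overlap (ψ w : ℕ → ℝ) (q s k : ℕ) : ℝ≥0∞ :=
  if Meets ψ w q s k then ENNReal.ofReal (min (w q * ψ q) (4 * ψ s)) else 0

section

variable {ψ w : ℕ → ℝ} {N q s k : ℕ}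

theorem volume_shell (ψ w : ℕ → ℝ) (x : ℝ) (q : ℕ) :
    volume (shell ψ w x q) = ENNReal.ofReal (w q * ψ q) := by
  rw [shell, Real.volume_Icc]
  congr 1
  ring

theorem volume_shell_inter_ball_le_overlap (hw : 0 ≤ w q * ψ q) (hqs : q < s) (hk : 0 < k)
    (x : ℝ) :
    volume (shell ψ w x q ∩ Metric.ball (x + k / (q * s)) (2 * ψ s)) ≤ overlap ψ w q s k := by
  rcases (shell ψ w x q ∩ Metric.ball (x + k / (q * s)) (2 * ψ s)).eq_empty_or_nonempty with
    hempty | ⟨y, ⟨hleft, hright⟩, hball⟩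
  · rw [hempty, measure_empty]
    exact zero_le
  have hmeets : Meets ψ w q s k := by
    rw [Metric.mem_ball, Real.dist_eq, abs_lt] at hball
    exact ⟨hqs, hk, abs_lt.2 ⟨by linarith, by linarith⟩⟩
  rw [overlap, if_pos hmeets, ENNReal.ofReal_min]
  refine le_min ?_ ?_
  · exact (measure_mono inter_subset_left).trans (volume_shell ψ w x q).le
  · refine (measure_mono inter_subset_right).trans ?_
    rw [Real.volume_ball]
    exact ENNReal.ofReal_le_ofReal (by linarith)

theorem shell_inter_obstacle_subset (ψ w : ℕ → ℝ) {q : ℕ} (hq : 0 < q) (p : ℕ) :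
    shell ψ w (p / q) q ∩ obstacle ψ (p / q) q ⊆
      ⋃ k : ℕ, ⋃ s : ℕ, {y | q ∣ p * s + k ∧ q < s ∧ 0 < k ∧
        y ∈ shell ψ w (p / q) q ∩ Metric.ball ((p : ℝ) / q + k / (q * s)) (2 * ψ s)} := by
  rintro y ⟨hshell, s, hqs, r, hlt, hnear⟩
  have hq' : (0 : ℝ) < q := Nat.cast_pos.2 hq
  have hs' : (0 : ℝ) < s := Nat.cast_pos.2 (hq.trans hqs)
  have hpos : 0 < r * q - p * s := by
    rw [div_lt_div_iff₀ hq' hs'] at hlt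
    have hlt' : p * s < r * q := by exact_mod_cast hlt
    linarith
  obtain ⟨k, hk⟩ := Int.eq_ofNat_of_zero_le hpos.le
  have hkR : (k : ℝ) = r * q - p * s := by exact_mod_cast hk.symm
  have hfrac : (p : ℝ) / q + k / (q * s) = r / s := by
    rw [hkR]
    field_simp
    ring
  have hdvd : q ∣ p * s + k := by
    have hdvd' : (q : ℤ) ∣ p * s + k := ⟨r, by rw [← hk]; ring⟩
    exact_mod_cast hdvd'
  refine mem_iUnion₂.2 ⟨k, s, hdvd, hqs, by omega, hshell, ?_⟩
  rwa [hfrac, Metric.mem_ball, Real.dist_eq]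

theorem volume_shell_inter_obstacle_le (hq : 0 < q) (hw : 0 ≤ w q * ψ q) (p : ℕ) :
    volume (shell ψ w (p / q) q ∩ obstacle ψ (p / q) q) ≤
      ∑' k, ∑' s, if q ∣ p * s + k then overlap ψ w q s k else 0 := by
  refine (measure_mono (shell_inter_obstacle_subset ψ w hq p)).trans
    ((measure_iUnion_le _).trans (ENNReal.tsum_le_tsum fun k =>
      (measure_iUnion_le _).trans (ENNReal.tsum_le_tsum fun s => ?_)))
  by_cases hcond : q ∣ p * s + k ∧ q < s ∧ 0 < k
  · rw [if_pos hcond.1]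
    exact (measure_mono fun y hy => hy.2.2.2).trans
      (volume_shell_inter_ball_le_overlap hw hcond.2.1 hcond.2.2 _)
  · have hempty : {y | q ∣ p * s + k ∧ q < s ∧ 0 < k ∧
        y ∈ shell ψ w (p / q) q ∩ Metric.ball ((p : ℝ) / q + k / (q * s)) (2 * ψ s)} = ∅ :=
      eq_empty_of_forall_notMem fun y hy => hcond ⟨hy.1, hy.2.1, hy.2.2.1⟩
    rw [hempty, measure_empty]
    exact zero_le

theorem sum_volume_shell_inter_obstacle_le_sum_divisors (hq : 0 < q) (hw : 0 ≤ w q * ψ q) :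
    ∑ p ∈ Finset.range q, volume (shell ψ w (p / q) q ∩ obstacle ψ (p / q) q) ≤
      ∑ d ∈ q.divisors, ∑' k, ∑' s, d * overlap ψ w q (d * s) (d * k) :=
  (Finset.sum_le_sum fun p _ => volume_shell_inter_obstacle_le hq hw p).trans
    (sum_range_tsum_dvd_le hq (overlap ψ w q))

namespace Meets

theorem lt (h : Meets ψ w q s k) (hψ : ApproxFun ψ) (hN : Threshold ψ w N) (hq : N ≤ q) :
    (k : ℝ) < 4 * (q * s * ψ q) := by
  obtain ⟨hqs, -, habs⟩ := h
  have hq0 : 0 < q := hN.pos.trans_le hq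
  have : (0 : ℝ) < q := Nat.cast_pos.2 hq0
  have hs' : (0 : ℝ) < s := Nat.cast_pos.2 (hq0.trans hqs)
  have hψq := hψ.pos q hq0
  have hwidth : w q * ψ q ≤ 1 / 4 * ψ q := by
    gcongr
    exact hN.width_le q hq
  have hψs := hψ.le_of_le hq0 hqs.le
  have hdist : (k : ℝ) / (q * s) < 4 * ψ q := by linarith [(abs_lt.1 habs).2]
  rw [div_lt_iff₀ (by positivity)] at hdist
  linarith

theorem mul_mul_le (h : Meets ψ w q s k) (hψ : ApproxFun ψ) (hN : Threshold ψ w N) (hq : N ≤ q) :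
    25 * ((k : ℝ) * q) ≤ s := by
  have hlt := h.lt hψ hN hq
  have hsmall : (q : ℝ) ^ 2 * ψ q ≤ 1 / 100 := hN.sqMul_le q hq
  calc 25 * ((k : ℝ) * q) ≤ 25 * (4 * (q * s * ψ q) * q) := by gcongr
    _ = 100 * s * (q ^ 2 * ψ q) := by ring
    _ ≤ 100 * s * (1 / 100) := by gcongr
    _ = s := by ring

theorem psi_le (h : Meets ψ w q s k) (hψ : ApproxFun ψ) (hN : Threshold ψ w N) (hq : N ≤ q) :
    ψ s ≤ 16 * sqMul ψ (k * q) * q ^ 2 * ψ q ^ 2 / k ^ 2 := by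
  have hq0 : 0 < q := hN.pos.trans_le hq
  have hk' : (0 : ℝ) < k := Nat.cast_pos.2 h.2.1
  have hψs := hψ.pos s (hq0.trans h.1)
  have hkq : k * q ≤ s := by
    have hle : (k : ℝ) * q ≤ s := by
      have : (0 : ℝ) ≤ k * q := by positivity
      linarith [h.mul_mul_le hψ hN hq]
    exact_mod_cast hle
  rw [le_div_iff₀ (by positivity)]
  calc ψ s * (k : ℝ) ^ 2 ≤ ψ s * (4 * (q * s * ψ q)) ^ 2 := by
        gcongr
        exact (h.lt hψ hN hq).le
    _ = 16 * sqMul ψ s * q ^ 2 * ψ q ^ 2 := by rw [sqMul]; ring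
    _ ≤ 16 * sqMul ψ (k * q) * q ^ 2 * ψ q ^ 2 := by
        gcongr
        exact hψ.sqMul_le_sqMul (Nat.mul_pos h.2.1 hq0) hkq

theorem le_two_mul (h : Meets ψ w q s k) (hψ : ApproxFun ψ) (hN : Threshold ψ w N) (hq : N ≤ q) :
    (s : ℝ) ≤ 2 * k * (1 / (q * ψ q)) := by
  have hq0 : 0 < q := hN.pos.trans_le hq
  have hs0 : 0 < s := hq0.trans h.1
  have : (0 : ℝ) < q := Nat.cast_pos.2 hq0
  have : (0 : ℝ) < s := Nat.cast_pos.2 hs0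
  have hψq := hψ.pos q hq0
  have hψs := hψ.pos s hs0
  have hqs : 25 * q ≤ s := by
    have hk : (1 : ℝ) ≤ k := Nat.one_le_cast.2 h.2.1
    have hqs' : 25 * (q : ℝ) ≤ s := by nlinarith [h.mul_mul_le hψ hN hq]
    exact_mod_cast hqs'
  have hsmall : (25 : ℕ) ^ 2 * ψ s ≤ ψ q := hψ.sq_mul_le (by norm_num) hq0 hqs
  push_cast at hsmall
  have hwidth : w q * ψ q ≤ 1 / 4 * ψ q := by
    gcongr
    exact hN.width_le q hq
  have hdist : ψ q / 2 < (k : ℝ) / (q * s) := by linarith [(abs_lt.1 h.2.2).1]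
  rw [lt_div_iff₀ (by positivity)] at hdist
  rw [mul_one_div, le_div_iff₀ (by positivity)]
  linarith

theorem abs_sub_le (h : Meets ψ w q s k) (hψ : ApproxFun ψ) (hN : Threshold ψ w N) (hq : N ≤ q) :
    |(s : ℝ) - k * (1 / (q * ψ q))| ≤ 2 * k * (1 / (q * ψ q)) * (2 * ψ s / ψ q + w q) := by
  have hq0 : 0 < q := hN.pos.trans_le hq
  have hs0 : 0 < s := hq0.trans h.1
  have : (0 : ℝ) < q := Nat.cast_pos.2 hq0
  have hs' : (0 : ℝ) < s := Nat.cast_pos.2 hs0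
  have hψq := hψ.pos q hq0
  have hψs := hψ.pos s hs0
  have hw := hN.width_pos q hq
  have hdist : (s : ℝ) - k * (1 / (q * ψ q)) = -(s / ψ q * (k / (q * s) - ψ q)) := by
    field_simp
    ring
  rw [hdist, abs_neg, abs_mul, abs_of_pos (div_pos hs' hψq)]
  calc (s : ℝ) / ψ q * |k / (q * s) - ψ q| ≤ s / ψ q * (2 * ψ s + w q * ψ q) := by
        gcongr
        exact h.2.2.le
    _ = s * (2 * ψ s / ψ q + w q) := by field_simp
    _ ≤ _ := by
        gcongr
        exact h.le_two_mul hψ hN hq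

end Meets

/-- The window of `Meets.abs_sub_le` has about `2 L + 1` points, each contributing an overlap of at
most `min (ω u) (4 P)`; either bound of the minimum is used according to the term of `2 L + 1`. -/
theorem window_mul_min_le {d k q u ω G : ℝ} (hd : 0 < d) (hk : 0 < k) (hq : 0 < q) (hu : 0 < u)
    (hω : 0 < ω) (hG : 0 < G) (hGu : G * (q ^ 2 * u) ≤ 1) {P L : ℝ}
    (hP : P = 16 * G * q ^ 2 * u ^ 2 / (d * k) ^ 2)
    (hL : L = 2 * k * (1 / (q * u)) * (2 * P / u + ω)) :
    d * ((2 * L + 1) * min (ω * u) (4 * P)) ≤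
      ω * u / d * (64 / ω * (1 / k ^ 2) + 384 * q * (G / k)) := by
  have hP0 : 0 < P := by
    rw [hP]
    positivity
  set m := min (ω * u) (4 * P)
  have hm₁ : m ≤ ω * u := min_le_left _ _
  have hm₂ : m ≤ 4 * P := min_le_right _ _
  calc d * ((2 * L + 1) * m)
      = d * (m + 8 * k * (1 / (q * u)) * P / u * m + 4 * k * (1 / (q * u)) * ω * m) := by
        rw [hL]
        ring
    _ ≤ d * (4 * P + 8 * k * (1 / (q * u)) * P / u * (ω * u)
          + 4 * k * (1 / (q * u)) * ω * (4 * P)) := by gcongr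
    _ = ω * u / d * (64 * (G * (q ^ 2 * u)) / ω * (1 / k ^ 2) + 384 * q * (G / k)) := by
        rw [hP]
        field_simp
        ring
    _ ≤ ω * u / d * (64 * 1 / ω * (1 / k ^ 2) + 384 * q * (G / k)) := by gcongr
    _ = ω * u / d * (64 / ω * (1 / k ^ 2) + 384 * q * (G / k)) := by rw [mul_one]

theorem Meets.psi_le_and_abs_sub_le {d : ℕ} (h : Meets ψ w q (d * s) (d * k)) (hψ : ApproxFun ψ)
    (hN : Threshold ψ w N) (hq : N ≤ q) (hd : 0 < d) (hk : 0 < k) {P : ℝ}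
    (hP : P = 16 * sqMul ψ (k * q) * q ^ 2 * ψ q ^ 2 / (d * k) ^ 2) :
    ψ (d * s) ≤ P ∧
      |(s : ℝ) - k * (1 / (q * ψ q))| ≤ 2 * k * (1 / (q * ψ q)) * (2 * P / ψ q + w q) := by
  have hq0 : 0 < q := hN.pos.trans_le hq
  have hd' : (0 : ℝ) < d := Nat.cast_pos.2 hd
  have hψq := hψ.pos q hq0
  have hsq : sqMul ψ (d * k * q) ≤ sqMul ψ (k * q) := by
    rw [mul_assoc]
    exact hψ.sqMul_le_sqMul (Nat.mul_pos hk hq0) (Nat.le_mul_of_pos_left _ hd)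
  have hψP : ψ (d * s) ≤ P := by
    refine (h.psi_le hψ hN hq).trans ?_
    rw [hP]
    push_cast
    gcongr
  refine ⟨hψP, le_of_mul_le_mul_left ?_ hd'⟩
  calc d * |(s : ℝ) - k * (1 / (q * ψ q))|
      = |((d * s : ℕ) : ℝ) - (d * k : ℕ) * (1 / (q * ψ q))| := by
        rw [show ((d * s : ℕ) : ℝ) - (d * k : ℕ) * (1 / (q * ψ q)) =
          d * (s - k * (1 / (q * ψ q))) by push_cast; ring, abs_mul, abs_of_pos hd']
    _ ≤ 2 * (d * k : ℕ) * (1 / (q * ψ q)) * (2 * ψ (d * s) / ψ q + w q) :=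
        h.abs_sub_le hψ hN hq
    _ ≤ 2 * (d * k : ℕ) * (1 / (q * ψ q)) * (2 * P / ψ q + w q) := by gcongr
    _ = d * (2 * k * (1 / (q * ψ q)) * (2 * P / ψ q + w q)) := by
        push_cast
        ring

theorem tsum_overlap_le (hψ : ApproxFun ψ) (hN : Threshold ψ w N) (hq : N ≤ q) {d : ℕ}
    (hd : 0 < d) (k : ℕ) :
    ∑' s, d * overlap ψ w q (d * s) (d * k) ≤
      ENNReal.ofReal (w q * ψ q / d *
        (64 / w q * (1 / (k : ℝ) ^ 2) + 384 * q * (sqMul ψ (k * q) / k))) := by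
  rcases k.eq_zero_or_pos with rfl | hk
  · simp [overlap, Meets]
  have hq0 : 0 < q := hN.pos.trans_le hq
  have hψq := hψ.pos q hq0
  have hw := hN.width_pos q hq
  have hG := hψ.sqMul_pos (Nat.mul_pos hk hq0)
  have hG1 := hN.sqMul_le (k * q) (hq.trans (Nat.le_mul_of_pos_left q hk))
  have hg1 : (q : ℝ) ^ 2 * ψ q ≤ 1 / 100 := hN.sqMul_le q hq
  have hq' : (0 : ℝ) < q := Nat.cast_pos.2 hq0
  have hd' : (0 : ℝ) < d := Nat.cast_pos.2 hd
  have hk' : (0 : ℝ) < k := Nat.cast_pos.2 hk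
  set P := 16 * sqMul ψ (k * q) * q ^ 2 * ψ q ^ 2 / (d * k) ^ 2 with hP
  set L := 2 * k * (1 / (q * ψ q)) * (2 * P / ψ q + w q) with hL
  have hmeets (s : ℕ) (hs : overlap ψ w q (d * s) (d * k) ≠ 0) : Meets ψ w q (d * s) (d * k) := by
    by_contra hmeets
    exact hs (if_neg hmeets)
  have hheight (s : ℕ) :
      overlap ψ w q (d * s) (d * k) ≤ ENNReal.ofReal (min (w q * ψ q) (4 * P)) := by
    rw [overlap]
    split_ifs with h
    · gcongr
      exact (h.psi_le_and_abs_sub_le hψ hN hq hd hk hP).1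
    · exact zero_le
  rw [ENNReal.tsum_mul_left]
  refine (mul_le_mul_right (tsum_le_of_support_near (c := k * (1 / (q * ψ q))) (L := L)
    (by positivity) (by positivity)
    (fun s hs => ((hmeets s hs).psi_le_and_abs_sub_le hψ hN hq hd hk hP).2) hheight) _).trans ?_
  rw [← ENNReal.ofReal_natCast d, ← ENNReal.ofReal_mul (by positivity),
    ← ENNReal.ofReal_mul (by positivity)]
  refine ENNReal.ofReal_le_ofReal (window_mul_min_le hd' hk' hq' hψq hw hG ?_ hP hL)
  nlinarith [mul_pos (pow_pos hq' 2) hψq]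

theorem sum_volume_shell_inter_obstacle_le (hψ : ApproxFun ψ) (hN : Threshold ψ w N)
    (hq : N ≤ q) :
    ∑ p ∈ Finset.range q, volume (shell ψ w (p / q) q ∩ obstacle ψ (p / q) q) ≤
      ENNReal.ofReal (w q * ψ q * (128 / w q + 384 * q * multipleSum ψ q) *
        ∑ d ∈ q.divisors, 1 / (d : ℝ)) := by
  have hq0 : 0 < q := hN.pos.trans_le hq
  have hψq := hψ.pos q hq0
  have hw := hN.width_pos q hq
  have hsum := hψ.multipleSum_nonneg q
  refine (sum_volume_shell_inter_obstacle_le_sum_divisors hq0 (by positivity)).trans ?_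
  rw [Finset.mul_sum, ENNReal.ofReal_sum_of_nonneg fun d _ => by positivity]
  refine Finset.sum_le_sum fun d hd => ?_
  have hsquares : Summable fun k : ℕ => 64 / w q * (1 / (k : ℝ) ^ 2) :=
    hasSum_zeta_two.summable.mul_left _
  have hmultiples : Summable fun k : ℕ => 384 * q * (sqMul ψ (k * q) / k) :=
    (hψ.summable_sqMul_mul_div hq0).mul_left _
  have hterm (k : ℕ) : 0 ≤ w q * ψ q / d *
      (64 / w q * (1 / (k : ℝ) ^ 2) + 384 * q * (sqMul ψ (k * q) / k)) := by
    have := hψ.sqMul_mul_div_nonneg q k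
    positivity
  refine (ENNReal.tsum_le_tsum fun k =>
    tsum_overlap_le hψ hN hq (Nat.pos_of_mem_divisors hd) k).trans ?_
  rw [← ENNReal.ofReal_tsum_of_nonneg hterm ((hsquares.add hmultiples).mul_left _), tsum_mul_left,
    hsquares.tsum_add hmultiples, tsum_mul_left, tsum_mul_left]
  refine ENNReal.ofReal_le_ofReal ?_
  calc w q * ψ q / d * (64 / w q * ∑' k : ℕ, 1 / (k : ℝ) ^ 2 + 384 * q * multipleSum ψ q)
      ≤ w q * ψ q / d * (64 / w q * 2 + 384 * q * multipleSum ψ q) := by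
        gcongr
        exact tsum_one_div_sq_le_two
    _ = w q * ψ q * (128 / w q + 384 * q * multipleSum ψ q) * (1 / d) := by ring

end

/-! ### Obstructed shells are rare -/

/-- More than half of the shell of the fraction `x` of denominator `q` lies in its obstacle set. -/
def IsObstructed (ψ w : ℕ → ℝ) (x : ℝ) (q : ℕ) : Prop :=
  ENNReal.ofReal (w q * ψ q / 2) < volume (shell ψ w x q ∩ obstacle ψ x q)

/-- The width `w` decays more slowly than every power. -/
def DecaysSlowly (w : ℕ → ℝ) : Prop :=
  ∀ ε : ℝ, 0 < ε → ∀ᶠ q : ℕ in atTop, (q : ℝ) ^ (-ε) ≤ w q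

section

variable {ψ w : ℕ → ℝ} {N : ℕ}

open Classical in
theorem card_isObstructed_le (hψ : ApproxFun ψ) (hN : Threshold ψ w N) {q : ℕ} (hq : N ≤ q) :
    (({p ∈ Finset.range q | IsObstructed ψ w (p / q) q} : Finset ℕ).card : ℝ) ≤
      2 * (128 / w q + 384 * q * multipleSum ψ q) * ∑ d ∈ q.divisors, 1 / (d : ℝ) := by
  set B : Finset ℕ := {p ∈ Finset.range q | IsObstructed ψ w (p / q) q}
  have hq0 : 0 < q := hN.pos.trans_le hq
  have hψq := hψ.pos q hq0
  have hw := hN.width_pos q hq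
  have hsum := hψ.multipleSum_nonneg q
  have hmarkov : ENNReal.ofReal (B.card * (w q * ψ q / 2)) ≤
      ENNReal.ofReal (w q * ψ q * (128 / w q + 384 * q * multipleSum ψ q) *
        ∑ d ∈ q.divisors, 1 / (d : ℝ)) := by
    refine le_trans ?_ (sum_volume_shell_inter_obstacle_le hψ hN hq)
    rw [ENNReal.ofReal_mul (by positivity), ENNReal.ofReal_natCast, ← nsmul_eq_mul]
    exact (Finset.card_nsmul_le_sum _ _ _ fun p hp => (Finset.mem_filter.1 hp).2.le).trans
      (Finset.sum_le_sum_of_subset (Finset.filter_subset _ _))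
  rw [ENNReal.ofReal_le_ofReal_iff (by positivity)] at hmarkov
  refine le_of_mul_le_mul_left (a := w q * ψ q / 2) ?_ (by positivity)
  linarith

theorem eventually_obstruction_bound_le (hψ : ApproxFun ψ) (hw : DecaysSlowly w) {κ : ℝ}
    (hκ : 0 < κ) :
    ∀ᶠ q : ℕ in atTop, 2 * (128 / w q + 384 * q * multipleSum ψ q) ≤ κ * q := by
  have hsqrt : Tendsto (fun q : ℕ => (q : ℝ) ^ (-(1 / 2 : ℝ))) atTop (𝓝 0) :=
    (tendsto_rpow_neg_atTop (by norm_num)).comp tendsto_natCast_atTop_atTop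
  filter_upwards [hψ.tendsto_multipleSum.eventually_lt_const (show 0 < κ / 1536 by positivity),
    hsqrt.eventually_lt_const (show 0 < κ / 512 by positivity), hw (1 / 2) (by norm_num),
    eventually_gt_atTop 0] with q hsum hsmall hslow hq0
  have hq : (0 : ℝ) < q := Nat.cast_pos.2 hq0
  have hwidth : 1 / w q ≤ q * (κ / 512) := calc
    1 / w q ≤ 1 / (q : ℝ) ^ (-(1 / 2 : ℝ)) := by gcongr
    _ = q * (q : ℝ) ^ (-(1 / 2 : ℝ)) := by
      rw [div_eq_iff (by positivity), mul_assoc, ← Real.rpow_add hq]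
      norm_num [Real.rpow_neg_one, hq.ne']
    _ ≤ q * (κ / 512) := by gcongr
  have hmultiples : (q : ℝ) * multipleSum ψ q ≤ q * (κ / 1536) := by gcongr
  calc 2 * (128 / w q + 384 * q * multipleSum ψ q)
      = 256 * (1 / w q) + 768 * (q * multipleSum ψ q) := by ring
    _ ≤ 256 * (q * (κ / 512)) + 768 * (q * (κ / 1536)) := by gcongr
    _ = κ * q := by ring

open Classical in
theorem eventually_sum_card_isObstructed_le (hψ : ApproxFun ψ) (hN : Threshold ψ w N)
    (hw : DecaysSlowly w) {κ : ℝ} (hκ : 0 < κ) :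
    ∀ᶠ Q : ℕ in atTop, ∑ q ∈ Finset.Ioc 0 Q with Q ≤ 100 * q,
      (({p ∈ Finset.range q | IsObstructed ψ w (p / q) q} : Finset ℕ).card : ℝ) ≤
        κ * (Q : ℝ) ^ 2 := by
  obtain ⟨q₀, hq₀⟩ := eventually_atTop.1 (eventually_obstruction_bound_le hψ hw (half_pos hκ))
  filter_upwards [eventually_ge_atTop (100 * max N q₀)] with Q hQ
  have hdivisors (q : ℕ) : (0 : ℝ) ≤ ∑ d ∈ q.divisors, 1 / (d : ℝ) :=
    Finset.sum_nonneg fun d _ => by positivity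
  calc ∑ q ∈ Finset.Ioc 0 Q with Q ≤ 100 * q,
        (({p ∈ Finset.range q | IsObstructed ψ w (p / q) q} : Finset ℕ).card : ℝ)
      ≤ ∑ q ∈ Finset.Ioc 0 Q with Q ≤ 100 * q, κ / 2 * Q * ∑ d ∈ q.divisors, 1 / (d : ℝ) := by
        refine Finset.sum_le_sum fun q hq => ?_
        simp only [Finset.mem_filter, Finset.mem_Ioc] at hq
        have hlarge : max N q₀ ≤ q := by omega
        refine (card_isObstructed_le hψ hN ((le_max_left _ _).trans hlarge)).trans
          (mul_le_mul_of_nonneg_right ?_ (hdivisors q))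
        refine (hq₀ q ((le_max_right _ _).trans hlarge)).trans ?_
        have hqQ : (q : ℝ) ≤ Q := Nat.cast_le.2 hq.1.2
        gcongr
    _ ≤ ∑ q ∈ Finset.Ioc 0 Q, κ / 2 * Q * ∑ d ∈ q.divisors, 1 / (d : ℝ) := by
        refine Finset.sum_le_sum_of_subset_of_nonneg (Finset.filter_subset _ _) fun q _ _ => ?_
        have := hdivisors q
        positivity
    _ = κ / 2 * Q * ∑ q ∈ Finset.Ioc 0 Q, ∑ d ∈ q.divisors, 1 / (d : ℝ) := by rw [Finset.mul_sum]
    _ ≤ κ / 2 * Q * (2 * Q) := by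
        gcongr
        exact sum_sum_divisors_one_div_le Q
    _ = κ * (Q : ℝ) ^ 2 := by ring

theorem eventually_card_rat_isObstructed_le (hψ : ApproxFun ψ) (hN : Threshold ψ w N)
    (hw : DecaysSlowly w) {κ : ℝ} (hκ : 0 < κ) :
    ∀ᶠ Q : ℕ in atTop, ∀ F : Finset ℚ,
      (∀ ρ ∈ F, 0 ≤ ρ ∧ ρ < 1 ∧ ρ.den ≤ Q ∧ Q ≤ 100 * ρ.den ∧ IsObstructed ψ w ρ ρ.den) →
        (F.card : ℝ) ≤ κ * (Q : ℝ) ^ 2 := by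
  classical
  filter_upwards [eventually_sum_card_isObstructed_le hψ hN hw hκ] with Q hQ F hF
  refine le_trans ?_ hQ
  rw [← Nat.cast_sum, Nat.cast_le, ← Finset.card_sigma]
  refine Finset.card_le_card_of_injOn (fun ρ => ⟨ρ.den, ρ.num.toNat⟩) (fun ρ hρ => ?_)
    fun ρ hρ σ hσ hρσ => ?_
  · obtain ⟨hρ0, hρ1, hle, hge, hobs⟩ := hF ρ hρ
    have hnum : (ρ.num.toNat : ℤ) = ρ.num := Int.toNat_of_nonneg (Rat.num_nonneg.2 hρ0)
    have hlt : ρ.num.toNat < ρ.den := by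
      have := Rat.num_lt_denom_iff.2 hρ1
      omega
    have hcast : ((ρ.num.toNat : ℕ) : ℝ) / ρ.den = ρ := by
      rw [Rat.cast_def ρ]
      congr 1
      exact_mod_cast hnum
    simp only [Finset.mem_coe, Finset.mem_sigma, Finset.mem_filter, Finset.mem_Ioc,
      Finset.mem_range, hcast]
    exact ⟨⟨⟨ρ.den_pos, hle⟩, hge⟩, hlt, hobs⟩
  · have hρ0 := Rat.num_nonneg.2 (hF ρ hρ).1
    have hσ0 := Rat.num_nonneg.2 (hF σ hσ).1
    simp only [Sigma.mk.injEq, heq_eq_eq] at hρσ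
    exact Rat.ext (by omega) hρσ.1

end

/-! ### Nodes of the Cantor construction -/

/-- The points within distance `2 ψ(s)` of a fraction of denominator `s`, for some `s > n`. -/
def tailNbhd (ψ : ℕ → ℝ) (n : ℕ) : Set ℝ :=
  {y | ∃ s : ℕ, n < s ∧ ∃ r : ℤ, |y - r / s| < 2 * ψ s}

/-- A node of the Cantor construction: an interval, with the largest denominator treated so far. -/
structure Node where
  left : ℝ
  right : ℝ
  den : ℕ

/-- The node given by the shell of a rational number in lowest terms. -/
noncomputable def Node.ofRat (ψ w : ℕ → ℝ) (ρ : ℚ) : Node where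
  left := ρ + (1 - w ρ.den) * ψ ρ.den
  right := ρ + ψ ρ.den
  den := ρ.den

/-- The nodes the construction works with: `[left, right] ⊆ [0, 1]` avoids the intervals forbidden
in the definition of `E(Ψ, ω)` for the denominators in `(N, den]`, and at least half of it avoids
the neighbourhoods attached to all later denominators. -/
structure Node.Good (ψ w : ℕ → ℝ) (N : ℕ) (v : Node) : Prop where
  le_den : N ≤ v.den
  left_nonneg : 0 ≤ v.left
  left_lt_right : v.left < v.right
  right_le_one : v.right ≤ 1
  far : ∀ s : ℕ, N < s → s ≤ v.den → ∀ r : ℤ, ∀ y ∈ Icc v.left v.right,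
    (1 - w s) * ψ s ≤ |y - r / s|
  room : ENNReal.ofReal ((v.right - v.left) / 2) ≤
    volume (Icc v.left v.right \ tailNbhd ψ v.den)

theorem le_measure_sdiff {α : Type*} [MeasurableSpace α] {μ : Measure α} {s t : Set α}
    {a b : ℝ≥0∞} (ha : a ≠ ∞) (hs : a + b ≤ μ s) (hst : μ (s ∩ t) ≤ a) : b ≤ μ (s \ t) :=
  (ENNReal.add_le_add_iff_left ha).1
    (hs.trans ((measure_le_inter_add_sdiff μ s t).trans (add_le_add_left hst _)))

theorem den_dvd_of_cast_eq_div {ρ : ℚ} {r : ℤ} {s : ℕ} (h : (ρ : ℝ) = r / s) : ρ.den ∣ s := by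
  have hρ : ρ = (r : ℚ) / (s : ℤ) := by exact_mod_cast h
  have hdvd := Rat.den_dvd r s
  rw [Rat.divInt_eq_div, ← hρ] at hdvd
  exact_mod_cast hdvd

section

variable {ψ w : ℕ → ℝ} {N : ℕ}

theorem Threshold.psi_mul_le (hN : Threshold ψ w N) (hψ : ApproxFun ψ) {q s : ℕ} (hs : N ≤ s)
    (hqs : q ≤ s) : q * s * ψ s ≤ 1 / 100 := by
  have := hψ.pos s (hN.pos.trans_le hs)
  calc q * s * ψ s ≤ s * s * ψ s := by gcongr
    _ = sqMul ψ s := by rw [sqMul]; ring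
    _ ≤ 1 / 100 := hN.sqMul_le s hs

theorem volume_Icc_inter_tailNbhd_le (hψ : ApproxFun ψ) (hN : Threshold ψ w N) :
    volume (Icc 0 1 ∩ tailNbhd ψ N) ≤
      ENNReal.ofReal (16 * ∑' s : ℕ, ((s + (N + 1) : ℕ) : ℝ) * ψ (s + (N + 1))) := by
  have hcover : Icc 0 1 ∩ tailNbhd ψ N ⊆ ⋃ t : ℕ, Icc 0 1 ∩
      {y | ∃ r : ℤ, |y - r / (t + (N + 1) : ℕ)| ≤ 2 * ψ (t + (N + 1))} := by
    rintro y ⟨hy, s, hs, r, hr⟩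
    obtain ⟨t, rfl⟩ := Nat.exists_eq_add_of_le' (Nat.succ_le_of_lt hs)
    exact mem_iUnion.2 ⟨t, hy, r, hr.le⟩
  have hsummable : Summable fun s : ℕ => ((s + (N + 1) : ℕ) : ℝ) * ψ (s + (N + 1)) :=
    (summable_nat_add_iff (N + 1)).2 hψ.summable
  rw [← tsum_mul_left, ENNReal.ofReal_tsum_of_nonneg
    (fun t => mul_nonneg (by norm_num) (hψ.natCast_mul_nonneg _)) (hsummable.mul_left 16)]
  refine (measure_mono hcover).trans ((measure_iUnion_le _).trans
    (ENNReal.tsum_le_tsum fun t => ?_))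
  have hs : 0 < t + (N + 1) := by omega
  have hsmall := hN.psi_mul_le hψ (show N ≤ t + (N + 1) by omega) (Nat.one_le_of_lt hs)
  generalize t + (N + 1) = s at hs hsmall ⊢
  have hs' : (1 : ℝ) ≤ s := Nat.one_le_cast.2 hs
  have hψs := hψ.pos s hs
  refine (volume_Icc_inter_near_fractions_le zero_le_one hs (by positivity) ?_).trans
    (ENNReal.ofReal_le_ofReal ?_)
  · rw [le_div_iff₀ (by positivity)]
    push_cast at hsmall
    linarith
  · nlinarith

theorem Node.good_root (hψ : ApproxFun ψ) (hN : Threshold ψ w N)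
    (htail : ∑' s : ℕ, ((s + (N + 1) : ℕ) : ℝ) * ψ (s + (N + 1)) ≤ 1 / 32) :
    Node.Good ψ w N ⟨0, 1, N⟩ where
  le_den := le_rfl
  left_nonneg := le_rfl
  left_lt_right := zero_lt_one
  right_le_one := le_rfl
  far := fun s hs hsN => absurd hs hsN.not_gt
  room := by
    refine le_measure_sdiff (ENNReal.ofReal_ne_top (r := 1 / 2)) ?_
      ((volume_Icc_inter_tailNbhd_le hψ hN).trans (ENNReal.ofReal_le_ofReal (by linarith)))
    rw [Real.volume_Icc, ← ENNReal.ofReal_add (by norm_num) (by norm_num)]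
    norm_num

/-- Only fractions to the right of `ρ` can interfere with its right half-shell: those on the left
are too far away, and `r/s = ρ` forces `s ≥ 2 ρ.den`, whence `4 ψ(s) ≤ ψ(ρ.den)`. -/
theorem shell_inter_tailNbhd_subset (hψ : ApproxFun ψ) (hN : Threshold ψ w N) {ρ : ℚ}
    (hρ : N ≤ ρ.den) :
    shell ψ w ρ ρ.den ∩ tailNbhd ψ ρ.den ⊆ obstacle ψ ρ ρ.den := by
  rintro y ⟨⟨hleft, -⟩, s, hs, r, hr⟩
  have hs0 : 0 < s := ρ.den_pos.trans hs
  have hψq := hψ.pos ρ.den ρ.den_pos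
  have hψs := hψ.pos s hs0
  have hshell : 3 / 4 * ψ ρ.den ≤ y - ρ := by
    have := hN.width_le ρ.den hρ
    nlinarith
  refine ⟨s, hs, r, ?_, hr⟩
  by_contra! hrs
  rcases hrs.lt_or_eq with hlt | heq
  · have hgap : 1 / ((ρ.den : ℝ) * s) ≤ ρ - r / s := by
      have hne : (ρ.num : ℝ) / ρ.den ≠ r / s := by
        rw [← Rat.cast_def]
        exact hlt.ne'
      have habs := one_div_mul_le_abs_div_sub_div ρ.den_pos hs0 hne
      rwa [← Rat.cast_def, abs_of_pos (sub_pos.2 hlt)] at habs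
    have hsmall : 2 * ψ s ≤ 1 / ((ρ.den : ℝ) * s) := by
      have hprod := hN.psi_mul_le hψ (hρ.trans hs.le) hs.le
      rw [le_div_iff₀ (mul_pos (Nat.cast_pos.2 ρ.den_pos) (Nat.cast_pos.2 hs0))]
      linarith
    linarith [(abs_lt.1 hr).2]
  · have hle : 2 * ρ.den ≤ s := by
      obtain ⟨m, rfl⟩ := den_dvd_of_cast_eq_div heq.symm
      have hm : 2 ≤ m := by
        by_contra! hm
        interval_cases m <;> omega
      nlinarith
    have hsmall : (2 : ℕ) ^ 2 * ψ s ≤ ψ ρ.den := hψ.sq_mul_le two_pos ρ.den_pos hle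
    push_cast at hsmall
    rw [heq] at hr
    linarith [(abs_lt.1 hr).2]

theorem psi_le_abs_sub_of_ne {ρ : ℚ} {r : ℤ} {s : ℕ} (hs : 0 < s) (hne : (ρ : ℝ) ≠ r / s)
    (hψs : ρ.den * s * ψ s ≤ 1 / 2) {y : ℝ} (hy : |y - ρ| ≤ ψ s) : ψ s ≤ |y - r / s| := by
  have hsep : 1 / ((ρ.den : ℝ) * s) ≤ |(ρ : ℝ) - r / s| := by
    rw [Rat.cast_def] at hne ⊢
    exact one_div_mul_le_abs_div_sub_div ρ.den_pos hs hne
  have hsmall : 2 * ψ s ≤ 1 / ((ρ.den : ℝ) * s) := by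
    rw [le_div_iff₀ (mul_pos (Nat.cast_pos.2 ρ.den_pos) (Nat.cast_pos.2 hs))]
    linarith
  have htriangle := abs_sub_le (ρ : ℝ) y (r / s)
  rw [abs_sub_comm (ρ : ℝ) y] at htriangle
  linarith

theorem psi_le_abs_sub_of_lt_den (hψ : ApproxFun ψ) (hN : Threshold ψ w N) {ρ : ℚ} {s : ℕ}
    (hs : N ≤ s) (hlt : s < ρ.den) {r : ℤ} {x y : ℝ} (hx : 2 * ψ s ≤ |x - r / s|)
    (hxρ : |x - ρ| ≤ 1 / (ρ.den : ℝ) ^ 2) (hy : |y - ρ| ≤ ψ ρ.den) : ψ s ≤ |y - r / s| := by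
  have hs0 : 0 < s := hN.pos.trans_le hs
  have : (0 : ℝ) < ρ.den := Nat.cast_pos.2 ρ.den_pos
  rcases le_or_gt (ψ ρ.den + 1 / (ρ.den : ℝ) ^ 2) (ψ s) with hlarge | hsmall
  · have htriangle := (abs_sub_le x ρ (r / s)).trans (add_le_add_right (abs_sub_le _ y _) _)
    rw [abs_sub_comm (ρ : ℝ) y] at htriangle
    linarith
  · refine psi_le_abs_sub_of_ne hs0 (fun heq => ?_) ?_ (hy.trans (hψ.le_of_le hs0 hlt.le))
    · exact hlt.not_ge (Nat.le_of_dvd hs0 (den_dvd_of_cast_eq_div heq))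
    · have hqψ : (ρ.den : ℝ) ^ 2 * ψ s ≤ 2 := calc
        (ρ.den : ℝ) ^ 2 * ψ s ≤ ρ.den ^ 2 * (ψ ρ.den + 1 / (ρ.den : ℝ) ^ 2) := by gcongr
        _ = sqMul ψ ρ.den + 1 := by rw [sqMul]; field_simp
        _ ≤ 2 := by linarith [hN.sqMul_le ρ.den (hs.trans hlt.le)]
      refine le_of_sq_le_sq ?_ (by norm_num)
      calc (ρ.den * s * ψ s) ^ 2 = (ρ.den ^ 2 * ψ s) * sqMul ψ s := by rw [sqMul]; ring
        _ ≤ 2 * (1 / 100) := mul_le_mul hqψ (hN.sqMul_le s hs) (hψ.sqMul_nonneg s) zero_le_two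
        _ ≤ (1 / 2) ^ 2 := by norm_num

theorem le_abs_sub_of_mem_shell (hψ : ApproxFun ψ) (hN : Threshold ψ w N) {ρ : ℚ}
    (hρ : N ≤ ρ.den) {y : ℝ} (hy : y ∈ shell ψ w ρ ρ.den) (r : ℤ) :
    (1 - w ρ.den) * ψ ρ.den ≤ |y - r / ρ.den| := by
  have hψq := hψ.pos ρ.den ρ.den_pos
  have hw := hN.width_pos ρ.den hρ
  have hw4 := hN.width_le ρ.den hρ
  obtain ⟨hleft, hright⟩ := hy
  have hpos : 0 ≤ (1 - w ρ.den) * ψ ρ.den := mul_nonneg (by linarith) hψq.le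
  by_cases heq : (ρ : ℝ) = r / ρ.den
  · rw [← heq]
    exact (le_sub_iff_add_le'.2 hleft).trans (le_abs_self _)
  · refine le_trans ?_ (psi_le_abs_sub_of_ne (ψ := ψ) ρ.den_pos heq ?_ ?_)
    · nlinarith
    · linarith [hN.psi_mul_le hψ hρ le_rfl]
    · rw [abs_le]
      constructor <;> linarith

theorem Node.Good.good_ofRat (hψ : ApproxFun ψ) (hN : Threshold ψ w N) {v : Node}
    (hv : v.Good ψ w N) {ρ : ℚ} (hρ : N < ρ.den) (hρ0 : 0 ≤ ρ)
    (hfree : ¬ IsObstructed ψ w ρ ρ.den) (hleft : v.left ≤ ρ) (hright : ρ + ψ ρ.den ≤ v.right)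
    {x : ℝ} (hx : x ∉ tailNbhd ψ v.den) (hxρ : |x - ρ| ≤ 1 / (ρ.den : ℝ) ^ 2) :
    (Node.ofRat ψ w ρ).Good ψ w N := by
  have hψq := hψ.pos ρ.den ρ.den_pos
  have hw := hN.width_pos ρ.den hρ.le
  have hw4 := hN.width_le ρ.den hρ.le
  have hwψ : 0 < w ρ.den * ψ ρ.den := by positivity
  have hpos : 0 ≤ (1 - w ρ.den) * ψ ρ.den := mul_nonneg (by linarith) hψq.le
  refine ⟨hρ.le, add_nonneg (Rat.cast_nonneg.2 hρ0) hpos, ?_, hright.trans hv.right_le_one, ?_, ?_⟩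
  · simp only [Node.ofRat]
    linarith
  · rintro s hNs hsq r y ⟨hy₁, hy₂⟩
    simp only [Node.ofRat] at hsq hy₁ hy₂
    rcases le_or_gt s v.den with hsn | hsn
    · exact hv.far s hNs hsn r y ⟨by linarith, by linarith⟩
    rcases hsq.lt_or_eq with hlt | rfl
    · have hψs := hψ.pos s (hN.pos.trans hNs)
      have hwidth : (1 - w s) * ψ s ≤ ψ s := by nlinarith [hN.width_pos s hNs.le]
      have hfar : 2 * ψ s ≤ |x - r / s| := by
        by_contra! hnear
        exact hx ⟨s, hsn, r, hnear⟩
      exact hwidth.trans (psi_le_abs_sub_of_lt_den hψ hN hNs.le hlt hfar hxρ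
        (abs_le.2 ⟨by linarith, by linarith⟩))
    · exact le_abs_sub_of_mem_shell hψ hN hρ.le ⟨hy₁, hy₂⟩ r
  · refine le_measure_sdiff (ENNReal.ofReal_ne_top (r := w ρ.den * ψ ρ.den / 2)) ?_
      ((measure_mono (subset_inter inter_subset_left
        (shell_inter_tailNbhd_subset hψ hN hρ.le))).trans (not_lt.1 hfree))
    have hlength : (Node.ofRat ψ w ρ).right - (Node.ofRat ψ w ρ).left = w ρ.den * ψ ρ.den := by
      simp only [Node.ofRat]
      ring
    rw [Real.volume_Icc, hlength, ← ENNReal.ofReal_add (by positivity) (by positivity), add_halves]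

end

/-! ### Children of a node -/

/-- The points within `1/(q Q)` of a fraction of denominator `q < Q/100`. Away from them, Dirichlet
approximants of order `Q` have denominators comparable to `Q`. -/
def smallDenNbhd (Q : ℕ) : Set ℝ :=
  {y | ∃ q : ℕ, 0 < q ∧ 100 * q < Q ∧ ∃ p : ℤ, |y - p / q| ≤ 1 / (q * Q)}

theorem volume_Icc_inter_smallDenNbhd_le {a b : ℝ} (hab : a ≤ b) {Q : ℕ} (hQ : 0 < Q) :
    volume (Icc a b ∩ smallDenNbhd Q) ≤ ENNReal.ofReal
      ((b - a) / 50 + 6 * ((Q : ℝ)⁻¹ * ∑ q ∈ Finset.range Q, 1 / (q : ℝ))) := by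
  have : (0 : ℝ) < Q := Nat.cast_pos.2 hQ
  have : 0 ≤ b - a := sub_nonneg.2 hab
  have hcover : Icc a b ∩ smallDenNbhd Q ⊆ ⋃ q ∈ Finset.Ioc 0 (Q / 100),
      Icc a b ∩ {y | ∃ p : ℤ, |y - p / q| ≤ 1 / (q * Q)} := by
    rintro y ⟨hy, q, hq, hqQ, p, hp⟩
    exact mem_biUnion (Finset.mem_coe.2 (Finset.mem_Ioc.2 ⟨hq, by omega⟩)) ⟨hy, p, hp⟩
  have hterm : ∀ q ∈ Finset.Ioc 0 (Q / 100),
      volume (Icc a b ∩ {y | ∃ p : ℤ, |y - p / q| ≤ 1 / (q * Q)}) ≤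
        ENNReal.ofReal (2 * (b - a) / Q + 6 * ((Q : ℝ)⁻¹ * (1 / q))) := by
    intro q hq
    have hq0 := (Finset.mem_Ioc.1 hq).1
    have hq0' : (0 : ℝ) < q := Nat.cast_pos.2 hq0
    refine (volume_Icc_inter_near_fractions_le hab hq0 (by positivity) ?_).trans_eq
      (congrArg ENNReal.ofReal (by field_simp; ring))
    exact one_div_le_one_div_of_le hq0' (le_mul_of_one_le_right hq0'.le (Nat.one_le_cast.2 hQ))
  refine (measure_mono hcover).trans ((measure_biUnion_finset_le _ _).trans
    ((Finset.sum_le_sum hterm).trans ?_))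
  rw [← ENNReal.ofReal_sum_of_nonneg fun q _ => by positivity]
  refine ENNReal.ofReal_le_ofReal ?_
  rw [Finset.sum_add_distrib, Finset.sum_const, Nat.card_Ioc, Nat.sub_zero, nsmul_eq_mul,
    ← Finset.mul_sum, ← Finset.mul_sum]
  gcongr ?_ + 6 * (_ * ∑ q ∈ ?_, _)
  · calc ((Q / 100 : ℕ) : ℝ) * (2 * (b - a) / Q) ≤ Q / (100 : ℕ) * (2 * (b - a) / Q) := by
          gcongr
          exact Nat.cast_div_le
      _ = (b - a) / 50 := by
          push_cast
          field_simp
          ring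
  · intro q hq
    rw [Finset.mem_Ioc] at hq
    rw [Finset.mem_range]
    omega

theorem eventually_volume_Icc_inter_smallDenNbhd_le {a b : ℝ} (hab : a < b) :
    ∀ᶠ Q : ℕ in atTop, volume (Icc a b ∩ smallDenNbhd Q) ≤ ENNReal.ofReal ((b - a) / 16) := by
  have hcesaro : Tendsto (fun Q : ℕ => (Q : ℝ)⁻¹ * ∑ q ∈ Finset.range Q, 1 / (q : ℝ))
      atTop (𝓝 0) := tendsto_one_div_atTop_nhds_zero_nat.cesaro
  filter_upwards [hcesaro.eventually_lt_const (show (0 : ℝ) < (b - a) / 240 by linarith),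
    eventually_gt_atTop 0] with Q hsum hQ
  exact (volume_Icc_inter_smallDenNbhd_le hab.le hQ).trans
    (ENNReal.ofReal_le_ofReal (by linarith))

theorem finite_setOf_rat_den_le (Q : ℕ) : {ρ : ℚ | 0 ≤ ρ ∧ ρ < 1 ∧ ρ.den ≤ Q}.Finite := by
  refine ((finite_Icc (0 : ℤ) Q).image2 (fun (p : ℤ) (q : ℕ) => (p : ℚ) / q)
    (finite_Iic Q)).subset ?_
  rintro ρ ⟨hρ0, hρ1, hden⟩
  have hnum := Rat.num_nonneg.2 hρ0
  have hnum_lt := Rat.num_lt_denom_iff.2 hρ1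
  exact ⟨ρ.num, ⟨hnum, by omega⟩, ρ.den, hden, Rat.num_div_den ρ⟩

theorem one_div_sq_le_abs_sub {ρ σ : ℚ} (hne : ρ ≠ σ) {Q : ℕ} (hρ : ρ.den ≤ Q) (hσ : σ.den ≤ Q) :
    1 / (Q : ℝ) ^ 2 ≤ |(ρ : ℝ) - σ| := by
  have hne' : (ρ.num : ℝ) / ρ.den ≠ (σ.num : ℝ) / σ.den := by
    rw [← Rat.cast_def, ← Rat.cast_def]
    exact Rat.cast_injective.ne hne
  have hsep := one_div_mul_le_abs_div_sub_div ρ.den_pos σ.den_pos hne'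
  rw [← Rat.cast_def, ← Rat.cast_def] at hsep
  refine le_trans ?_ hsep
  have : (0 : ℝ) < ρ.den := Nat.cast_pos.2 ρ.den_pos
  have : (0 : ℝ) < σ.den := Nat.cast_pos.2 σ.den_pos
  rw [pow_two]
  gcongr

namespace Node

variable {ψ w : ℕ → ℝ} {N Q : ℕ} {v : Node} {ρ σ : ℚ}

theorem abs_sub_le_of_mem_ofRat (hψ : ApproxFun ψ) (hN : Threshold ψ w N) (hρ : N ≤ ρ.den) {x : ℝ}
    (hx : x ∈ Icc (ofRat ψ w ρ).left (ofRat ψ w ρ).right) : |x - ρ| ≤ ψ ρ.den := by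
  have := hN.width_le ρ.den hρ
  have hpos : 0 ≤ (1 - w ρ.den) * ψ ρ.den :=
    mul_nonneg (by linarith) (hψ.pos ρ.den ρ.den_pos).le
  obtain ⟨hleft, hright⟩ := hx
  simp only [ofRat] at hleft hright
  rw [abs_le]
  constructor <;> linarith

/-- The points of a node whose Dirichlet approximants of order `Q` are candidates for children. -/
def usable (ψ : ℕ → ℝ) (Q : ℕ) (v : Node) : Set ℝ :=
  Icc (v.left + (v.right - v.left) / 16) (v.right - (v.right - v.left) / 16) \
    (tailNbhd ψ v.den ∪ smallDenNbhd Q)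

theorem Good.le_volume_usable (hv : v.Good ψ w N)
    (hQ : volume (Icc v.left v.right ∩ smallDenNbhd Q) ≤
      ENNReal.ofReal ((v.right - v.left) / 16)) :
    ENNReal.ofReal ((v.right - v.left) / 4) ≤ volume (v.usable ψ Q) := by
  have hlr := hv.left_lt_right
  set ℓ := v.right - v.left
  have : 0 < ℓ := sub_pos.2 hlr
  have hremoved : volume (Ico v.left (v.left + ℓ / 16) ∪ (Ioc (v.right - ℓ / 16) v.right ∪
      Icc v.left v.right ∩ smallDenNbhd Q)) ≤ ENNReal.ofReal (ℓ / 4) := calc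
    _ ≤ ENNReal.ofReal (ℓ / 16) + (ENNReal.ofReal (ℓ / 16) + ENNReal.ofReal (ℓ / 16)) := by
        refine (measure_union_le _ _).trans (add_le_add ?_ ((measure_union_le _ _).trans
          (add_le_add ?_ hQ)))
        · rw [Real.volume_Ico, add_sub_cancel_left]
        · rw [Real.volume_Ioc, sub_sub_cancel]
    _ = ENNReal.ofReal (ℓ / 16 + (ℓ / 16 + ℓ / 16)) := by
        rw [ENNReal.ofReal_add, ENNReal.ofReal_add] <;> positivity
    _ ≤ ENNReal.ofReal (ℓ / 4) := ENNReal.ofReal_le_ofReal (by linarith)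
  refine (le_measure_sdiff (s := Icc v.left v.right \ tailNbhd ψ v.den) ENNReal.ofReal_ne_top ?_
    ((measure_mono inter_subset_right).trans hremoved)).trans (measure_mono ?_)
  · rw [← ENNReal.ofReal_add (by positivity) (by positivity)]
    convert hv.room using 2
    ring
  · rintro x ⟨⟨hx, htail⟩, hkept⟩
    simp only [mem_union, not_or] at hkept
    refine ⟨⟨?_, ?_⟩, ?_⟩
    · by_contra! hlt
      exact hkept.1 ⟨hx.1, hlt⟩
    · by_contra! hlt
      exact hkept.2.1 ⟨hlt, hx.2⟩
    · rintro (h | h)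
      · exact htail h
      · exact hkept.2.2 ⟨hx, h⟩

/-- The Dirichlet approximants of order `Q` of the usable points of a node. -/
def approximants (ψ : ℕ → ℝ) (Q : ℕ) (v : Node) : Set ℚ :=
  {ρ | ρ.den ≤ Q ∧ ∃ x ∈ v.usable ψ Q, |x - ρ| ≤ 1 / ((Q + 1) * ρ.den)}

theorem le_mul_den_of_mem_approximants (hρ : ρ ∈ v.approximants ψ Q) : Q ≤ 100 * ρ.den := by
  obtain ⟨hden, x, hx, hxρ⟩ := hρ
  by_contra! hlt
  refine hx.2 (Or.inr ⟨ρ.den, ρ.den_pos, hlt, ρ.num, ?_⟩)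
  have : (0 : ℝ) < ρ.den := Nat.cast_pos.2 ρ.den_pos
  have : (0 : ℝ) < Q := Nat.cast_pos.2 (ρ.den_pos.trans_le hden)
  rw [← Rat.cast_def]
  refine hxρ.trans ?_
  rw [mul_comm (ρ.den : ℝ)]
  gcongr
  linarith

theorem abs_sub_le_hundred_div_sq (hQ : 0 < Q) (hρ : ρ ∈ v.approximants ψ Q) {x : ℝ}
    (hx : |x - ρ| ≤ 1 / ((Q + 1) * ρ.den)) : |x - ρ| ≤ 100 / (Q : ℝ) ^ 2 := by
  have : (0 : ℝ) < Q := Nat.cast_pos.2 hQ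
  have hden : (Q : ℝ) ≤ 100 * ρ.den := by exact_mod_cast le_mul_den_of_mem_approximants hρ
  have hden0 : (0 : ℝ) < ρ.den := Nat.cast_pos.2 ρ.den_pos
  refine hx.trans ?_
  rw [div_le_div_iff₀ (by positivity) (by positivity)]
  nlinarith

theorem exists_usable_near (hρ : ρ ∈ v.approximants ψ Q) :
    ∃ x ∈ v.usable ψ Q, |x - ρ| ≤ 1 / (ρ.den : ℝ) ^ 2 ∧ |x - ρ| ≤ 100 / (Q : ℝ) ^ 2 := by
  obtain ⟨hden, x, hx, hxρ⟩ := id hρ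
  have : (0 : ℝ) < ρ.den := Nat.cast_pos.2 ρ.den_pos
  have : (ρ.den : ℝ) ≤ Q := Nat.cast_le.2 hden
  refine ⟨x, hx, hxρ.trans ?_, abs_sub_le_hundred_div_sq (ρ.den_pos.trans_le hden) hρ hxρ⟩
  rw [pow_two]
  gcongr
  linarith

/-- `Q` is so large that the approximants of order `Q` have denominators above the threshold `N`,
and that their shells are tiny compared with `1/Q²` and with the node. -/
structure Fine (ψ : ℕ → ℝ) (N Q : ℕ) (v : Node) : Prop where
  lt : 100 * N < Q
  sqMul_le : ∀ s : ℕ, Q ≤ 100 * s → sqMul ψ s ≤ 1 / 40000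
  length_le : 200 / (Q : ℝ) ^ 2 ≤ (v.right - v.left) / 16

theorem Good.eventually_fine (hψ : ApproxFun ψ) (hv : v.Good ψ w N) :
    ∀ᶠ Q : ℕ in atTop, v.Fine ψ N Q := by
  have hlength : 0 < v.right - v.left := sub_pos.2 hv.left_lt_right
  obtain ⟨m, hm⟩ := eventually_atTop.1
    (hψ.tendsto_sqMul.eventually_le_const (show (0 : ℝ) < 1 / 40000 by norm_num))
  have htendsto : Tendsto (fun Q : ℕ => 200 / (Q : ℝ) ^ 2) atTop (𝓝 0) :=
    tendsto_const_nhds.div_atTop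
      ((tendsto_pow_atTop two_ne_zero).comp tendsto_natCast_atTop_atTop)
  filter_upwards [eventually_gt_atTop (100 * N), eventually_gt_atTop (100 * m),
    htendsto.eventually_le_const (show 0 < (v.right - v.left) / 16 by positivity)]
    with Q hN hm' hQ
  exact ⟨hN, fun s hs => hm s (by omega), hQ⟩

theorem Fine.lt_den (h : v.Fine ψ N Q) (hρ : ρ ∈ v.approximants ψ Q) : N < ρ.den := by
  have := h.lt
  have := le_mul_den_of_mem_approximants hρ
  omega

theorem Fine.psi_den_le (h : v.Fine ψ N Q) (hψ : ApproxFun ψ) (hρ : ρ ∈ v.approximants ψ Q) :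
    ψ ρ.den ≤ 1 / (4 * (Q : ℝ) ^ 2) := by
  have hden := le_mul_den_of_mem_approximants hρ
  have hden' : (Q : ℝ) ≤ 100 * ρ.den := by exact_mod_cast hden
  have : (0 : ℝ) < Q := Nat.cast_pos.2 (ρ.den_pos.trans_le hρ.1)
  have := hψ.pos ρ.den ρ.den_pos
  rw [le_div_iff₀ (by positivity)]
  calc ψ ρ.den * (4 * (Q : ℝ) ^ 2) ≤ ψ ρ.den * (4 * (100 * ρ.den) ^ 2) := by gcongr
    _ = 40000 * sqMul ψ ρ.den := by rw [sqMul]; ring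
    _ ≤ 1 := by linarith [h.sqMul_le ρ.den hden]

theorem Fine.left_le_and_add_psi_le_right (h : v.Fine ψ N Q) (hψ : ApproxFun ψ)
    (hρ : ρ ∈ v.approximants ψ Q) : v.left ≤ ρ ∧ ρ + ψ ρ.den ≤ v.right := by
  obtain ⟨x, ⟨⟨hleft, hright⟩, -⟩, -, hx⟩ := exists_usable_near hρ
  have hψρ := h.psi_den_le hψ hρ
  have hQ0 : 0 < (Q : ℝ) ^ 2 := pow_pos (Nat.cast_pos.2 (ρ.den_pos.trans_le hρ.1)) 2
  have hsmall : 1 / (4 * (Q : ℝ) ^ 2) ≤ 100 / (Q : ℝ) ^ 2 := by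
    rw [div_le_div_iff₀ (by positivity) hQ0]
    linarith
  have hdouble : 200 / (Q : ℝ) ^ 2 = 100 / (Q : ℝ) ^ 2 + 100 / (Q : ℝ) ^ 2 := by ring
  have hlength := h.length_le
  obtain ⟨hx₁, hx₂⟩ := abs_le.1 hx
  constructor <;> linarith

/-- The intervals of two nodes are at least `1/(2Q²)` apart, half of the least distance between two
fractions of denominator at most `Q`. -/
def Separated (Q : ℕ) (u v : Node) : Prop :=
  ∀ x ∈ Icc u.left u.right, ∀ y ∈ Icc v.left v.right, 1 / (2 * (Q : ℝ) ^ 2) ≤ |x - y|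

theorem Fine.separated_ofRat (h : v.Fine ψ N Q) (hψ : ApproxFun ψ) (hN : Threshold ψ w N)
    (hρ : ρ ∈ v.approximants ψ Q) (hσ : σ ∈ v.approximants ψ Q) (hne : ρ ≠ σ) :
    (ofRat ψ w ρ).Separated Q (ofRat ψ w σ) := by
  intro x hx y hy
  have hsep := one_div_sq_le_abs_sub hne hρ.1 hσ.1
  have hxρ := (abs_sub_le_of_mem_ofRat hψ hN (h.lt_den hρ).le hx).trans (h.psi_den_le hψ hρ)
  have hyσ := (abs_sub_le_of_mem_ofRat hψ hN (h.lt_den hσ).le hy).trans (h.psi_den_le hψ hσ)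
  have htriangle := (abs_sub_le (ρ : ℝ) x σ).trans (add_le_add_right (abs_sub_le x y σ) _)
  rw [abs_sub_comm (ρ : ℝ) x] at htriangle
  have hhalf : 1 / (2 * (Q : ℝ) ^ 2) = 1 / (Q : ℝ) ^ 2 / 2 := by field_simp
  have hquarter : 1 / (4 * (Q : ℝ) ^ 2) = 1 / (Q : ℝ) ^ 2 / 4 := by field_simp
  linarith

theorem Good.nonneg_and_lt_one (hv : v.Good ψ w N) (hψ : ApproxFun ψ) (h : v.Fine ψ N Q)
    (hρ : ρ ∈ v.approximants ψ Q) : 0 ≤ ρ ∧ ρ < 1 := by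
  obtain ⟨hleft, hright⟩ := h.left_le_and_add_psi_le_right hψ hρ
  have hρ1 : (ρ : ℝ) < 1 := by linarith [hψ.pos ρ.den ρ.den_pos, hv.right_le_one]
  exact ⟨Rat.cast_nonneg.1 (hv.left_nonneg.trans hleft), by exact_mod_cast hρ1⟩

/-- The shell of `ρ` is a good node inside `v`, and the denominator of `ρ` is comparable to `Q`. -/
structure IsChild (ψ w : ℕ → ℝ) (N Q : ℕ) (v : Node) (ρ : ℚ) : Prop where
  le_mul_den : Q ≤ 100 * ρ.den
  den_le : ρ.den ≤ Q
  left_le : v.left ≤ (ofRat ψ w ρ).left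
  right_le : (ofRat ψ w ρ).right ≤ v.right
  good : (ofRat ψ w ρ).Good ψ w N

theorem Good.isChild_of_mem_approximants (hv : v.Good ψ w N) (hψ : ApproxFun ψ)
    (hN : Threshold ψ w N) (h : v.Fine ψ N Q) (hρ : ρ ∈ v.approximants ψ Q)
    (hfree : ¬ IsObstructed ψ w ρ ρ.den) : v.IsChild ψ w N Q ρ := by
  have hNρ := h.lt_den hρ
  obtain ⟨hleft, hright⟩ := h.left_le_and_add_psi_le_right hψ hρ
  obtain ⟨x, hx, hxρ, -⟩ := exists_usable_near hρ
  have hpos : 0 ≤ (1 - w ρ.den) * ψ ρ.den :=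
    mul_nonneg (by linarith [hN.width_le ρ.den hNρ.le]) (hψ.pos ρ.den ρ.den_pos).le
  exact ⟨le_mul_den_of_mem_approximants hρ, hρ.1, hleft.trans (le_add_of_nonneg_right hpos),
    hright, hv.good_ofRat hψ hN hNρ (hv.nonneg_and_lt_one hψ h hρ).1 hfree hleft hright
      (fun htail => hx.2 (Or.inl htail)) hxρ⟩

/-- By Dirichlet's theorem, the balls of radius `100/Q²` around the approximants cover the usable
points. -/
theorem le_card_of_approximants_subset (hQ : 0 < Q)
    (hvol : ENNReal.ofReal ((v.right - v.left) / 4) ≤ volume (v.usable ψ Q)) {F : Finset ℚ}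
    (hF : v.approximants ψ Q ⊆ F) : (v.right - v.left) * (Q : ℝ) ^ 2 / 800 ≤ F.card := by
  have : (0 : ℝ) < Q := Nat.cast_pos.2 hQ
  have hcover : v.usable ψ Q ⊆ ⋃ ρ ∈ F, Metric.closedBall (ρ : ℝ) (100 / (Q : ℝ) ^ 2) := by
    intro x hx
    obtain ⟨ρ, hxρ, hden⟩ := Real.exists_rat_abs_sub_le_and_den_le x hQ
    have hρ : ρ ∈ v.approximants ψ Q := ⟨hden, x, hx, hxρ⟩
    refine mem_biUnion (hF hρ) ?_
    rw [Metric.mem_closedBall, Real.dist_eq]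
    exact abs_sub_le_hundred_div_sq hQ hρ hxρ
  have hle := hvol.trans ((measure_mono hcover).trans (measure_biUnion_finset_le _ _))
  simp only [Real.volume_closedBall, Finset.sum_const, nsmul_eq_mul] at hle
  rw [← ENNReal.ofReal_natCast, ← ENNReal.ofReal_mul (Nat.cast_nonneg _),
    ENNReal.ofReal_le_ofReal_iff (by positivity), ← mul_div_assoc, ← mul_div_assoc,
    le_div_iff₀ (by positivity)] at hle
  linarith

theorem Good.eventually_exists_children (hv : v.Good ψ w N) (hψ : ApproxFun ψ)
    (hN : Threshold ψ w N) (hw : DecaysSlowly w) :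
    ∀ᶠ Q : ℕ in atTop, ∃ F : Finset ℚ, (v.right - v.left) * (Q : ℝ) ^ 2 / 1600 ≤ F.card ∧
      (∀ ρ ∈ F, v.IsChild ψ w N Q ρ) ∧
      ∀ ρ ∈ F, ∀ σ ∈ F, ρ ≠ σ → (ofRat ψ w ρ).Separated Q (ofRat ψ w σ) := by
  classical
  have hlength : 0 < v.right - v.left := sub_pos.2 hv.left_lt_right
  filter_upwards [eventually_volume_Icc_inter_smallDenNbhd_le hv.left_lt_right,
    eventually_card_rat_isObstructed_le hψ hN hw (show 0 < (v.right - v.left) / 1600 by positivity),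
    hv.eventually_fine hψ] with Q hsmallDen hobstructed hfine
  obtain ⟨F, hF⟩ : ∃ F : Finset ℚ, (F : Set ℚ) = v.approximants ψ Q :=
    ((finite_setOf_rat_den_le Q).subset fun ρ hρ =>
      ⟨(hv.nonneg_and_lt_one hψ hfine hρ).1, (hv.nonneg_and_lt_one hψ hfine hρ).2,
        hρ.1⟩).exists_finset_coe
  have happrox : ∀ ρ ∈ F, ρ ∈ v.approximants ψ Q := fun ρ hρ => hF ▸ Finset.mem_coe.2 hρ
  refine ⟨F.filter fun ρ => ¬ IsObstructed ψ w ρ ρ.den, ?_, fun ρ hρ => ?_,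
    fun ρ hρ σ hσ hne => ?_⟩
  · have hcard := le_card_of_approximants_subset (Nat.zero_lt_of_lt hfine.lt)
      (hv.le_volume_usable hsmallDen) hF.ge
    have hbad := hobstructed (F.filter fun ρ => IsObstructed ψ w ρ ρ.den) fun ρ hρ => by
      rw [Finset.mem_filter] at hρ
      obtain ⟨hρ0, hρ1⟩ := hv.nonneg_and_lt_one hψ hfine (happrox ρ hρ.1)
      exact ⟨hρ0, hρ1, (happrox ρ hρ.1).1, le_mul_den_of_mem_approximants (happrox ρ hρ.1), hρ.2⟩
    have hsplit : ((F.filter fun ρ : ℚ => IsObstructed ψ w ρ ρ.den).card : ℝ) +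
        (F.filter fun ρ : ℚ => ¬ IsObstructed ψ w ρ ρ.den).card = F.card := by
      exact_mod_cast Finset.card_filter_add_card_filter_not _
    linarith
  · rw [Finset.mem_filter] at hρ
    exact hv.isChild_of_mem_approximants hψ hN hfine (happrox ρ hρ.1) hρ.2
  · rw [Finset.mem_filter] at hρ hσ
    exact hfine.separated_ofRat hψ hN (happrox ρ hρ.1) (happrox σ hσ.1) hne

end Node

/-! ### Levels of the Cantor construction -/

theorem div_lt_and_mod_lt {m n i : ℕ} (hi : i < m * n) : i / n < m ∧ i % n < n :=
  have hn : 0 < n := Nat.pos_of_mul_pos_left (Nat.zero_lt_of_lt hi)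
  ⟨(Nat.div_lt_iff_lt_mul hn).2 hi, Nat.mod_lt i hn⟩

theorem exists_seq_of_le_card {α : Type*} [Nonempty α] {F : Finset α} {n : ℕ} (hn : n ≤ F.card) :
    ∃ f : ℕ → α, (∀ j < n, f j ∈ F) ∧ InjOn f (Iio n) := by
  obtain ⟨f, hmaps, hinj⟩ := (finite_Iio n).exists_injOn_of_encard_le (t := (F : Set α)) (by
    rw [Set.encard_coe_eq_coe_finsetCard, ← Finset.coe_Iio, Set.encard_coe_eq_coe_finsetCard,
      Nat.card_Iio]
    exact_mod_cast hn)
  exact ⟨f, fun j hj => hmaps hj, hinj⟩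

/-- One level of the Cantor construction: the nodes `node i` for `i < card`. They are obtained by
splitting each node of the previous level into `children` nodes of denominator at most `order`, so
that `node i` is a child of the previous `node (i / children)`; `length` is a lower bound for the
lengths of the nodes. -/
structure Level where
  card : ℕ
  children : ℕ
  order : ℕ
  length : ℝ
  node : ℕ → Node

namespace Level

variable {ψ w : ℕ → ℝ} {N n Q : ℕ} {t s θ ℓ : ℝ} {L : Level}

/-- All nodes of the level are good, and they are as long as announced. -/
structure Valid (ψ w : ℕ → ℝ) (N : ℕ) (L : Level) : Prop where
  card_pos : 0 < L.card
  order_pos : 0 < L.order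
  length_pos : 0 < L.length
  good : ∀ i < L.card, (L.node i).Good ψ w N
  length_le : ∀ i < L.card, L.length ≤ (L.node i).right - (L.node i).left

/-- `L'` splits the nodes of `L`. The last two fields give the mass distribution its exponent `t`;
the factor `6400` comes from the number `≈ length · Q² / 3200` of children and their separation
`1/(2Q²)`. -/
structure Refines (ψ : ℕ → ℝ) (t : ℝ) (L L' : Level) : Prop where
  children_pos : 0 < L'.children
  card_eq : L'.card = L.card * L'.children
  order_lt : L.order < L'.order
  left_le : ∀ i < L'.card, (L.node (i / L'.children)).left ≤ (L'.node i).left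
  right_le : ∀ i < L'.card, (L'.node i).right ≤ (L.node (i / L'.children)).right
  order_lt_den : ∀ i < L'.card, L.order < (L'.node i).den
  near : ∀ i < L'.card, ∃ p : ℤ, ∀ x ∈ Icc (L'.node i).left (L'.node i).right,
    |x - p / (L'.node i).den| ≤ ψ (L'.node i).den
  separated : ∀ i < L'.card, ∀ j < L'.card, i ≠ j → i / L'.children = j / L'.children →
    (L'.node i).Separated L'.order (L'.node j)
  le_card_mul : 2 ≤ L'.card * (L'.length / 6400) ^ t
  le_gap_mul : L.length / 6400 ≤ 1 / (2 * (L'.order : ℝ) ^ 2) * L'.children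

/-- The level whose nodes are the shells of the rational numbers `f i j`, for `i < L.card` and
`j < n`. -/
noncomputable def split (ψ w : ℕ → ℝ) (n Q : ℕ) (ℓ : ℝ) (f : ℕ → ℕ → ℚ) (L : Level) : Level where
  card := L.card * n
  children := n
  order := Q
  length := ℓ
  node i := Node.ofRat ψ w (f (i / n) (i % n))

theorem Valid.split (hL : L.Valid ψ w N) (hn : 0 < n) (hQ : 0 < Q) (hℓ : 0 < ℓ)
    (hlength : ∀ q : ℕ, Q ≤ 100 * q → q ≤ Q → ℓ ≤ w q * ψ q) {f : ℕ → ℕ → ℚ}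
    (hf : ∀ i < L.card, ∀ j < n, (L.node i).IsChild ψ w N Q (f i j)) :
    (L.split ψ w n Q ℓ f).Valid ψ w N where
  card_pos := Nat.mul_pos hL.card_pos hn
  order_pos := hQ
  length_pos := hℓ
  good i hi := (hf _ (div_lt_and_mod_lt hi).1 _ (div_lt_and_mod_lt hi).2).good
  length_le i hi := by
    have hchild := hf _ (div_lt_and_mod_lt hi).1 _ (div_lt_and_mod_lt hi).2
    have := hlength _ hchild.le_mul_den hchild.den_le
    simp only [Level.split, Node.ofRat]
    linarith

theorem Valid.refines_split (hL : L.Valid ψ w N) (hψ : ApproxFun ψ) (hN : Threshold ψ w N)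
    (hn : 0 < n) (hQ : 100 * L.order < Q) {f : ℕ → ℕ → ℚ}
    (hf : ∀ i < L.card, ∀ j < n, (L.node i).IsChild ψ w N Q (f i j))
    (hsep : ∀ i < L.card, ∀ j < n, ∀ j' < n, j ≠ j' →
      (Node.ofRat ψ w (f i j)).Separated Q (Node.ofRat ψ w (f i j')))
    (hgrow : 2 ≤ n * (ℓ / 6400) ^ t) (hgap : L.length / 3200 * Q ^ 2 ≤ n) :
    L.Refines ψ t (L.split ψ w n Q ℓ f) where
  children_pos := hn
  card_eq := rfl
  order_lt := by
    simp only [Level.split]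
    omega
  left_le i hi := (hf _ (div_lt_and_mod_lt hi).1 _ (div_lt_and_mod_lt hi).2).left_le
  right_le i hi := (hf _ (div_lt_and_mod_lt hi).1 _ (div_lt_and_mod_lt hi).2).right_le
  order_lt_den i hi := by
    have := (hf _ (div_lt_and_mod_lt hi).1 _ (div_lt_and_mod_lt hi).2).le_mul_den
    simp only [Level.split, Node.ofRat]
    omega
  near i hi := by
    have hgood := (hf _ (div_lt_and_mod_lt hi).1 _ (div_lt_and_mod_lt hi).2).good
    refine ⟨(f (i / n) (i % n)).num, fun x hx => ?_⟩
    have hx' := Node.abs_sub_le_of_mem_ofRat hψ hN hgood.le_den hx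
    rwa [Rat.cast_def] at hx'
  separated i hi j hj hne hdiv := by
    simp only [Level.split] at hdiv ⊢
    rw [← hdiv]
    refine hsep _ (div_lt_and_mod_lt hi).1 _ (div_lt_and_mod_lt hi).2 _ (div_lt_and_mod_lt hj).2
      fun hmod => hne ?_
    rw [← Nat.div_add_mod i n, ← Nat.div_add_mod j n, hdiv, hmod]
  le_card_mul := by
    have hcard : (n : ℝ) ≤ (L.card * n : ℕ) :=
      Nat.cast_le.2 (Nat.le_mul_of_pos_left n hL.card_pos)
    have hpow : 0 ≤ (ℓ / 6400) ^ t := by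
      by_contra! hneg
      nlinarith [Nat.cast_nonneg (α := ℝ) n]
    exact hgrow.trans (mul_le_mul_of_nonneg_right hcard hpow)
  le_gap_mul := by
    have hQ0 : (0 : ℝ) < Q := Nat.cast_pos.2 (by omega)
    simp only [Level.split]
    calc L.length / 6400 = 1 / (2 * (Q : ℝ) ^ 2) * (L.length / 3200 * Q ^ 2) := by
          field_simp
          ring
      _ ≤ 1 / (2 * (Q : ℝ) ^ 2) * n := by gcongr

theorem Valid.eventually_exists_children (hL : L.Valid ψ w N) (hψ : ApproxFun ψ)
    (hN : Threshold ψ w N) (hw : DecaysSlowly w) :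
    ∀ᶠ Q : ℕ in atTop, ∀ n : ℕ, (n : ℝ) ≤ L.length / 1600 * Q ^ 2 → ∃ f : ℕ → ℕ → ℚ,
      (∀ i < L.card, ∀ j < n, (L.node i).IsChild ψ w N Q (f i j)) ∧
      ∀ i < L.card, ∀ j < n, ∀ j' < n, j ≠ j' →
        (Node.ofRat ψ w (f i j)).Separated Q (Node.ofRat ψ w (f i j')) := by
  filter_upwards [(Finset.range L.card).eventually_all.2 fun i hi =>
    (hL.good i (Finset.mem_range.1 hi)).eventually_exists_children hψ hN hw] with Q hQ n hn
  have hseq : ∀ i, ∃ f : ℕ → ℚ, i < L.card →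
      (∀ j < n, (L.node i).IsChild ψ w N Q (f j)) ∧ ∀ j < n, ∀ j' < n, j ≠ j' →
        (Node.ofRat ψ w (f j)).Separated Q (Node.ofRat ψ w (f j')) := by
    intro i
    by_cases hi : i < L.card
    · obtain ⟨F, hcard, hchild, hsep⟩ := hQ i (Finset.mem_range.2 hi)
      have hnF : n ≤ F.card := by
        have hlength := hL.length_le i hi
        have hle : (n : ℝ) ≤ F.card := calc
          (n : ℝ) ≤ L.length / 1600 * Q ^ 2 := hn
          _ ≤ ((L.node i).right - (L.node i).left) / 1600 * Q ^ 2 := by gcongr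
          _ = ((L.node i).right - (L.node i).left) * Q ^ 2 / 1600 := by ring
          _ ≤ F.card := hcard
        exact_mod_cast hle
      obtain ⟨f, hf, hinj⟩ := exists_seq_of_le_card hnF
      exact ⟨f, fun _ => ⟨fun j hj => hchild _ (hf j hj), fun j hj j' hj' hne =>
        hsep _ (hf j hj) _ (hf j' hj') (hinj.ne hj hj' hne)⟩⟩
    · exact ⟨0, fun h => absurd h hi⟩
  choose f hf using hseq
  exact ⟨f, fun i hi => (hf i hi).1, fun i hi => (hf i hi).2⟩

theorem eventually_rpow_neg_le_mul (hψ : ApproxFun ψ) (hw : DecaysSlowly w) (hθ : 2 / s < θ) :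
    ∀ᶠ Q : ℕ in atTop, (Q : ℝ) ^ (-2 / s) < ψ Q →
      ∀ q : ℕ, Q ≤ 100 * q → q ≤ Q → (Q : ℝ) ^ (-θ) ≤ w q * ψ q := by
  obtain ⟨m, hm⟩ := eventually_atTop.1 (hw (θ - 2 / s) (sub_pos.2 hθ))
  filter_upwards [eventually_gt_atTop (100 * m)] with Q hQm hQ q hQq hqQ
  have hq : 0 < q := by omega
  have hQ0 : (0 : ℝ) < Q := Nat.cast_pos.2 (by omega)
  have hψq : (Q : ℝ) ^ (-2 / s) ≤ ψ q := hQ.le.trans (hψ.le_of_le hq hqQ)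
  have hwq : (Q : ℝ) ^ (-(θ - 2 / s)) ≤ w q :=
    (Real.rpow_le_rpow_of_nonpos (Nat.cast_pos.2 hq) (Nat.cast_le.2 hqQ)
      (by linarith)).trans (hm q (by omega))
  calc (Q : ℝ) ^ (-θ) = (Q : ℝ) ^ (-(θ - 2 / s)) * (Q : ℝ) ^ (-2 / s) := by
        rw [← Real.rpow_add hQ0]
        congr 1
        ring
    _ ≤ w q * ψ q := mul_le_mul hwq hψq (by positivity) (le_trans (by positivity) hwq)

theorem eventually_two_le_mul_rpow (hℓ : 0 < ℓ) (hθt : θ * t < 2) :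
    ∀ᶠ Q : ℕ in atTop, 2 ≤ ℓ / 3200 * (Q : ℝ) ^ 2 * ((Q : ℝ) ^ (-θ) / 6400) ^ t := by
  have htendsto : Tendsto (fun Q : ℕ => ℓ / 3200 * (1 / 6400) ^ t * (Q : ℝ) ^ (2 - θ * t))
      atTop atTop :=
    ((tendsto_rpow_atTop (by linarith)).comp tendsto_natCast_atTop_atTop).const_mul_atTop
      (by positivity)
  filter_upwards [htendsto.eventually_ge_atTop 2, eventually_gt_atTop 0] with Q hQ hQpos
  have hQ0 : (0 : ℝ) < Q := Nat.cast_pos.2 hQpos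
  have hpow : ((Q : ℝ) ^ (-θ) / 6400) ^ t = (1 / 6400) ^ t * (Q : ℝ) ^ (-(θ * t)) := by
    rw [div_eq_mul_one_div, Real.mul_rpow (by positivity) (by norm_num), ← Real.rpow_mul hQ0.le,
      neg_mul, mul_comm]
  calc 2 ≤ ℓ / 3200 * (1 / 6400) ^ t * (Q : ℝ) ^ (2 - θ * t) := hQ
    _ = ℓ / 3200 * Q ^ 2 * ((Q : ℝ) ^ (-θ) / 6400) ^ t := by
      rw [hpow, sub_eq_add_neg, Real.rpow_add hQ0, Real.rpow_two]
      ring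

theorem Valid.exists_refines (hL : L.Valid ψ w N) (hψ : ApproxFun ψ) (hN : Threshold ψ w N)
    (hw : DecaysSlowly w) (ht : 0 < t) (hts : t < s)
    (hfreq : ∃ᶠ Q : ℕ in atTop, (Q : ℝ) ^ (-2 / s) < ψ Q) :
    ∃ L' : Level, L'.Valid ψ w N ∧ L.Refines ψ t L' := by
  have hℓ := hL.length_pos
  obtain ⟨θ, hsθ, hθt⟩ := exists_between (div_lt_div_of_pos_left two_pos ht hts)
  rw [lt_div_iff₀ ht] at hθt
  have hmany : ∀ᶠ Q : ℕ in atTop, 1 ≤ L.length / 3200 * (Q : ℝ) ^ 2 :=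
    (((tendsto_pow_atTop two_ne_zero).comp tendsto_natCast_atTop_atTop).const_mul_atTop
      (show 0 < L.length / 3200 by positivity)).eventually_ge_atTop 1
  obtain ⟨Q, hψQ, hchildren, hlength, hgrow, hmanyQ, horder⟩ := (hfreq.and_eventually
    ((hL.eventually_exists_children hψ hN hw).and ((eventually_rpow_neg_le_mul hψ hw hsθ).and
      ((eventually_two_le_mul_rpow hℓ hθt).and
        (hmany.and (eventually_gt_atTop (100 * L.order))))))).exists
  have hQ : 0 < Q := Nat.zero_lt_of_lt horder
  have : (0 : ℝ) < Q := Nat.cast_pos.2 hQ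
  set n := ⌊L.length / 1600 * (Q : ℝ) ^ 2⌋₊
  have hn : L.length / 3200 * (Q : ℝ) ^ 2 ≤ n := by
    linarith [Nat.lt_floor_add_one (L.length / 1600 * (Q : ℝ) ^ 2)]
  have hnpos : 0 < n := Nat.cast_pos.1 (zero_lt_one.trans_le (hmanyQ.trans hn))
  obtain ⟨f, hf, hsep⟩ := hchildren n (Nat.floor_le (by positivity))
  exact ⟨L.split ψ w n Q (Q ^ (-θ)) f, hL.split hnpos hQ (by positivity) (hlength hψQ) hf,
    hL.refines_split hψ hN hnpos horder hf hsep (hgrow.trans (by gcongr)) hn⟩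

theorem strictMono_order {lev : ℕ → Level} (hlev : ∀ k, (lev k).Refines ψ t (lev (k + 1))) :
    StrictMono fun k => (lev k).order :=
  strictMono_nat_of_lt_succ fun k => (hlev k).order_lt

/-- The Cantor scheme formed by successive levels, whose gaps are the separations `1/(2Q²)`. -/
noncomputable def cantorScheme (lev : ℕ → Level) (hcard : (lev 0).card = 1)
    (hvalid : ∀ k, (lev k).Valid ψ w N) (hlev : ∀ k, (lev k).Refines ψ t (lev (k + 1))) :
    CantorScheme where
  card k := (lev k).card
  children k := (lev (k + 1)).children
  left k i := ((lev k).node i).left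
  right k i := ((lev k).node i).right
  gap k := 1 / (2 * ((lev k).order : ℝ) ^ 2)
  card_zero := hcard
  card_succ k := (hlev k).card_eq
  children_pos k := (hlev k).children_pos
  left_le_right k i hi := ((hvalid k).good i hi).left_lt_right.le
  left_mono k := (hlev k).left_le
  right_anti k := (hlev k).right_le
  gap_pos k := by
    have := (hvalid k).order_pos
    positivity
  gap_antitone k m hkm := by
    have := (hvalid k).order_pos
    have := (strictMono_order hlev).monotone hkm
    dsimp only at this ⊢
    gcongr
  tendsto_gap := tendsto_const_nhds.div_atTop <| Tendsto.const_mul_atTop two_pos <|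
    (tendsto_pow_atTop two_ne_zero).comp
      (tendsto_natCast_atTop_atTop.comp (strictMono_order hlev).tendsto_atTop)
  siblings_separated k := (hlev k).separated

theorem exists_seq_refines (hψ : ApproxFun ψ) (hN : Threshold ψ w N) (hw : DecaysSlowly w)
    (hroot : Node.Good ψ w N ⟨0, 1, N⟩) (ht : 0 < t) (hts : t < s)
    (hfreq : ∃ᶠ Q : ℕ in atTop, (Q : ℝ) ^ (-2 / s) < ψ Q) :
    ∃ lev : ℕ → Level, (lev 0).card = 1 ∧ (∀ k, (lev k).Valid ψ w N) ∧
      ∀ k, (lev k).Refines ψ t (lev (k + 1)) := by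
  choose! next hnext hrefines using fun (L : Level) (hL : L.Valid ψ w N) =>
    hL.exists_refines hψ hN hw ht hts hfreq
  let root : Level := ⟨1, 1, 1, 1, fun _ => ⟨0, 1, N⟩⟩
  have hvalid : ∀ k, (next^[k] root).Valid ψ w N := by
    intro k
    induction k with
    | zero => exact ⟨one_pos, one_pos, one_pos, fun _ _ => hroot, fun _ _ => (sub_zero _).ge⟩
    | succ k ih =>
      rw [Function.iterate_succ_apply']
      exact hnext _ ih
  refine ⟨fun k => next^[k] root, rfl, hvalid, fun k => ?_⟩
  dsimp only
  rw [Function.iterate_succ_apply']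
  exact hrefines _ (hvalid k)

end Level

section

variable {ψ w : ℕ → ℝ} {N : ℕ} {t s : ℝ}

theorem ApproxFun.exists_threshold (hψ : ApproxFun ψ) (hw : Tendsto w atTop (𝓝 0))
    (hwpos : ∀ᶠ q in atTop, 0 < w q) :
    ∃ N, Threshold ψ w N ∧ Node.Good ψ w N ⟨0, 1, N⟩ := by
  have htail := ((tendsto_sum_nat_add fun q : ℕ => (q : ℝ) * ψ q).comp
    (tendsto_add_atTop_nat 1)).eventually_le_const (show (0 : ℝ) < 1 / 32 by norm_num)
  obtain ⟨m, hm⟩ := eventually_atTop.1 (hwpos.and ((hw.eventually_le_const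
    (show (0 : ℝ) < 1 / 4 by norm_num)).and
      (hψ.tendsto_sqMul.eventually_le_const (show (0 : ℝ) < 1 / 100 by norm_num))))
  obtain ⟨N, hN, hmN⟩ := (htail.and (eventually_gt_atTop m)).exists
  have hthreshold : Threshold ψ w N :=
    { pos := by omega
      width_pos := fun q hq => (hm q (by omega)).1
      width_le := fun q hq => (hm q (by omega)).2.1
      sqMul_le := fun q hq => (hm q (by omega)).2.2 }
  exact ⟨N, hthreshold, Node.good_root hψ hthreshold hN⟩

theorem le_dimH_of_frequently_rpow_lt (hψ : ApproxFun ψ) (hN : Threshold ψ w N)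
    (hw : DecaysSlowly w) (hroot : Node.Good ψ w N ⟨0, 1, N⟩) (ht : 0 < t) (ht1 : t ≤ 1)
    (hts : t < s) (hfreq : ∃ᶠ Q : ℕ in atTop, (Q : ℝ) ^ (-2 / s) < ψ Q) {E : Set ℝ}
    (hE : ∀ x : ℝ, (∀ q : ℕ, N < q → ∀ r : ℤ, (1 - w q) * ψ q ≤ |x - r / q|) →
      (∀ m : ℕ, ∃ q : ℕ, m < q ∧ ∃ p : ℤ, |x - p / q| ≤ ψ q) → x ∈ E) :
    ENNReal.ofReal t ≤ dimH E := by
  obtain ⟨lev, hcard, hvalid, hlev⟩ :=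
    Level.exists_seq_refines hψ hN hw hroot ht hts hfreq
  have hmono := Level.strictMono_order hlev
  refine (Level.cantorScheme lev hcard hvalid hlev).le_dimH ht ht1 (fun k hk => ?_)
    fun x hx => hE x (fun q hq r => ?_) fun m => ?_
  · obtain ⟨k, rfl⟩ := Nat.exists_eq_add_of_le' hk
    have hgap := (hlev (k + 1)).le_gap_mul
    have hlength := (hvalid (k + 1)).length_pos
    refine (hlev k).le_card_mul.trans ?_
    dsimp only [Level.cantorScheme]
    gcongr
  · obtain ⟨i, hi, hxi⟩ := hx (q + 1)
    exact ((hvalid (q + 1)).good i hi).far q hq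
      ((hmono.le_apply (x := q)).trans ((hlev q).order_lt_den i hi).le) r x hxi
  · obtain ⟨i, hi, hxi⟩ := hx (m + 1)
    obtain ⟨p, hp⟩ := (hlev m).near i hi
    exact ⟨_, (hmono.le_apply (x := m)).trans_lt ((hlev m).order_lt_den i hi), p, hp x hxi⟩

end

/-! ### Comparison of the four sets -/

section

variable {Ψ ω : ℝ → ℝ} {x : ℝ}

theorem mem_WSet_of_forall_exists (h : ∀ m : ℕ, ∃ q : ℕ, m < q ∧ ∃ p : ℤ, |x - p / q| ≤ Ψ q) :
    x ∈ WSet Ψ := by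
  intro hfinite
  obtain ⟨m, hm⟩ := (hfinite.image Prod.snd).bddAbove
  obtain ⟨q, hmq, p, hp⟩ := h m
  exact hmq.not_ge (hm ⟨(p, q), ⟨Nat.zero_lt_of_lt hmq, hp⟩, rfl⟩)

/-- A rational number coincides with fractions of arbitrarily large denominator, which violates the
lower bound in `E(Ψ, ω)`. -/
theorem irrational_of_mem_ESet (hΨ : ∀ q : ℕ, 0 < q → 0 < Ψ q) (hω : ∀ᶠ q : ℕ in atTop, ω q < 1)
    (hx : x ∈ ESet Ψ ω) : Irrational x := by
  rintro ⟨ρ, rfl⟩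
  obtain ⟨-, Q, hQ⟩ := hx
  obtain ⟨m, hm, hQm, hmpos⟩ :=
    (((tendsto_id.atTop_mul_const' ρ.pos).eventually hω).and
      ((eventually_ge_atTop Q).and (eventually_gt_atTop 0))).exists
  have hfrac : ((m * ρ.num : ℤ) : ℝ) / (m * ρ.den : ℕ) = ρ := by
    push_cast
    rw [mul_div_mul_left _ _ (Nat.cast_ne_zero.2 hmpos.ne'), ← Rat.cast_def]
  have hle := hQ (m * ρ.den) (hQm.trans (Nat.le_mul_of_pos_right m ρ.pos)) (m * ρ.num)
  rw [hfrac, sub_self, abs_zero] at hle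
  exact hle.not_gt (mul_pos (sub_pos.2 hm) (hΨ _ (Nat.mul_pos hmpos ρ.pos)))

theorem exists_forall_le_abs_sub_div (hx : Irrational x) {q : ℕ} (hq : 0 < q) :
    ∃ δ : ℝ, 0 < δ ∧ ∀ p : ℤ, δ ≤ |x - p / q| := by
  have hq0 : (0 : ℝ) < q := Nat.cast_pos.2 hq
  refine ⟨|q * x - round (q * x)| / q, div_pos ?_ hq0, fun p => ?_⟩
  · exact abs_pos.2 (sub_ne_zero.2 ((hx.natCast_mul hq.ne').ne_int _))
  · calc |q * x - round (q * x)| / q ≤ |q * x - p| / q :=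
          div_le_div_of_nonneg_right (round_le _ _) hq0.le
      _ = |x - p / q| := by
          rw [← abs_of_pos hq0, ← abs_div, abs_of_pos hq0]
          congr 1
          field_simp

theorem exists_mem_Ioo_forall_mul_le (hΨ : ∀ q : ℕ, 0 < q → 0 < Ψ q) (hx : Irrational x) (q : ℕ) :
    ∃ c ∈ Ioo (0 : ℝ) 1, 0 < q → ∀ p : ℤ, c * Ψ q ≤ |x - p / q| := by
  rcases q.eq_zero_or_pos with rfl | hq
  · exact ⟨1 / 2, by norm_num, fun h => absurd h (lt_irrefl 0)⟩
  · obtain ⟨δ, hδ, hle⟩ := exists_forall_le_abs_sub_div hx hq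
    have hΨq := hΨ q hq
    refine ⟨min (1 / 2) (δ / Ψ q), ⟨by positivity, min_lt_of_left_lt (by norm_num)⟩,
      fun _ p => le_trans ?_ (hle p)⟩
    exact (le_div_iff₀ hΨq).1 (min_le_right _ _)

theorem ESet_subset_EExactSet (hΨ : ∀ q : ℕ, 0 < q → 0 < Ψ q)
    (hωpos : ∀ᶠ q : ℕ in atTop, 0 < ω q) (hω : Tendsto (fun q : ℕ => ω q) atTop (𝓝 0)) :
    ESet Ψ ω ⊆ EExactSet Ψ := by
  intro x hx
  have hω1 : ∀ᶠ q : ℕ in atTop, ω q < 1 := hω.eventually_lt_const one_pos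
  choose c hc hcle using
    exists_mem_Ioo_forall_mul_le hΨ (irrational_of_mem_ESet hΨ hω1 hx)
  obtain ⟨hW, Q, hQ⟩ := hx
  obtain ⟨m, hm⟩ := eventually_atTop.1 (hωpos.and (hω1.and (eventually_ge_atTop Q)))
  refine ⟨hW, fun q => if m ≤ q then 1 - ω q else c q, fun q => ?_, ?_, fun p q hq => ?_⟩
  · dsimp only
    split_ifs with hmq
    · exact ⟨sub_pos.2 (hm q hmq).2.1, sub_lt_self 1 (hm q hmq).1⟩
    · exact hc q
  · have hlim : Tendsto (fun q : ℕ => 1 - ω q) atTop (𝓝 1) := by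
      simpa only [sub_zero] using hω.const_sub 1
    refine hlim.congr' ?_
    filter_upwards [eventually_ge_atTop m] with q hmq
    rw [if_pos hmq]
  · dsimp only
    split_ifs with hmq
    · exact hQ q (hm q hmq).2.2 p
    · exact hcle q hq p

theorem EExactSet_subset_BadSet (hΨ : ∀ q : ℕ, 0 < q → 0 < Ψ q) : EExactSet Ψ ⊆ BadSet Ψ := by
  rintro x ⟨hW, c, -, hlim, hc⟩
  obtain ⟨Q, hQ⟩ := eventually_atTop.1 ((hlim.eventually_const_le one_half_lt_one).and
    (eventually_gt_atTop 0))
  refine ⟨hW, 1 / 2, one_half_pos, Q, fun q hq p => ?_⟩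
  obtain ⟨hcq, hqpos⟩ := hQ q hq
  exact (mul_le_mul_of_nonneg_right hcq (hΨ q hqpos).le).trans (hc p q hqpos)

theorem decaysSlowly_of_tendsto_neg_log_div_log {w : ℕ → ℝ} (hpos : ∀ᶠ q in atTop, 0 < w q)
    (h : Tendsto (fun q : ℕ => -Real.log (w q) / Real.log q) atTop (𝓝 0)) : DecaysSlowly w := by
  intro ε hε
  filter_upwards [hpos, h.eventually_lt_const hε, eventually_gt_atTop 1] with q hwq hlt hq
  have hq1 : (1 : ℝ) < q := Nat.one_lt_cast.2 hq
  rw [div_lt_iff₀ (Real.log_pos hq1)] at hlt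
  rw [← Real.log_le_log_iff (by positivity) hwq, Real.log_rpow (by positivity)]
  linarith

theorem dimH_WSet_le_dimH_ESet (hΨ : ApproxFun fun q => Ψ q)
    (hω : Tendsto (fun q : ℕ => ω q) atTop (𝓝 0)) (hωpos : ∀ᶠ q : ℕ in atTop, 0 < ω q)
    (hslow : DecaysSlowly fun q => ω q) : dimH (WSet Ψ) ≤ dimH (ESet Ψ ω) := by
  obtain ⟨N, hN, hroot⟩ := hΨ.exists_threshold hω hωpos
  refine le_of_forall_lt fun d hd => ?_
  obtain ⟨t, hdt, htW⟩ := ENNReal.lt_iff_exists_nnreal_btwn.1 hd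
  obtain ⟨s, hts, hsW⟩ := ENNReal.lt_iff_exists_nnreal_btwn.1 htW
  have hts' : (t : ℝ) < s := NNReal.coe_lt_coe.2 (ENNReal.coe_lt_coe.1 hts)
  have ht : (0 : ℝ) < t := NNReal.coe_pos.2 (ENNReal.coe_pos.1 (bot_lt_of_lt hdt))
  have ht1 : (t : ℝ) ≤ 1 := by
    have hle := htW.le.trans ((dimH_mono (subset_univ (WSet Ψ))).trans_eq Real.dimH_univ)
    exact_mod_cast hle
  have hfreq : ∃ᶠ q : ℕ in atTop, (q : ℝ) ^ (-2 / (s : ℝ)) < Ψ q :=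
    frequently_rpow_lt_of_lt_dimH_WSet (fun q hq => (hΨ.pos q hq).le) (ht.trans hts')
      (by rwa [ENNReal.ofReal_coe_nnreal])
  have hE : ENNReal.ofReal t ≤ dimH (ESet Ψ ω) :=
    le_dimH_of_frequently_rpow_lt hΨ hN hslow hroot ht ht1 hts' hfreq fun x hfar hnear =>
      ⟨mem_WSet_of_forall_exists hnear, N + 1, hfar⟩
  rw [ENNReal.ofReal_coe_nnreal] at hE
  exact hdt.trans_le hE

end

theorem dimH_ESet_coincidence_general {Ψ ω : ℝ → ℝ}
    (hΨpos : ∀ q : ℕ, 0 < q → 0 < Ψ q)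
    (hωpos : ∀ᶠ q : ℕ in atTop, 0 < ω q)
    (hmono : AntitoneOn (fun q : ℕ => (q : ℝ) ^ 2 * Ψ q) (Ioi 0))
    (hsum : Summable fun q : ℕ => (q : ℝ) * Ψ q)
    (hωlim : Tendsto (fun q : ℕ => ω q) atTop (𝓝 0))
    (hωslow : Tendsto (fun q : ℕ => -Real.log (ω q) / Real.log q) atTop (𝓝 0)) :
    dimH (ESet Ψ ω) = dimH (EExactSet Ψ) ∧
    dimH (EExactSet Ψ) = dimH (BadSet Ψ) ∧
    dimH (BadSet Ψ) = dimH (WSet Ψ) := by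
  have hE : dimH (ESet Ψ ω) ≤ dimH (EExactSet Ψ) :=
    dimH_mono (ESet_subset_EExactSet hΨpos hωpos hωlim)
  have hExact : dimH (EExactSet Ψ) ≤ dimH (BadSet Ψ) := dimH_mono (EExactSet_subset_BadSet hΨpos)
  have hBad : dimH (BadSet Ψ) ≤ dimH (WSet Ψ) := dimH_mono fun _ hx => hx.1
  have hW : dimH (WSet Ψ) ≤ dimH (ESet Ψ ω) :=
    dimH_WSet_le_dimH_ESet ⟨hΨpos, hmono, hsum⟩ hωlim hωpos
      (decaysSlowly_of_tendsto_neg_log_div_log hωpos hωslow)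
  exact ⟨hE.antisymm (hExact.trans (hBad.trans hW)), hExact.antisymm (hBad.trans (hW.trans hE)),
    hBad.antisymm (hW.trans (hE.trans hExact))⟩

/-- **Theorem.** Suppose `q ↦ q²Ψ(q)` and `q ↦ q²Ψ(q)ω(q)` are non-increasing on `(0,∞)`,
`Σ_{q≥1} qΨ(q) < ∞`, `ω(q) → 0` and `(−log ω(q))/log q → 0`.  Then
`dim_H(E(Ψ,ω)) = dim_H(E(Ψ)) = dim_H(Bad(Ψ)) = dim_H(W(Ψ))`. -/
theorem dimH_ESet_coincidence (Ψ ω : ℝ → ℝ)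
    (hΨpos : ∀ q : ℝ, 0 < q → 0 < Ψ q)
    (hωmem : ∀ q : ℝ, 0 < q → ω q ∈ Set.Ioo (0 : ℝ) 1)
    (hmono : AntitoneOn (fun q : ℝ => q ^ 2 * Ψ q) (Set.Ioi 0))
    (hmono' : AntitoneOn (fun q : ℝ => q ^ 2 * Ψ q * ω q) (Set.Ioi 0))
    (hsum : Summable (fun q : ℕ => (q : ℝ) * Ψ (q : ℝ)))
    (hωlim : Filter.Tendsto ω Filter.atTop (nhds 0))
    (hωslow : Filter.Tendsto (fun q : ℝ => -Real.log (ω q) / Real.log q)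
      Filter.atTop (nhds 0)) :
    dimH (ESet Ψ ω) = dimH (EExactSet Ψ) ∧
    dimH (EExactSet Ψ) = dimH (BadSet Ψ) ∧
    dimH (BadSet Ψ) = dimH (WSet Ψ) :=
  dimH_ESet_coincidence_general (fun q hq => hΨpos q (Nat.cast_pos.2 hq))
    ((eventually_gt_atTop 0).mono fun q hq => (hωmem q (Nat.cast_pos.2 hq)).1)
    (hmono.comp_MonotoneOn (Nat.mono_cast.monotoneOn _) fun _ h => mem_Ioi.2 (Nat.cast_pos.2 h))
    hsum (hωlim.comp tendsto_natCast_atTop_atTop) (hωslow.comp tendsto_natCast_atTop_atTop)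
end

section
/- For any Ψ : (0,∞) → (0,∞) and any ω : (0,∞) → (0,1), the Hausdorff dimension of E(Ψ,ω) satisfies dim_H(E(Ψ,ω)) ≤ inf{s ≥ 0 : Σ_{q=1}^∞ q(Ψ(q)ω(q))^s < ∞} (sum over positive integers q). -/
/-!
If `x ∈ E(Ψ, ω)`, then for infinitely many `q` some signed offset `x - p/q` lies in
`[(1 - ω q) Ψ q, Ψ q]` or in `[-Ψ q, -(1 - ω q) Ψ q]`. So `E(Ψ, ω)` lies in the union of two limsup
sets of intervals `p/q + [a q, b q]` of length `b q - a q = Ψ q * ω q`. A ball of radius `N` meets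
at most `(2N + 2) q` of those with denominator `q` once their length is at most `1`, so the
Hausdorff–Cantelli lemma applies as soon as `∑ q (Ψ q * ω q) ^ t` converges. The bound on the
number of intervals does not depend on where `[a q, b q]` sits, which is why `Ψ` may be unbounded.
-/

open Filter Set
open scoped ENNReal

open MeasureTheory Measure
open scoped NNReal Topology

section HausdorffCantelli

variable {X ι : Type*} [EMetricSpace X] [Countable ι] {U : ι → Set X}

lemma hausdorffMeasure_limsup_cofinite_eq_zero [MeasurableSpace X] [BorelSpace X] {t : ℝ}
    (ht : 0 < t) (hU : ∑' i, Metric.ediam (U i) ^ t ≠ ∞) :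
    μH[t] (limsup U cofinite) = 0 := by
  let tail (s : Finset ι) : ℝ≥0∞ := ∑' i : {i // i ∉ s}, Metric.ediam (U i) ^ t
  have tail_tendsto : Tendsto tail atTop (𝓝 0) := ENNReal.tendsto_tsum_compl_atTop_zero hU
  have root_tendsto : Tendsto (fun s ↦ tail s ^ t⁻¹) atTop (𝓝 0) := by
    simpa [ht] using tail_tendsto.ennrpow_const t⁻¹
  have ediam_le (s : Finset ι) (i : {i // i ∉ s}) : Metric.ediam (U i) ≤ tail s ^ t⁻¹ :=
    (ENNReal.le_rpow_inv_iff ht).2 (ENNReal.le_tsum i)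
  have covers (s : Finset ι) : limsup U cofinite ⊆ ⋃ i : {i // i ∉ s}, U i := by
    rw [cofinite.limsup_set_eq]
    intro x hx
    obtain ⟨i, hxi, his⟩ := hx.exists_notMem_finset s
    exact mem_iUnion.2 ⟨⟨i, his⟩, hxi⟩
  have := hausdorffMeasure_le_liminf_tsum t _ _ root_tendsto (fun s (i : {i // i ∉ s}) ↦ U i)
    (.of_forall ediam_le) (.of_forall covers)
  exact le_zero_iff.1 (this.trans_eq tail_tendsto.liminf_eq)

lemma dimH_limsup_cofinite_le {t : ℝ≥0} (hU : ∑' i, Metric.ediam (U i) ^ (t : ℝ) ≠ ∞) :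
    dimH (limsup U cofinite) ≤ t := by
  borelize X
  rcases eq_zero_or_pos t with rfl | ht
  · have : Finite ι := by
      simpa [finite_univ_iff] using ENNReal.finite_const_le_of_tsum_ne_top hU one_ne_zero
    simp [Filter.cofinite_eq_bot]
  · refine dimH_le_of_hausdorffMeasure_ne_top ?_
    simp [hausdorffMeasure_limsup_cofinite_eq_zero (NNReal.coe_pos.2 ht) hU]

end HausdorffCantelli

section OffsetApproximation

/-- The real numbers which, for infinitely many denominators `q`, exceed some fraction `p/q` by an
amount in `[a q, b q]`. Two-sided approximation within a shell around `p/q` splits into two sets of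
this form. -/
def offsetApproxSet (a b : ℕ → ℝ) : Set ℝ :=
  {x | ∃ᶠ q : ℕ in atTop, ∃ p : ℤ, x - p / q ∈ Icc (a q) (b q)}

lemma sub_div_mem_Icc_iff {K : Type*} [Field K] [LinearOrder K] [IsStrictOrderedRing K]
    [FloorRing K] {x q a b : K} {p : ℤ} (hq : 0 < q) :
    x - p / q ∈ Icc a b ↔ p ∈ Icc ⌈q * (x - b)⌉ ⌊q * (x - a)⌋ := by
  rw [mem_Icc, mem_Icc, Int.ceil_le, Int.le_floor, ← le_div_iff₀' hq, ← div_le_iff₀' hq, and_comm]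
  constructor <;> rintro ⟨h₁, h₂⟩ <;> constructor <;> linarith

/-- The numerators `p` for which `p/q + [a, b]` meets `[-N, N]`, when `q > 0`. -/
noncomputable def nearbyNumerators (N q : ℕ) (a b : ℝ) : Finset ℤ :=
  Finset.Icc ⌈q * (-N - b)⌉ ⌊q * (N - a)⌋

lemma mem_nearbyNumerators {N q : ℕ} {a b x : ℝ} {p : ℤ} (hq : 0 < q) (hx : |x| ≤ N)
    (hp : x - p / q ∈ Icc a b) : p ∈ nearbyNumerators N q a b := by
  obtain ⟨hNx, hxN⟩ := abs_le.1 hx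
  rw [sub_div_mem_Icc_iff (by exact_mod_cast hq)] at hp
  refine Finset.mem_Icc.2 ⟨le_trans ?_ hp.1, hp.2.trans ?_⟩ <;> gcongr

lemma card_nearbyNumerators_le {N q : ℕ} {a b : ℝ} (hq : 0 < q) (hab : b - a ≤ 1) :
    (nearbyNumerators N q a b).card ≤ (2 * N + 2) * q := by
  have hq₁ : (1 : ℝ) ≤ q := by exact_mod_cast hq
  have hcount : ⌊q * (N - a)⌋ + 1 - ⌈q * (-N - b)⌉ ≤ ((2 * N + 2) * q : ℝ) := calc
    _ ≤ q * (N - a) + 1 - q * (-N - b) := by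
      gcongr
      exacts [Int.floor_le _, Int.le_ceil _]
    _ = q * (2 * N + (b - a)) + 1 := by ring
    _ ≤ q * (2 * N + 1) + q := by gcongr
    _ = (2 * N + 2) * q := by ring
  rw [nearbyNumerators, Int.card_Icc, Int.toNat_le]
  exact_mod_cast hcount

lemma eventually_le_one_of_tsum_natCast_mul_rpow_ne_top {δ : ℕ → ℝ} {t : ℝ≥0}
    (hδ : ∑' q : ℕ, q * ENNReal.ofReal (δ q) ^ (t : ℝ) ≠ ∞) :
    ∀ᶠ q in atTop, δ q ≤ 1 := by
  filter_upwards [eventually_ge_atTop 1,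
    (ENNReal.tendsto_atTop_zero_of_tsum_ne_top hδ).eventually_lt_const one_pos] with q hq hlt
  contrapose! hlt
  calc (1 : ℝ≥0∞) = 1 * 1 ^ (t : ℝ) := by simp
    _ ≤ q * ENNReal.ofReal (δ q) ^ (t : ℝ) := by
      gcongr
      exacts [by exact_mod_cast hq, ENNReal.one_le_ofReal.2 hlt.le]

variable {a b : ℕ → ℝ} {t : ℝ≥0}

lemma dimH_offsetApproxSet_inter_closedBall_le
    (hab : ∑' q : ℕ, q * ENNReal.ofReal (b q - a q) ^ (t : ℝ) ≠ ∞) (N : ℕ) :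
    dimH (offsetApproxSet a b ∩ Metric.closedBall 0 N) ≤ t := by
  let S : Set ℕ := {q | 0 < q ∧ b q - a q ≤ 1}
  let U (i : Σ q : S, nearbyNumerators N q (a q) (b q)) : Set ℝ :=
    {x | x - i.2 / (i.1 : ℕ) ∈ Icc (a i.1) (b i.1)}
  have ediam_U i : Metric.ediam (U i) = ENNReal.ofReal (b i.1 - a i.1) := by
    rw [show U i = Icc (a i.1 + i.2 / (i.1 : ℕ)) (b i.1 + i.2 / (i.1 : ℕ)) by
      ext x; simp [U, le_sub_iff_add_le], Real.ediam_Icc, add_sub_add_right_eq_sub]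
  have summable_U : ∑' i, Metric.ediam (U i) ^ (t : ℝ) ≠ ∞ := by
    refine ne_top_of_le_ne_top (ENNReal.mul_ne_top (ENNReal.natCast_ne_top (2 * N + 2)) hab) ?_
    calc ∑' i, Metric.ediam (U i) ^ (t : ℝ)
      _ = ∑' q : S, (nearbyNumerators N q (a q) (b q)).card *
            ENNReal.ofReal (b q - a q) ^ (t : ℝ) := by
        simp [ediam_U, ENNReal.tsum_sigma']
      _ ≤ ∑' q : S, ((2 * N + 2) * (q : ℕ) : ℕ) * ENNReal.ofReal (b q - a q) ^ (t : ℝ) := by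
        gcongr with q
        exact card_nearbyNumerators_le q.2.1 q.2.2
      _ ≤ ∑' q : ℕ, ((2 * N + 2) * q : ℕ) * ENNReal.ofReal (b q - a q) ^ (t : ℝ) :=
        ENNReal.tsum_comp_le_tsum_of_injective Subtype.val_injective _
      _ = (2 * N + 2 : ℕ) * ∑' q : ℕ, q * ENNReal.ofReal (b q - a q) ^ (t : ℝ) := by
        simp only [← ENNReal.tsum_mul_left, Nat.cast_mul, mul_assoc]
  have subset_limsup : offsetApproxSet a b ∩ Metric.closedBall 0 N ⊆ limsup U cofinite := by
    rintro x ⟨hx, hxN⟩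
    rw [cofinite.limsup_set_eq]
    have hx_S : {q | (∃ p : ℤ, x - p / q ∈ Icc (a q) (b q)) ∧ q ∈ S}.Infinite :=
      Nat.frequently_atTop_iff_infinite.1 <|
        hx.and_eventually <| (eventually_gt_atTop 0).and <|
          eventually_le_one_of_tsum_natCast_mul_rpow_ne_top hab
    refine .of_image (fun i ↦ (i.1 : ℕ)) (hx_S.mono ?_)
    rintro q ⟨⟨p, hp⟩, hq⟩
    exact ⟨⟨⟨q, hq⟩, p, mem_nearbyNumerators hq.1 (by simpa using hxN) hp⟩, hp, rfl⟩
  exact (dimH_mono subset_limsup).trans (dimH_limsup_cofinite_le summable_U)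

lemma dimH_offsetApproxSet_le (hab : ∑' q : ℕ, q * ENNReal.ofReal (b q - a q) ^ (t : ℝ) ≠ ∞) :
    dimH (offsetApproxSet a b) ≤ t := by
  rw [← inter_univ (offsetApproxSet a b), ← Metric.iUnion_closedBall_nat 0, inter_iUnion,
    dimH_iUnion]
  exact iSup_le (dimH_offsetApproxSet_inter_closedBall_le hab)

end OffsetApproximation

lemma frequently_exists_abs_sub_div_le_of_mem_WSet {Ψ : ℝ → ℝ} {x : ℝ} (hx : x ∈ WSet Ψ) :
    ∃ᶠ q : ℕ in atTop, ∃ p : ℤ, |x - p / q| ≤ Ψ q := by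
  rw [Nat.frequently_atTop_iff_infinite]
  intro hfin
  refine hx (.of_finite_fibers Prod.snd (hfin.subset ?_) ?_)
  · rintro _ ⟨⟨p, q⟩, ⟨-, hp⟩, rfl⟩
    exact ⟨p, hp⟩
  · rintro _ ⟨⟨_, q⟩, ⟨hq, -⟩, rfl⟩
    refine ((finite_Icc ⌈q * (x - Ψ q)⌉ ⌊q * (x - -Ψ q)⌋).prod (finite_singleton q)).subset ?_
    rintro ⟨p, _⟩ ⟨⟨-, hp⟩, rfl⟩
    exact ⟨(sub_div_mem_Icc_iff (by exact_mod_cast hq)).1 (abs_le.1 hp), rfl⟩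

lemma ESet_subset_union_offsetApproxSet (Ψ ω : ℝ → ℝ) :
    ESet Ψ ω ⊆ offsetApproxSet (fun q ↦ (1 - ω q) * Ψ q) (fun q ↦ Ψ q) ∪
      offsetApproxSet (fun q ↦ -Ψ q) (fun q ↦ -((1 - ω q) * Ψ q)) := by
  rintro x ⟨hW, hfar⟩
  have hshell := (frequently_exists_abs_sub_div_le_of_mem_WSet hW).and_eventually
    (eventually_atTop.2 hfar)
  refine frequently_or_distrib.1 (hshell.mono ?_)
  rintro q ⟨⟨p, hle⟩, hge⟩
  obtain ⟨h₁, h₂⟩ := abs_le.1 hle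
  exact (le_abs'.1 (hge p)).symm.imp (fun h ↦ ⟨p, h, h₂⟩) (fun h ↦ ⟨p, h₁, h⟩)

lemma tsum_natCast_mul_ofReal_rpow_ne_top {f : ℕ → ℝ} {t : ℝ≥0} (hf : ∀ q, 0 < q → 0 ≤ f q)
    (hs : Summable fun q : ℕ ↦ q * f q ^ (t : ℝ)) :
    ∑' q : ℕ, q * ENNReal.ofReal (f q) ^ (t : ℝ) ≠ ∞ := by
  convert! hs.tsum_ofReal_ne_top using 3 with q
  rcases q.eq_zero_or_pos with rfl | hq
  · simp
  · rw [ENNReal.ofReal_mul q.cast_nonneg, ENNReal.ofReal_natCast,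
      ENNReal.ofReal_rpow_of_nonneg (hf q hq) t.coe_nonneg]

theorem dimH_ESet_le_general (Ψ ω : ℝ → ℝ) (hΨω : ∀ q : ℕ, 0 < q → 0 ≤ Ψ q * ω q) :
    dimH (ESet Ψ ω) ≤
      sInf {s : ℝ≥0∞ | ∃ t : ℝ, 0 ≤ t ∧ s = ENNReal.ofReal t ∧
        Summable (fun q : ℕ => (q : ℝ) * (Ψ (q : ℝ) * ω (q : ℝ)) ^ t)} := by
  refine le_sInf ?_
  rintro _ ⟨t, ht, rfl, hs⟩
  lift t to ℝ≥0 using ht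
  have hsum := tsum_natCast_mul_ofReal_rpow_ne_top hΨω hs
  rw [ENNReal.ofReal_coe_nnreal]
  refine (dimH_mono (ESet_subset_union_offsetApproxSet Ψ ω)).trans ?_
  rw [dimH_union]
  exact max_le (dimH_offsetApproxSet_le (by simpa [one_sub_mul, mul_comm (ω _)] using hsum))
    (dimH_offsetApproxSet_le (by simpa [one_sub_mul, mul_comm (ω _)] using hsum))

/-- **Theorem.** For any `Ψ : (0,∞) → (0,∞)` and `ω : (0,∞) → (0,1)`,
`dim_H(E(Ψ,ω)) ≤ inf {s ≥ 0 : Σ_{q≥1} q(Ψ(q)ω(q))^s < ∞}`, where the infimum is taken in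
`[0,∞]` (so it is `∞` if the series converges for no `s ≥ 0`). -/
theorem dimH_ESet_le (Ψ ω : ℝ → ℝ)
    (hΨpos : ∀ q : ℝ, 0 < q → 0 < Ψ q)
    (hωmem : ∀ q : ℝ, 0 < q → ω q ∈ Set.Ioo (0 : ℝ) 1) :
    dimH (ESet Ψ ω) ≤
      sInf {s : ℝ≥0∞ | ∃ t : ℝ, 0 ≤ t ∧ s = ENNReal.ofReal t ∧
        Summable (fun q : ℕ => (q : ℝ) * (Ψ (q : ℝ) * ω (q : ℝ)) ^ t)} :=
  dimH_ESet_le_general Ψ ω fun q hq ↦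
    (mul_pos (hΨpos q (by exact_mod_cast hq)) (hωmem q (by exact_mod_cast hq)).1).le
end

section
/- Let Ψ : (0,∞) → (0,∞) and ω : (0,∞) → (0,1) be such that the map q ↦ q²Ψ(q)ω(q) is non-increasing on (0,∞). Define the lower order λ(Ψ,ω) := liminf_{q→∞} (−log(Ψ(q)ω(q)))/log q, taking values in [0,∞]. Then inf{s ≥ 0 : Σ_{q=1}^∞ q(Ψ(q)ω(q))^s < ∞} = 2/λ(Ψ,ω), with the convention that 2/λ(Ψ,ω) = 0 when λ(Ψ,ω) = ∞ (the sum is over positive integers q). -/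
/-!
Write `f q = Ψ q * ω q` and `λ` for its lower order; since `q ^ 2 * f q` is non-increasing, so is
`f`. The argument works for the series `∑ q ^ c * f q ^ t` with any `c > -1`, whose exponent of
convergence is `(c + 1) / λ`.

If `t > (c + 1) / λ`, choose `a < λ` with `a * t > c + 1`. Eventually `f q ≤ q ^ (-a)`, so the
series is dominated by the convergent series `∑ q ^ (c - a * t)`.

Conversely, let the series converge for some `t`. There are about `q / 2` integers in `(q / 2, q]`,
and at each of them the term is at least a constant times `q ^ c * f q ^ t`, because `f` is
non-increasing. Hence `f q ^ t = O(q ^ (-(c + 1)))`, which gives `λ ≥ (c + 1) / t`.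
-/

open Filter Set
open scoped ENNReal

/-- The lower order at infinity of `q ↦ Ψ(q)ω(q)`, taken in `[0,∞]`:
`λ(Ψ,ω) = liminf_{q→∞} (−log(Ψ(q)ω(q)))/log q`. -/
noncomputable def lowerOrder (Ψ ω : ℝ → ℝ) : ℝ≥0∞ :=
  Filter.liminf
    (fun q : ℝ => ENNReal.ofReal (-Real.log (Ψ q * ω q) / Real.log q)) Filter.atTop

open Asymptotics

/-- The lower order at infinity `liminf_{q→∞} (−log f(q))/log q` of a single function, taken in
`[0,∞]`; negative values of the quotient are truncated to `0`. -/
noncomputable def lowerOrderAtTop (f : ℝ → ℝ) : ℝ≥0∞ :=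
  liminf (fun q : ℝ => ENNReal.ofReal (-Real.log (f q) / Real.log q)) atTop

lemma lowerOrder_eq_lowerOrderAtTop_mul (Ψ ω : ℝ → ℝ) :
    lowerOrder Ψ ω = lowerOrderAtTop fun q => Ψ q * ω q :=
  rfl

lemma eventually_le_rpow_neg_of_lt_lowerOrderAtTop {f : ℝ → ℝ} {a : ℝ}
    (ha : ENNReal.ofReal a < lowerOrderAtTop f) : ∀ᶠ q in atTop, f q ≤ q ^ (-a) := by
  filter_upwards [eventually_lt_of_lt_liminf ha, eventually_gt_atTop 1] with q hq hq1
  have hlt : a < -Real.log (f q) / Real.log q := (ENNReal.ofReal_lt_ofReal_iff'.1 hq).1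
  rw [lt_div_iff₀ (Real.log_pos hq1)] at hlt
  calc f q ≤ Real.exp (Real.log (f q)) := Real.le_exp_log _
    _ ≤ Real.exp (Real.log q * -a) := Real.exp_le_exp.2 (by linarith)
    _ = q ^ (-a) := (Real.rpow_def_of_pos (by linarith) _).symm

lemma ofReal_le_lowerOrderAtTop_of_isBigO {f : ℝ → ℝ} {a : ℝ} (hf : ∀ᶠ q in atTop, f q ≠ 0)
    (h : f =O[atTop] fun q => q ^ (-a)) : ENNReal.ofReal a ≤ lowerOrderAtTop f := by
  obtain ⟨C, hC, hfC⟩ := h.exists_pos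
  have hlim : Tendsto (fun q => ENNReal.ofReal (a - Real.log C / Real.log q)) atTop
      (nhds (ENNReal.ofReal a)) := by
    simpa only [sub_zero] using ENNReal.tendsto_ofReal
      ((Real.tendsto_log_atTop.const_div_atTop (Real.log C)).const_sub a)
  rw [← hlim.liminf_eq]
  refine liminf_le_liminf ?_
  filter_upwards [hf, hfC.bound, eventually_gt_atTop 1] with q hfq hbound hq1
  have hq : 0 < q := by linarith
  have hlog : 0 < Real.log q := Real.log_pos hq1
  have hlogf : Real.log (f q) ≤ Real.log C - a * Real.log q :=
    calc Real.log (f q) = Real.log ‖f q‖ := (Real.log_abs _).symm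
      _ ≤ Real.log (C * q ^ (-a)) := by
        rw [Real.norm_of_nonneg (Real.rpow_nonneg hq.le _)] at hbound
        exact Real.log_le_log (norm_pos_iff.2 hfq) hbound
      _ = Real.log C - a * Real.log q := by
        rw [Real.log_mul hC.ne' (Real.rpow_pos_of_pos hq _).ne', Real.log_rpow hq]
        ring
  refine ENNReal.ofReal_le_ofReal ?_
  rw [le_div_iff₀ hlog, sub_mul, div_mul_cancel₀ _ hlog.ne']
  linarith

lemma summable_rpow_mul_rpow_of_eventually_le {f : ℝ → ℝ} {a c t : ℝ} (ht : 0 ≤ t)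
    (hcat : c + 1 < a * t) (hf : ∀ᶠ q in atTop, 0 ≤ f q) (hfa : ∀ᶠ q in atTop, f q ≤ q ^ (-a)) :
    Summable fun n : ℕ => (n : ℝ) ^ c * f n ^ t := by
  have hsum : Summable fun n : ℕ => (n : ℝ) ^ (c - a * t) :=
    Real.summable_nat_rpow.2 (by linarith)
  refine hsum.of_norm_bounded_eventually_nat ?_
  filter_upwards [tendsto_natCast_atTop_atTop.eventually hf,
    tendsto_natCast_atTop_atTop.eventually hfa, eventually_gt_atTop 0] with n hfn hfan hn
  have hn' : (0 : ℝ) < n := Nat.cast_pos.2 hn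
  calc ‖(n : ℝ) ^ c * f n ^ t‖ = (n : ℝ) ^ c * f n ^ t :=
        Real.norm_of_nonneg (mul_nonneg (Real.rpow_nonneg hn'.le _) (Real.rpow_nonneg hfn _))
    _ ≤ (n : ℝ) ^ c * ((n : ℝ) ^ (-a)) ^ t := by gcongr
    _ = (n : ℝ) ^ (c - a * t) := by
        rw [← Real.rpow_mul hn'.le, ← Real.rpow_add hn', neg_mul, sub_eq_add_neg]

-- The exponent `|c|` treats increasing and decreasing powers at once.
lemma half_rpow_abs_mul_rpow_le_rpow {q x : ℝ} (c : ℝ) (hq : 0 < q) (hqx : q / 2 ≤ x)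
    (hxq : x ≤ q) : (1 / 2) ^ |c| * q ^ c ≤ x ^ c := by
  have hx : 0 < x := by linarith
  have hratio : (1 / 2) ^ |c| ≤ (x / q) ^ c :=
    calc (1 / 2) ^ |c| ≤ (x / q) ^ |c| := by
          refine Real.rpow_le_rpow (by norm_num) ?_ (abs_nonneg c)
          rw [le_div_iff₀ hq]
          linarith
      _ ≤ (x / q) ^ c :=
          Real.rpow_le_rpow_of_exponent_ge (div_pos hx hq) ((div_le_one hq).2 hxq) (le_abs_self c)
  rwa [Real.div_rpow hx.le hq.le, le_div_iff₀ (Real.rpow_pos_of_pos hq c)] at hratio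

lemma rpow_add_one_mul_le_sum_Ioc {g : ℝ → ℝ} {a q : ℝ} (c : ℝ) (hg : AntitoneOn g (Ioi a))
    (hgq : 0 ≤ g q) (hq : 4 ≤ q) (haq : a ≤ q / 2) :
    (1 / 2) ^ |c| / 4 * (q ^ (c + 1) * g q) ≤
      ∑ n ∈ Finset.Ioc ⌊q / 2⌋₊ ⌊q⌋₊, (n : ℝ) ^ c * g n := by
  have hq0 : 0 < q := by linarith
  have hcard : q / 4 ≤ (Finset.Ioc ⌊q / 2⌋₊ ⌊q⌋₊).card := by
    rw [Nat.card_Ioc, Nat.cast_sub (Nat.floor_mono (by linarith))]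
    linarith [Nat.floor_le (half_pos hq0).le, Nat.lt_floor_add_one q]
  have hterm : ∀ n ∈ Finset.Ioc ⌊q / 2⌋₊ ⌊q⌋₊,
      (1 / 2) ^ |c| * q ^ c * g q ≤ (n : ℝ) ^ c * g n := by
    intro n hn
    rw [Finset.mem_Ioc, Nat.floor_lt (half_pos hq0).le, Nat.le_floor_iff hq0.le] at hn
    have hgn : g q ≤ g n := hg (haq.trans_lt hn.1) (by rw [mem_Ioi]; linarith) hn.2
    exact mul_le_mul (half_rpow_abs_mul_rpow_le_rpow c hq0 hn.1.le hn.2) hgn hgq (by positivity)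
  calc (1 / 2) ^ |c| / 4 * (q ^ (c + 1) * g q)
      = q / 4 * ((1 / 2) ^ |c| * q ^ c * g q) := by
        rw [Real.rpow_add_one hq0.ne']
        ring
    _ ≤ (Finset.Ioc ⌊q / 2⌋₊ ⌊q⌋₊).card * ((1 / 2) ^ |c| * q ^ c * g q) := by gcongr
    _ ≤ ∑ n ∈ Finset.Ioc ⌊q / 2⌋₊ ⌊q⌋₊, (n : ℝ) ^ c * g n := by
        simpa only [nsmul_eq_mul] using Finset.card_nsmul_le_sum _ _ _ hterm

lemma isBigO_rpow_neg_of_summable_rpow_mul {g : ℝ → ℝ} {a c : ℝ} (hg : AntitoneOn g (Ioi a))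
    (hg0 : ∀ᶠ q in atTop, 0 ≤ g q) (hs : Summable fun n : ℕ => (n : ℝ) ^ c * g n) :
    g =O[atTop] fun q => q ^ (-(c + 1)) := by
  set D : ℝ := (1 / 2) ^ |c| / 4
  have hD : 0 < D := by positivity
  set S : ℝ := ∑' n : ℕ, |(n : ℝ) ^ c * g n|
  refine IsBigO.of_bound (S / D) ?_
  filter_upwards [hg0, eventually_ge_atTop 4, eventually_ge_atTop (2 * a)] with q hgq hq haq
  have hq0 : 0 < q := by linarith
  have hbound : D * (q ^ (c + 1) * g q) ≤ S :=
    calc D * (q ^ (c + 1) * g q)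
        ≤ ∑ n ∈ Finset.Ioc ⌊q / 2⌋₊ ⌊q⌋₊, (n : ℝ) ^ c * g n :=
          rpow_add_one_mul_le_sum_Ioc c hg hgq hq (by linarith)
      _ ≤ ∑ n ∈ Finset.Ioc ⌊q / 2⌋₊ ⌊q⌋₊, |(n : ℝ) ^ c * g n| :=
          Finset.sum_le_sum fun _ _ => le_abs_self _
      _ ≤ S := hs.abs.sum_le_tsum _ fun _ _ => abs_nonneg _
  rw [Real.norm_of_nonneg hgq, Real.norm_of_nonneg (Real.rpow_nonneg hq0.le _),
    Real.rpow_neg hq0.le, ← div_eq_mul_inv, le_div_iff₀ (by positivity), le_div_iff₀ hD]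
  linarith

lemma isBigO_rpow_neg_div_of_summable_rpow_mul_rpow {f : ℝ → ℝ} {a c t : ℝ} (ht : 0 < t)
    (hpos : ∀ q, a < q → 0 < f q) (hanti : AntitoneOn f (Ioi a))
    (hs : Summable fun n : ℕ => (n : ℝ) ^ c * f n ^ t) :
    f =O[atTop] fun q => q ^ (-((c + 1) / t)) := by
  have hanti_rpow : AntitoneOn (fun q => f q ^ t) (Ioi a) := fun _ hx y hy hxy =>
    Real.rpow_le_rpow (hpos y hy).le (hanti hx hy hxy) ht.le
  have hnonneg : ∀ᶠ q in atTop, 0 ≤ f q := (eventually_gt_atTop a).mono fun q hq => (hpos q hq).le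
  have hO : (fun q => f q ^ t) =O[atTop] fun q => q ^ (-(c + 1)) :=
    isBigO_rpow_neg_of_summable_rpow_mul hanti_rpow
      (hnonneg.mono fun _ hq => Real.rpow_nonneg hq t) hs
  have hroot := hO.rpow (inv_nonneg.2 ht.le)
    ((eventually_ge_atTop 0).mono fun q hq => Real.rpow_nonneg hq _)
  refine hroot.congr' ?_ ?_
  · filter_upwards [hnonneg] with q hq using Real.rpow_rpow_inv hq ht.ne'
  · filter_upwards [eventually_ge_atTop 0] with q hq
    rw [← Real.rpow_mul hq, div_eq_mul_inv, neg_mul]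

lemma ofReal_div_lowerOrderAtTop_le_of_summable {f : ℝ → ℝ} {a c t : ℝ} (hc : -1 < c)
    (hpos : ∀ q, a < q → 0 < f q) (hanti : AntitoneOn f (Ioi a)) (ht : 0 ≤ t)
    (hs : Summable fun n : ℕ => (n : ℝ) ^ c * f n ^ t) :
    ENNReal.ofReal (c + 1) / lowerOrderAtTop f ≤ ENNReal.ofReal t := by
  obtain rfl | ht0 := ht.eq_or_lt
  · simp only [Real.rpow_zero, mul_one] at hs
    exact absurd (Real.summable_nat_rpow.1 hs) hc.not_gt
  have hle : ENNReal.ofReal ((c + 1) / t) ≤ lowerOrderAtTop f :=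
    ofReal_le_lowerOrderAtTop_of_isBigO
      ((eventually_gt_atTop a).mono fun q hq => (hpos q hq).ne')
      (isBigO_rpow_neg_div_of_summable_rpow_mul_rpow ht0 hpos hanti hs)
  refine ENNReal.div_le_of_le_mul ?_
  calc ENNReal.ofReal (c + 1) = ENNReal.ofReal t * ENNReal.ofReal ((c + 1) / t) := by
        rw [← ENNReal.ofReal_mul ht, mul_div_cancel₀ _ ht0.ne']
    _ ≤ ENNReal.ofReal t * lowerOrderAtTop f := by gcongr

lemma summable_of_ofReal_div_lowerOrderAtTop_lt {f : ℝ → ℝ} {c t : ℝ} (hc : -1 < c)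
    (hf : ∀ᶠ q in atTop, 0 ≤ f q)
    (h : ENNReal.ofReal (c + 1) / lowerOrderAtTop f < ENNReal.ofReal t) :
    Summable fun n : ℕ => (n : ℝ) ^ c * f n ^ t := by
  have ht : 0 < t := ENNReal.ofReal_pos.1 (pos_of_gt h)
  have hc0 : ENNReal.ofReal (c + 1) ≠ 0 := (ENNReal.ofReal_pos.2 (by linarith)).ne'
  have hlt : ENNReal.ofReal ((c + 1) / t) < lowerOrderAtTop f := by
    rw [ENNReal.div_lt_iff (.inr hc0) (.inr ENNReal.ofReal_ne_top)] at h
    rw [ENNReal.ofReal_div_of_pos ht]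
    exact ENNReal.div_lt_of_lt_mul' h
  obtain ⟨a, -, hca, haf⟩ := ENNReal.lt_iff_exists_real_btwn.1 hlt
  have hcat : c + 1 < a * t := (div_lt_iff₀ ht).1 (ENNReal.ofReal_lt_ofReal_iff'.1 hca).1
  exact summable_rpow_mul_rpow_of_eventually_le ht.le hcat hf
    (eventually_le_rpow_neg_of_lt_lowerOrderAtTop haf)

lemma antitoneOn_of_antitoneOn_mul {α R : Type*} [Preorder α] [Semiring R] [LinearOrder R]
    [IsStrictOrderedRing R] {f g : α → R} {s : Set α} (hf : ∀ x ∈ s, 0 ≤ f x)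
    (hg : ∀ x ∈ s, 0 < g x) (hg_mono : MonotoneOn g s)
    (h : AntitoneOn (fun x => g x * f x) s) : AntitoneOn f s := fun x hx y hy hxy =>
  le_of_mul_le_mul_left
    ((h hx hy hxy).trans (mul_le_mul_of_nonneg_right (hg_mono hx hy hxy) (hf x hx))) (hg y hy)

theorem sInf_summable_eq_two_div_lowerOrder_general {f : ℝ → ℝ} {a c : ℝ} (hc : -1 < c)
    (hpos : ∀ q, a < q → 0 < f q) (hanti : AntitoneOn f (Ioi a)) :
    sInf {s : ℝ≥0∞ | ∃ t : ℝ, 0 ≤ t ∧ s = ENNReal.ofReal t ∧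
        Summable (fun n : ℕ => (n : ℝ) ^ c * f n ^ t)} =
      ENNReal.ofReal (c + 1) / lowerOrderAtTop f := by
  refine sInf_eq_of_forall_ge_of_forall_gt_exists_lt ?_ fun b hb => ?_
  · rintro _ ⟨t, ht, rfl, hs⟩
    exact ofReal_div_lowerOrderAtTop_le_of_summable hc hpos hanti ht hs
  · obtain ⟨t, ht, hlt, htb⟩ := ENNReal.lt_iff_exists_real_btwn.1 hb
    have hnonneg : ∀ᶠ q in atTop, 0 ≤ f q :=
      (eventually_gt_atTop a).mono fun q hq => (hpos q hq).le
    exact ⟨_, ⟨t, ht, rfl, summable_of_ofReal_div_lowerOrderAtTop_lt hc hnonneg hlt⟩, htb⟩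

/-- **Theorem.** If `Ψ : (0,∞) → (0,∞)`, `ω : (0,∞) → (0,1)` and `q ↦ q²Ψ(q)ω(q)` is
non-increasing on `(0,∞)`, then
`inf {s ≥ 0 : Σ_{q≥1} q(Ψ(q)ω(q))^s < ∞} = 2/λ(Ψ,ω)`, where the infimum is taken in
`[0,∞]` (so `inf ∅ = ∞`) and `2/∞ = 0`, `2/0 = ∞`. -/
theorem sInf_summable_eq_two_div_lowerOrder (Ψ ω : ℝ → ℝ)
    (hΨpos : ∀ q : ℝ, 0 < q → 0 < Ψ q)
    (hωmem : ∀ q : ℝ, 0 < q → ω q ∈ Set.Ioo (0 : ℝ) 1)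
    (hmono : AntitoneOn (fun q : ℝ => q ^ 2 * (Ψ q * ω q)) (Set.Ioi 0)) :
    sInf {s : ℝ≥0∞ | ∃ t : ℝ, 0 ≤ t ∧ s = ENNReal.ofReal t ∧
        Summable (fun q : ℕ => (q : ℝ) * (Ψ (q : ℝ) * ω (q : ℝ)) ^ t)} =
      2 / lowerOrder Ψ ω := by
  have hpos : ∀ q, 0 < q → 0 < Ψ q * ω q := fun q hq => mul_pos (hΨpos q hq) (hωmem q hq).1
  have hanti : AntitoneOn (fun q => Ψ q * ω q) (Ioi 0) :=
    antitoneOn_of_antitoneOn_mul (fun q hq => (hpos q hq).le) (fun q hq => pow_pos hq 2)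
      (fun _ hx _ _ hxy => pow_le_pow_left₀ (le_of_lt hx) hxy 2) hmono
  simpa [lowerOrder_eq_lowerOrderAtTop_mul, one_add_one_eq_two] using
    sInf_summable_eq_two_div_lowerOrder_general (c := 1) (by norm_num) hpos hanti
end

section
/- Let (a_1, …, a_n) be a finite word of positive integers, let c be an integer with c ≥ 2, and let b be a positive integer. Then the Lebesgue measure of the fundamental interval I(0; a_1, …, a_n, c, b) is greater than or equal to the Lebesgue measure of the fundamental interval I(0; a_1, …, a_n, c − 1, 1, b). -/
open Filter Set

/-- The fundamental interval `I(0; b₁, …, bₘ)`: the set of `x ∈ (0,1)` whose regular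
continued fraction expansion `x = [0; a₁(x), a₂(x), …]` satisfies `aᵢ(x) = bᵢ` for all
`1 ≤ i ≤ m`, where `aᵢ(x)` is the `i`-th partial denominator of the continued fraction
expansion of `x` (as computed by `GenContFract.of`). -/
def fundInterval (l : List ℕ) : Set ℝ :=
  {x ∈ Set.Ioo (0 : ℝ) 1 | ∀ i : Fin l.length,
    (GenContFract.of x).partDens.get? (i : ℕ) = some ((l.get i : ℕ) : ℝ)}

/-!
The word `l = (b₁, …, bₘ)` determines the Möbius map
`cfEval l t = 1/(b₁ + 1/(b₂ + ⋯ + 1/(bₘ + t))) = (pₘ + pₘ₋₁ t) / (qₘ + qₘ₋₁ t)` of determinant `±1`,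
and `fundInterval l` is, up to endpoints, the image of `[0, 1]` under it. Hence its measure is
`1 / (qₘ (qₘ + qₘ₋₁))`. If `q'`, `q` are the last two continuants of `a`, the words `(a, c, b)` and
`(a, c - 1, 1, b)` have the same second-to-last continuant `d = c q + q'`, and their last ones
satisfy `b d + q ≤ b d + (c - 1) q + q'`.
-/

open MeasureTheory
open scoped ENNReal

section PartDens

variable {K : Type*} [Field K] [LinearOrder K] [FloorRing K]

/-- The continued fraction expansion `v = [a₀; a₁, a₂, …]` satisfies `aᵢ = bᵢ` for `1 ≤ i ≤ m`,
where `l = (b₁, …, bₘ)`. The integer part `a₀` is unrestricted, so that the condition for `v` passes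
to `1 / fract v` when the first letter of `l` is dropped. -/
def HasPartDens (v : K) (l : List ℕ) : Prop :=
  ∀ i : Fin l.length, (GenContFract.of v).partDens.get? (i : ℕ) = some ((l.get i : ℕ) : K)

theorem hasPartDens_nil (v : K) : HasPartDens v [] :=
  fun i => i.elim0

theorem partDens_of_get?_zero {v : K} (hv : Int.fract v ≠ 0) :
    (GenContFract.of v).partDens.get? 0 = some ((⌊(Int.fract v)⁻¹⌋ : ℤ) : K) :=
  GenContFract.partDen_eq_s_b (GenContFract.of_s_head hv)

variable [IsStrictOrderedRing K]

theorem partDens_of_get?_succ (v : K) (n : ℕ) :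
    (GenContFract.of v).partDens.get? (n + 1) =
      (GenContFract.of (Int.fract v)⁻¹).partDens.get? n := by
  simp only [GenContFract.partDens, Stream'.Seq.map_get?, GenContFract.of_s_succ]

theorem partDens_of_get?_of_fract_eq_zero {v : K} (hv : Int.fract v = 0) (n : ℕ) :
    (GenContFract.of v).partDens.get? n = none := by
  obtain ⟨z, rfl⟩ := Int.fract_eq_zero_iff.1 hv
  rw [GenContFract.partDen_none_iff_s_none, GenContFract.of_s_of_int, Stream'.Seq.get?_nil]

theorem hasPartDens_cons {v : K} {b : ℕ} {l : List ℕ} :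
    HasPartDens v (b :: l) ↔
      Int.fract v ≠ 0 ∧ ⌊(Int.fract v)⁻¹⌋ = b ∧ HasPartDens (Int.fract v)⁻¹ l := by
  have head : (GenContFract.of v).partDens.get? 0 = some (b : K) ↔
      Int.fract v ≠ 0 ∧ ⌊(Int.fract v)⁻¹⌋ = b := by
    rcases eq_or_ne (Int.fract v) 0 with hv | hv
    · simp [partDens_of_get?_of_fract_eq_zero hv, hv]
    · rw [partDens_of_get?_zero hv, Option.some_inj, and_iff_right hv]
      norm_cast
  rw [← and_assoc, ← head]
  refine Fin.forall_fin_succ.trans (and_congr_right fun _ => forall_congr' fun i => ?_)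
  rw [Fin.val_succ, partDens_of_get?_succ]
  rfl

end PartDens

section CfEval

variable {K : Type*} [Field K]

/-- The finite continued fraction `1/(b₁ + 1/(b₂ + ⋯ + 1/(bₘ + t)))` with tail `t`, where
`l = (b₁, …, bₘ)`; it equals `t` for the empty word. -/
def cfEval (l : List ℕ) (t : K) : K :=
  l.foldr (fun (b : ℕ) y => ((b : K) + y)⁻¹) t

@[simp]
theorem cfEval_nil (t : K) : cfEval [] t = t := rfl

@[simp]
theorem cfEval_cons (b : ℕ) (l : List ℕ) (t : K) : cfEval (b :: l) t = (b + cfEval l t)⁻¹ := rfl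

theorem cfEval_append (l m : List ℕ) (t : K) : cfEval (l ++ m) t = cfEval l (cfEval m t) :=
  List.foldr_append

variable [LinearOrder K] [IsStrictOrderedRing K] {l : List ℕ} {t : K}

theorem cfEval_nonneg (l : List ℕ) (ht : 0 ≤ t) : 0 ≤ cfEval l t := by
  induction l with
  | nil => exact ht
  | cons b l ih => rw [cfEval_cons]; positivity

theorem cfEval_mem_Ioo (hl : ∀ b ∈ l, 0 < b) (ht : t ∈ Ioo 0 1) : cfEval l t ∈ Ioo 0 1 := by
  induction l with
  | nil => exact ht
  | cons b l ih =>
    obtain ⟨hb, hl⟩ := List.forall_mem_cons.1 hl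
    have hb : (1 : K) ≤ b := Nat.one_le_cast.2 hb
    have hpos : 0 < cfEval l t := (ih hl).1
    rw [cfEval_cons]
    exact ⟨by positivity, inv_lt_one_of_one_lt₀ (by linarith)⟩

theorem cfEval_monotoneOn_or_antitoneOn (hl : ∀ b ∈ l, 0 < b) :
    MonotoneOn (cfEval (K := K) l) (Ici 0) ∨ AntitoneOn (cfEval (K := K) l) (Ici 0) := by
  induction l with
  | nil => exact .inl monotoneOn_id
  | cons b l ih =>
    obtain ⟨hb, hl⟩ := List.forall_mem_cons.1 hl
    have hpos (t : K) (ht : t ∈ Ici 0) : 0 < b + cfEval l t :=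
      add_pos_of_pos_of_nonneg (Nat.cast_pos.2 hb) (cfEval_nonneg l ht)
    refine (ih hl).symm.imp (fun h s hs t ht hst => ?_) (fun h s hs t ht hst => ?_)
    · exact inv_anti₀ (hpos t ht) (by gcongr; exact h hs ht hst)
    · exact inv_anti₀ (hpos s hs) (by gcongr; exact h hs ht hst)

theorem continuousOn_cfEval [TopologicalSpace K] [OrderTopology K] (hl : ∀ b ∈ l, 0 < b) :
    ContinuousOn (cfEval (K := K) l) (Ici 0) := by
  induction l with
  | nil => exact continuousOn_id
  | cons b l ih =>
    obtain ⟨hb, hl⟩ := List.forall_mem_cons.1 hl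
    refine (continuousOn_const.add (ih hl)).inv₀ fun t ht => ?_
    exact (add_pos_of_pos_of_nonneg (Nat.cast_pos.2 hb) (cfEval_nonneg l ht)).ne'

variable [FloorRing K] {v : K}

theorem HasPartDens.fract_mem_image (h : HasPartDens v l) :
    Int.fract v ∈ cfEval l '' Ico 0 1 := by
  induction l generalizing v with
  | nil => exact ⟨Int.fract v, ⟨Int.fract_nonneg v, Int.fract_lt_one v⟩, rfl⟩
  | cons b l ih =>
    obtain ⟨-, hfloor, htail⟩ := hasPartDens_cons.1 h
    obtain ⟨t, ht, hfract⟩ := ih htail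
    refine ⟨t, ht, ?_⟩
    rw [cfEval_cons, hfract, ← Int.cast_natCast, ← hfloor, Int.floor_add_fract, inv_inv]

theorem hasPartDens_of_fract_eq (hl : ∀ b ∈ l, 0 < b) (ht : t ∈ Ioo 0 1)
    (h : Int.fract v = cfEval l t) : HasPartDens v l := by
  induction l generalizing v with
  | nil => exact hasPartDens_nil v
  | cons b l ih =>
    have hv : Int.fract v ≠ 0 := by rw [h]; exact (cfEval_mem_Ioo hl ht).1.ne'
    obtain ⟨-, hl⟩ := List.forall_mem_cons.1 hl
    have hinv : (Int.fract v)⁻¹ = b + cfEval l t := by rw [h, cfEval_cons, inv_inv]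
    have htail : cfEval l t ∈ Ico 0 1 := Ioo_subset_Ico_self (cfEval_mem_Ioo hl ht)
    refine hasPartDens_cons.2 ⟨hv, ?_, ih hl ?_⟩
    · rw [hinv, Int.floor_natCast_add, Int.floor_eq_zero_iff.2 htail, add_zero]
    · rw [hinv, Int.fract_natCast_add, Int.fract_eq_self.2 htail]

end CfEval

section Continuants

/-- The last two terms `(uₘ₋₁, uₘ)` of the sequence with `(u₋₁, u₀) = s` and
`uₖ₊₁ = bₖ₊₁ uₖ + uₖ₋₁`, where `l = (b₁, …, bₘ)`. The start `s = (0, 1)` gives the continuants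
`(qₘ₋₁, qₘ)`, and `s = (1, 0)` the numerators `(pₘ₋₁, pₘ)` of the convergents. -/
def continuantPair (s : ℕ × ℕ) (l : List ℕ) : ℕ × ℕ :=
  l.foldl (fun u b => (u.2, b * u.2 + u.1)) s

variable (s s' : ℕ × ℕ) (l : List ℕ)

@[simp]
theorem continuantPair_nil : continuantPair s [] = s := rfl

@[simp]
theorem continuantPair_cons (b : ℕ) :
    continuantPair s (b :: l) = continuantPair (s.2, b * s.2 + s.1) l := rfl

theorem continuantPair_append (m : List ℕ) :
    continuantPair s (l ++ m) = continuantPair (continuantPair s l) m :=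
  List.foldl_append

theorem continuantPair_det :
    ((continuantPair s l).1 * (continuantPair s' l).2 -
      (continuantPair s l).2 * (continuantPair s' l).1 : ℤ) =
      (-1) ^ l.length * (s.1 * s'.2 - s.2 * s'.1) := by
  induction l generalizing s s' with
  | nil => simp
  | cons b l ih =>
    rw [continuantPair_cons, continuantPair_cons, ih, List.length_cons]
    push_cast
    ring

theorem continuantPair_le_split {c : ℕ} (hc : 2 ≤ c) (b : ℕ) :
    continuantPair s [c, b] ≤ continuantPair s [c - 1, 1, b] := by
  have hfst : 1 * ((c - 1) * s.2 + s.1) + s.2 = c * s.2 + s.1 := by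
    rw [one_mul, add_right_comm, ← Nat.succ_mul, Nat.succ_eq_add_one,
      Nat.sub_add_cancel (one_le_two.trans hc)]
  have hsnd : s.2 ≤ (c - 1) * s.2 + s.1 :=
    le_add_right (Nat.le_mul_of_pos_left _ (Nat.sub_pos_of_lt hc))
  simp only [continuantPair_cons, continuantPair_nil, hfst]
  exact ⟨le_rfl, Nat.add_le_add_left hsnd _⟩

variable {s l}

theorem continuantPair_snd_pos (hs : 0 < s.2) (hl : ∀ b ∈ l, 0 < b) :
    0 < (continuantPair s l).2 := by
  induction l generalizing s with
  | nil => exact hs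
  | cons b l ih =>
    obtain ⟨hb, hl⟩ := List.forall_mem_cons.1 hl
    exact ih (by positivity) hl

variable {K : Type*} [Field K] [LinearOrder K] [IsStrictOrderedRing K] {t : K}

theorem cfEval_eq_div (hl : ∀ b ∈ l, 0 < b) (ht : 0 ≤ t) :
    cfEval l t = ((continuantPair (1, 0) l).2 + (continuantPair (1, 0) l).1 * t) /
      ((continuantPair (0, 1) l).2 + (continuantPair (0, 1) l).1 * t) := by
  induction l using List.reverseRecOn generalizing t with
  | nil => simp
  | append_singleton l b ih =>
    rw [List.forall_mem_append, List.forall_mem_singleton] at hl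
    obtain ⟨hl, hb⟩ := hl
    have hbt : 0 < b + t := add_pos_of_pos_of_nonneg (Nat.cast_pos.2 hb) ht
    have hq : (0 : K) < (continuantPair (0, 1) l).2 :=
      Nat.cast_pos.2 (continuantPair_snd_pos one_pos hl)
    simp only [cfEval_append, cfEval_cons, cfEval_nil, continuantPair_append, continuantPair_cons,
      continuantPair_nil]
    rw [ih hl (inv_nonneg.2 hbt.le)]
    push_cast
    field_simp
    ring

theorem abs_cfEval_sub (hl : ∀ b ∈ l, 0 < b) {t' : K} (ht : 0 ≤ t) (ht' : 0 ≤ t') :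
    |cfEval l t - cfEval l t'| = |t - t'| /
      (((continuantPair (0, 1) l).2 + (continuantPair (0, 1) l).1 * t) *
        ((continuantPair (0, 1) l).2 + (continuantPair (0, 1) l).1 * t')) := by
  have hdet : |((continuantPair (1, 0) l).1 * (continuantPair (0, 1) l).2 -
      (continuantPair (1, 0) l).2 * (continuantPair (0, 1) l).1 : K)| = 1 := by
    simpa using congrArg (fun z : ℤ => |(z : K)|) (continuantPair_det (1, 0) (0, 1) l)
  have hq : (0 : K) < (continuantPair (0, 1) l).2 :=
    Nat.cast_pos.2 (continuantPair_snd_pos one_pos hl)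
  have hqt : (0 : K) < (continuantPair (0, 1) l).2 + (continuantPair (0, 1) l).1 * t := by
    positivity
  have hqt' : (0 : K) < (continuantPair (0, 1) l).2 + (continuantPair (0, 1) l).1 * t' := by
    positivity
  rw [cfEval_eq_div hl ht, cfEval_eq_div hl ht', div_sub_div _ _ hqt.ne' hqt'.ne', abs_div,
    abs_of_pos (mul_pos hqt hqt'), ← one_mul |t - t'|, ← hdet, ← abs_mul]
  congr 2
  ring

end Continuants

section Volume

variable {l : List ℕ}

theorem mem_fundInterval {x : ℝ} :
    x ∈ fundInterval l ↔ x ∈ Ioo 0 1 ∧ HasPartDens x l :=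
  Iff.rfl

theorem fundInterval_subset_image (l : List ℕ) : fundInterval l ⊆ cfEval l '' Ico 0 1 := by
  intro x hx
  obtain ⟨⟨hx₀, hx₁⟩, hx⟩ := mem_fundInterval.1 hx
  simpa only [Int.fract_eq_self.2 ⟨hx₀.le, hx₁⟩] using hx.fract_mem_image

theorem image_Ioo_subset_fundInterval (hl : ∀ b ∈ l, 0 < b) :
    cfEval l '' Ioo 0 1 ⊆ fundInterval l := by
  rintro _ ⟨t, ht, rfl⟩
  have hx : cfEval l t ∈ Ioo 0 1 := cfEval_mem_Ioo hl ht
  exact mem_fundInterval.2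
    ⟨hx, hasPartDens_of_fract_eq hl ht (Int.fract_eq_self.2 (Ioo_subset_Ico_self hx))⟩

theorem image_cfEval_uIcc (hl : ∀ b ∈ l, 0 < b) {s t : ℝ} (hs : 0 ≤ s) (ht : 0 ≤ t) :
    cfEval l '' uIcc s t = uIcc (cfEval l s) (cfEval l t) := by
  have hsub : uIcc s t ⊆ Ici 0 := fun _ hx => (le_min hs ht).trans hx.1
  have hcont : ContinuousOn (cfEval l) (uIcc s t) := (continuousOn_cfEval hl).mono hsub
  rcases cfEval_monotoneOn_or_antitoneOn (K := ℝ) hl with h | h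
  · exact hcont.image_uIcc_of_monotoneOn (h.mono hsub)
  · exact hcont.image_uIcc_of_antitoneOn (h.mono hsub)

theorem fundInterval_ae_eq_uIcc (hl : ∀ b ∈ l, 0 < b) :
    fundInterval l =ᵐ[volume] uIcc (cfEval l 0) (cfEval l 1) := by
  rw [← image_cfEval_uIcc hl le_rfl zero_le_one, uIcc_of_le zero_le_one]
  have hsub : fundInterval l ⊆ cfEval l '' Icc 0 1 :=
    (fundInterval_subset_image l).trans (image_mono Ico_subset_Icc_self)
  have hsup : cfEval l '' Icc 0 1 ⊆ fundInterval l ∪ {cfEval l 0, cfEval l 1} := by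
    rw [← Ioo_union_both zero_le_one, image_union, image_pair]
    exact union_subset_union_left _ (image_Ioo_subset_fundInterval hl)
  have hnull : volume (cfEval l '' Icc 0 1 \ fundInterval l) = 0 :=
    measure_mono_null (sdiff_subset_iff.2 hsup) ((toFinite _).measure_zero volume)
  exact hsub.eventuallyLE.antisymm (ae_le_set.2 hnull)

theorem volume_fundInterval (hl : ∀ b ∈ l, 0 < b) :
    volume (fundInterval l) =
      (((continuantPair (0, 1) l).2 *
        ((continuantPair (0, 1) l).2 + (continuantPair (0, 1) l).1) : ℕ) : ℝ≥0∞)⁻¹ := by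
  have hq : 0 < (continuantPair (0, 1) l).2 := continuantPair_snd_pos one_pos hl
  have hlength : |(cfEval l 1 - cfEval l 0 : ℝ)| =
      (((continuantPair (0, 1) l).2 *
        ((continuantPair (0, 1) l).2 + (continuantPair (0, 1) l).1) : ℕ) : ℝ)⁻¹ := by
    rw [abs_cfEval_sub hl zero_le_one le_rfl]
    simp [mul_comm]
  rw [measure_congr (fundInterval_ae_eq_uIcc hl), Real.volume_interval, hlength,
    ENNReal.ofReal_inv_of_pos (Nat.cast_pos.2 (by positivity)), ENNReal.ofReal_natCast]

end Volume

/-- **Lemma.** For a finite word `(a₁, …, aₙ)` of positive integers, an integer `c ≥ 2` and a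
positive integer `b`, the Lebesgue measure of `I(0; a₁, …, aₙ, c, b)` is at least the
Lebesgue measure of `I(0; a₁, …, aₙ, c − 1, 1, b)`. -/
theorem volume_fundInterval_ge (a : List ℕ) (ha : ∀ x ∈ a, 0 < x)
    (c : ℕ) (hc : 2 ≤ c) (b : ℕ) (hb : 0 < b) :
    MeasureTheory.volume (fundInterval (a ++ [c - 1, 1, b])) ≤
      MeasureTheory.volume (fundInterval (a ++ [c, b])) := by
  have hcb : ∀ k ∈ a ++ [c, b], 0 < k := by grind
  have hc1b : ∀ k ∈ a ++ [c - 1, 1, b], 0 < k := by grind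
  obtain ⟨hfst, hsnd⟩ := continuantPair_le_split (continuantPair (0, 1) a) hc b
  rw [volume_fundInterval hc1b, volume_fundInterval hcb, continuantPair_append,
    continuantPair_append]
  gcongr
end
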